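/- Let 1 < p ≤ q < p*. For every open bounded convex set Ω ⊂ ℝ^N one has the strict inequality μ_{p,q}(Ω) < λ_{p,q}(Ω). -/

import Mathlib

open MeasureTheory Metric Set Real

noncomputable section

/-- The Rayleigh quotient `(∫_Ω |∇v|^p) / (∫_Ω |v|^q)^(p/q)`, where the gradient is
understood as the (a.e. defined) Fréchet derivative. -/
def rayleighQuot {N : ℕ} (p q : ℝ) (Ω : Set (EuclideanSpace ℝ (Fin N)))
    (v : EuclideanSpace ℝ (Fin N) → ℝ) : ℝ :=
  (∫ x in Ω, ‖fderiv ℝ v x‖ ^ p) / (∫ x in Ω, |v x| ^ q) ^ (p / q)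

/-- The first (generalized) Dirichlet eigenvalue `λ_{p,q}(Ω)`: infimum of the Rayleigh
quotient over nontrivial smooth functions compactly supported in `Ω`. -/
def lambdaPQ {N : ℕ} (p q : ℝ) (Ω : Set (EuclideanSpace ℝ (Fin N))) : ℝ :=
  sInf { R : ℝ | ∃ v : EuclideanSpace ℝ (Fin N) → ℝ,
    ContDiff ℝ (⊤ : ℕ∞) v ∧ HasCompactSupport v ∧ tsupport v ⊆ Ω ∧
    (∃ x ∈ Ω, v x ≠ 0) ∧ R = rayleighQuot p q Ω v }

/-- The first nontrivial (generalized) Neumann eigenvalue `μ_{p,q}(Ω)`: infimum of the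
Rayleigh quotient over nontrivial Lipschitz functions on the closure of `Ω` satisfying
the constraint `∫_Ω |v|^(q-2) v = 0`. -/
def muPQ {N : ℕ} (p q : ℝ) (Ω : Set (EuclideanSpace ℝ (Fin N))) : ℝ :=
  sInf { R : ℝ | ∃ v : EuclideanSpace ℝ (Fin N) → ℝ, ∃ K : NNReal,
    LipschitzOnWith K v (closure Ω) ∧ (∃ x ∈ Ω, v x ≠ 0) ∧
    (∫ x in Ω, |v x| ^ (q - 2) * v x) = 0 ∧ R = rayleighQuot p q Ω v }

/-- `q` is below the critical Sobolev exponent `p* = Np/(N-p)` (with `p* = ∞` if `p ≥ N`). -/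
def ltCritical (N : ℕ) (p q : ℝ) : Prop := p < N → q < N * p / (N - p)

end

open MeasureTheory Metric Set Real
open scoped ENNReal Pointwise

lemma xbm_compact (A B : Set ℝ) (hA : IsCompact A) (hB : IsCompact B) (hAn : A.Nonempty)
    (hBn : B.Nonempty) : volume A + volume B ≤ volume (A + B) := by
  obtain ⟨a, ha, hamax⟩ := hA.exists_isMaxOn hAn continuousOn_id
  obtain ⟨b, hb, hbmin⟩ := hB.exists_isMinOn hBn continuousOn_id
  have h1 : ((fun x => x + b) '' A) ∪ ((fun x => a + x) '' B) ⊆ A + B := by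
    rintro x (⟨y, hy, rfl⟩ | ⟨y, hy, rfl⟩)
    · exact add_mem_add hy hb
    · exact add_mem_add ha hy
  have h2 : volume ((fun x => x + b) '' A) = volume A := by simp
  have h3 : volume ((fun x => a + x) '' B) = volume B := by simp
  rw [← h2, ← h3]
  refine le_trans ?_ (measure_mono h1)
  rw [measure_union₀]
  · exact (hB.image (by fun_prop)).measurableSet.nullMeasurableSet
  · have : ((fun x => x + b) '' A) ∩ ((fun x => a + x) '' B) ⊆ {a + b} := by
      rintro x ⟨⟨y, hy, rfl⟩, ⟨z, hz, hzy⟩⟩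
      have e1 : y ≤ a := hamax hy
      have e2 : b ≤ z := hbmin hz
      simp only at hzy
      simp only [mem_singleton_iff]
      linarith
    exact measure_mono_null this (by simp)

lemma xbm_one (A B : Set ℝ) (hA : MeasurableSet A) (hB : MeasurableSet B) (hAn : A.Nonempty)
    (hBn : B.Nonempty) : volume A + volume B ≤ volume (A + B) := by
  obtain ⟨a, ha⟩ := hAn
  obtain ⟨b, hb⟩ := hBn
  rw [hA.measure_eq_iSup_isCompact, hB.measure_eq_iSup_isCompact]
  have key : ∀ (K L : Set ℝ), K ⊆ A → IsCompact K → L ⊆ B → IsCompact L →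
      volume K + volume L ≤ volume (A + B) := by
    intro K L hK hKc hL hLc
    have := xbm_compact (insert a K) (insert b L) (hKc.insert a) (hLc.insert b) (by simp) (by simp)
    refine le_trans (add_le_add (measure_mono (subset_insert _ _)) (measure_mono (subset_insert _ _))) (this.trans (measure_mono ?_))
    exact add_subset_add (insert_subset ha hK) (insert_subset hb hL)
  simp only [iSup_and']
  refine ENNReal.biSup_add_biSup_le' (p := fun K => K ⊆ A ∧ IsCompact K)
    (q := fun K => K ⊆ B ∧ IsCompact K) ⟨∅, by simp⟩ ⟨∅, by simp⟩ ?_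
  intro K hK L hL
  exact key K L hK.1 hK.2 hL.1 hL.2

lemma xlayer {α : Type*} [MeasurableSpace α] (μ : Measure α) [SFinite μ] (f : α → ℝ≥0∞) (hf : Measurable f) :
    ∫⁻ x, f x ∂μ = ∫⁻ s in Ioi (0:ℝ), μ {x | ENNReal.ofReal s < f x} := by
  have h1 : ∀ x, f x = ∫⁻ s in Ioi (0:ℝ), ({p : α × ℝ | ENNReal.ofReal p.2 < f p.1}.indicator 1 (x, s)) := by
    intro x
    have : ∀ s : ℝ, ({p : α × ℝ | ENNReal.ofReal p.2 < f p.1}.indicator (1 : α × ℝ → ℝ≥0∞) (x, s)) = {s : ℝ | ENNReal.ofReal s < f x}.indicator 1 s := by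
      intro s; simp [indicator]
    simp_rw [this]
    rw [lintegral_indicator_one (measurableSet_lt (by fun_prop) (by fun_prop)), Measure.restrict_apply (measurableSet_lt (by fun_prop) (by fun_prop))]
    by_cases hx : f x = ⊤
    · simp [hx]
    · have : {s : ℝ | ENNReal.ofReal s < f x} ∩ Ioi 0 = Ioo 0 (f x).toReal := by
        ext s
        simp only [mem_inter_iff, mem_ofPred_eq, mem_Ioi, mem_Ioo]
        constructor
        · rintro ⟨h, h0⟩; exact ⟨h0, (ENNReal.ofReal_lt_iff_lt_toReal h0.le hx).1 h⟩
        · rintro ⟨h0, h⟩; exact ⟨(ENNReal.ofReal_lt_iff_lt_toReal h0.le hx).2 h, h0⟩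
      rw [this]; simp [hx]
  have hm : MeasurableSet {p : α × ℝ | ENNReal.ofReal p.2 < f p.1} :=
    measurableSet_lt (by fun_prop) (by fun_prop)
  calc ∫⁻ x, f x ∂μ = ∫⁻ x, (∫⁻ s in Ioi (0:ℝ), ({p : α × ℝ | ENNReal.ofReal p.2 < f p.1}.indicator 1 (x, s))) ∂μ :=
        lintegral_congr h1
    _ = ∫⁻ s in Ioi (0:ℝ), ∫⁻ x, ({p : α × ℝ | ENNReal.ofReal p.2 < f p.1}.indicator 1 (x, s)) ∂μ := by
        rw [lintegral_lintegral_swap]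
        exact (measurable_one.indicator hm).aemeasurable
    _ = _ := by
        refine lintegral_congr fun s => ?_
        have : ∀ x : α, ({p : α × ℝ | ENNReal.ofReal p.2 < f p.1}.indicator (1 : α × ℝ → ℝ≥0∞) (x, s)) = {x | ENNReal.ofReal s < f x}.indicator 1 x := by
          intro s; simp [indicator]
        simp_rw [this]
        rw [lintegral_indicator_one (measurableSet_lt (by fun_prop) hf)]

lemma xamgm (t : ℝ) (h0 : 0 < t) (h1 : t < 1) (x y : ℝ≥0∞) :
    x ^ (1 - t) * y ^ t ≤ ENNReal.ofReal (1 - t) * x + ENNReal.ofReal t * y := by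
  have e1 : ENNReal.ofReal t ≠ 0 := by simpa using h0
  have e2 : ENNReal.ofReal (1 - t) ≠ 0 := by simpa using h1
  by_cases hx : x = ⊤
  · simp [hx, ENNReal.mul_top e2]
  by_cases hy : y = ⊤
  · simp [hy, ENNReal.mul_top e1]
  lift x to NNReal using hx
  lift y to NNReal using hy
  rw [← ENNReal.coe_rpow_of_nonneg _ (by linarith), ← ENNReal.coe_rpow_of_nonneg _ h0.le]
  have := NNReal.geom_mean_le_arith_mean2_weighted (1 - t).toNNReal t.toNNReal x y
    (by rw [← Real.toNNReal_add (by linarith) h0.le]; simp)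
  rw [Real.coe_toNNReal _ (by linarith), Real.coe_toNNReal _ h0.le] at this
  rw [ENNReal.ofReal, ENNReal.ofReal]
  exact_mod_cast this

/-- one-dimensional, sup normalized -/
lemma xpl_one_aux (t : ℝ) (h0 : 0 < t) (h1 : t < 1) (f g h : ℝ → ℝ≥0∞) (hf : Measurable f)
    (hg : Measurable g) (hh : Measurable h)
    (H : ∀ x y, f x ^ (1 - t) * g y ^ t ≤ h ((1 - t) * x + t * y)) (sf : ⨆ x, f x = 1) (sg : ⨆ x, g x = 1) :
    (∫⁻ x, f x) ^ (1 - t) * (∫⁻ x, g x) ^ t ≤ ∫⁻ x, h x := by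
  refine (xamgm t h0 h1 _ _).trans ?_
  rw [xlayer _ f hf, xlayer _ g hg, xlayer _ h hh]
  rw [← lintegral_const_mul' _ _ (by simp), ← lintegral_const_mul' _ _ (by simp)]
  rw [← lintegral_add_left' (by
    refine AEMeasurable.const_mul ?_ _
    refine Measurable.aemeasurable ?_
    refine Antitone.measurable ?_
    intro a b hab
    refine measure_mono ?_
    intro x hx
    exact lt_of_le_of_lt (ENNReal.ofReal_le_ofReal hab) hx)]
  refine setLIntegral_mono' measurableSet_Ioi ?_
  intro s hs
  by_cases hs1 : 1 ≤ s
  · have e1 : {x | ENNReal.ofReal s < f x} = ∅ := by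
      ext x; simp only [mem_ofPred_eq, mem_empty_iff_false, iff_false, not_lt]
      refine (le_iSup f x).trans ?_
      rw [sf]; simpa using hs1
    have e2 : {x | ENNReal.ofReal s < g x} = ∅ := by
      ext x; simp only [mem_ofPred_eq, mem_empty_iff_false, iff_false, not_lt]
      refine (le_iSup g x).trans ?_
      rw [sg]; simpa using hs1
    simp [e1, e2]
  · push Not at hs1
    have hs1' : ENNReal.ofReal s < 1 := by simpa using hs1
    have n1 : {x | ENNReal.ofReal s < f x}.Nonempty := by
      rw [← sf] at hs1'; exact lt_iSup_iff.1 hs1'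
    have n2 : {x | ENNReal.ofReal s < g x}.Nonempty := by
      rw [← sg] at hs1'; exact lt_iSup_iff.1 hs1'
    have m1 : MeasurableSet {x | ENNReal.ofReal s < f x} := measurableSet_lt measurable_const hf
    have m2 : MeasurableSet {x | ENNReal.ofReal s < g x} := measurableSet_lt measurable_const hg
    have t1 : volume ((1 - t) • {x | ENNReal.ofReal s < f x}) = ENNReal.ofReal (1 - t) * volume {x | ENNReal.ofReal s < f x} := by
      rw [Measure.addHaar_smul]; simp [abs_of_pos (sub_pos.2 h1)]
    have t2 : volume (t • {x | ENNReal.ofReal s < g x}) = ENNReal.ofReal t * volume {x | ENNReal.ofReal s < g x} := by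
      rw [Measure.addHaar_smul]; simp [abs_of_pos h0]
    rw [← t1, ← t2]
    refine (xbm_one _ _ (m1.const_smul₀ _) (m2.const_smul₀ _) n1.smul_set n2.smul_set).trans ?_
    refine measure_mono ?_
    rintro z ⟨_, ⟨x, hx, rfl⟩, _, ⟨y, hy, rfl⟩, rfl⟩
    simp only [mem_ofPred_eq, smul_eq_mul] at hx hy ⊢
    refine lt_of_lt_of_le ?_ (H x y)
    have hs0 : ENNReal.ofReal s ≠ 0 := by simpa using hs
    calc ENNReal.ofReal s = ENNReal.ofReal s ^ (1 - t) * ENNReal.ofReal s ^ t := by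
          rw [← ENNReal.rpow_add _ _ hs0 (by simp)]; simp
      _ < _ := ENNReal.mul_lt_mul (ENNReal.rpow_lt_rpow hx (by linarith)) (ENNReal.rpow_lt_rpow hy h0)

lemma xpl_one_bdd (t : ℝ) (h0 : 0 < t) (h1 : t < 1) (f g h : ℝ → ℝ≥0∞) (hf : Measurable f)
    (hg : Measurable g) (hh : Measurable h)
    (H : ∀ x y, f x ^ (1 - t) * g y ^ t ≤ h ((1 - t) * x + t * y)) (sf : ⨆ x, f x ≠ ⊤) (sg : ⨆ x, g x ≠ ⊤) :
    (∫⁻ x, f x) ^ (1 - t) * (∫⁻ x, g x) ^ t ≤ ∫⁻ x, h x := by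
  set a := ⨆ x, f x with ha
  set b := ⨆ x, g x with hb
  have t1 : 0 < 1 - t := by linarith
  by_cases ha0 : a = 0
  · have : ∀ x, f x = 0 := fun x => le_antisymm ((le_iSup f x).trans ha0.le) bot_le
    simp [this, h1]
  by_cases hb0 : b = 0
  · have : ∀ x, g x = 0 := fun x => le_antisymm ((le_iSup g x).trans hb0.le) bot_le
    simp [this, h0]
  set c := a ^ (1 - t) * b ^ t with hc
  have hc0 : c ≠ 0 := mul_ne_zero (by simp [ENNReal.rpow_eq_zero_iff, ha0, sf]) (by simp [ENNReal.rpow_eq_zero_iff, hb0, sg])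
  have hct : c ≠ ⊤ := ENNReal.mul_ne_top (ENNReal.rpow_ne_top_of_nonneg t1.le sf) (ENNReal.rpow_ne_top_of_nonneg h0.le sg)
  have hcinv : c⁻¹ = (a⁻¹) ^ (1 - t) * (b⁻¹) ^ t := by
    rw [hc, ENNReal.mul_inv, ENNReal.inv_rpow, ENNReal.inv_rpow]
    · right; exact ENNReal.rpow_ne_top_of_nonneg h0.le sg
    · right; simp [ENNReal.rpow_eq_zero_iff, hb0, sg]
  have K := xpl_one_aux t h0 h1 (fun x => a⁻¹ * f x) (fun x => b⁻¹ * g x) (fun x => c⁻¹ * h x)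
    (hf.const_mul _) (hg.const_mul _) (hh.const_mul _) (by
      intro x y
      rw [ENNReal.mul_rpow_of_nonneg _ _ t1.le, ENNReal.mul_rpow_of_nonneg _ _ h0.le, mul_mul_mul_comm, ← hcinv]
      gcongr
      exact H x y) (by rw [← ENNReal.mul_iSup, ← ha, ENNReal.inv_mul_cancel ha0 sf])
      (by rw [← ENNReal.mul_iSup, ← hb, ENNReal.inv_mul_cancel hb0 sg])
  rw [lintegral_const_mul _ hf, lintegral_const_mul _ hg, lintegral_const_mul _ hh,
    ENNReal.mul_rpow_of_nonneg _ _ t1.le, ENNReal.mul_rpow_of_nonneg _ _ h0.le, mul_mul_mul_comm, ← hcinv] at K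
  exact (ENNReal.mul_le_mul_iff_right (by simpa using hct) (by simpa using hc0)).1 K

lemma xpl_one (t : ℝ) (h0 : 0 < t) (h1 : t < 1) (f g h : ℝ → ℝ≥0∞) (hf : Measurable f)
    (hg : Measurable g) (hh : Measurable h)
    (H : ∀ x y, f x ^ (1 - t) * g y ^ t ≤ h ((1 - t) * x + t * y)) :
    (∫⁻ x, f x) ^ (1 - t) * (∫⁻ x, g x) ^ t ≤ ∫⁻ x, h x := by
  have t1 : 0 < 1 - t := by linarith
  have tr : ∀ f : ℝ → ℝ≥0∞, Measurable f → ∫⁻ x, f x = ⨆ n : ℕ, ∫⁻ x, min (f x) n := by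
    intro f hf
    rw [← lintegral_iSup]
    · refine lintegral_congr fun x => ?_
      rw [← inf_iSup_eq, ENNReal.iSup_natCast]; simp
    · intro n; exact hf.min measurable_const
    · intro n m hnm x; dsimp only; gcongr
  rw [tr f hf, tr g hg]
  have e1 := (ENNReal.orderIsoRpow (1 - t) t1).map_iSup (fun n : ℕ => ∫⁻ x, min (f x) n)
  have e2 := (ENNReal.orderIsoRpow t h0).map_iSup (fun n : ℕ => ∫⁻ x, min (g x) n)
  simp only [ENNReal.orderIsoRpow_apply] at e1 e2
  rw [e1, e2, ENNReal.iSup_mul]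
  refine iSup_le fun n => ?_
  rw [ENNReal.mul_iSup]
  refine iSup_le fun m => ?_
  refine xpl_one_bdd t h0 h1 _ _ h (hf.min measurable_const) (hg.min measurable_const) hh ?_ ?_ ?_
  · intro x y
    refine le_trans ?_ (H x y)
    gcongr
    · exact min_le_left _ _
    · exact min_le_left _ _
  · exact ne_top_of_le_ne_top (ENNReal.natCast_ne_top n) (iSup_le fun x => min_le_right _ _)
  · exact ne_top_of_le_ne_top (ENNReal.natCast_ne_top m) (iSup_le fun x => min_le_right _ _)

lemma xpl (n : ℕ) (t : ℝ) (h0 : 0 < t) (h1 : t < 1) (f g h : (Fin n → ℝ) → ℝ≥0∞) (hf : Measurable f)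
    (hg : Measurable g) (hh : Measurable h)
    (H : ∀ x y, f x ^ (1 - t) * g y ^ t ≤ h ((1 - t) • x + t • y)) :
    (∫⁻ x, f x) ^ (1 - t) * (∫⁻ x, g x) ^ t ≤ ∫⁻ x, h x := by
  induction n with
  | zero =>
    simp only [lintegral_unique]
    have : (volume : Measure (Fin 0 → ℝ)) univ = 1 := by rw [volume_pi]; exact Measure.pi_empty_univ _
    rw [this, mul_one, mul_one, mul_one]
    convert H default default
  | succ n ih =>
    have fub : ∀ f : (Fin (n + 1) → ℝ) → ℝ≥0∞, Measurable f →
        ∫⁻ x, f x = ∫⁻ a : ℝ, ∫⁻ z : Fin n → ℝ, f (Fin.cons a z) := by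
      intro f hf
      have mp := volume_preserving_piFinSuccAbove (fun _ : Fin (n + 1) => ℝ) 0
      have := (mp.symm _).lintegral_comp hf
      rw [← this, Measure.volume_eq_prod, lintegral_prod]
      · simp [MeasurableEquiv.piFinSuccAbove, Fin.consEquiv]
      · exact (hf.comp (MeasurableEquiv.measurable _)).aemeasurable
    have mc : Measurable (fun p : ℝ × (Fin n → ℝ) => (Fin.cons p.1 p.2 : Fin (n + 1) → ℝ)) := by
      have := (MeasurableEquiv.piFinSuccAbove (fun _ : Fin (n + 1) => ℝ) 0).symm.measurable
      simpa [MeasurableEquiv.piFinSuccAbove, Fin.insertNthEquiv, Fin.insertNth_zero] using this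
    have mi : ∀ f : (Fin (n + 1) → ℝ) → ℝ≥0∞, Measurable f →
        Measurable (fun a : ℝ => ∫⁻ z : Fin n → ℝ, f (Fin.cons a z)) := by
      intro f hf
      exact (hf.comp mc).lintegral_prod_right'
    rw [fub f hf, fub g hg, fub h hh]
    refine xpl_one t h0 h1 _ _ _ (mi f hf) (mi g hg) (mi h hh) ?_
    intro a b
    refine ih _ _ _ (hf.comp (mc.comp measurable_prodMk_left)) (hg.comp (mc.comp measurable_prodMk_left))
      (hh.comp (mc.comp measurable_prodMk_left)) ?_
    intro x y
    refine (H (Fin.cons a x) (Fin.cons b y)).trans (le_of_eq ?_)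
    refine congrArg h ?_
    ext i
    refine Fin.cases ?_ (fun j => ?_) i <;> simp

lemma xbm_pi {N : ℕ} (A B : Set (Fin N → ℝ)) (mA : MeasurableSet A)
    (mB : MeasurableSet B) (mAB : MeasurableSet (A + B)) (a b : ℝ) (ha : 0 < a) (hb : 0 < b)
    (hA : ENNReal.ofReal (a ^ N) ≤ volume A) (hB : ENNReal.ofReal (b ^ N) ≤ volume B) :
    ENNReal.ofReal ((a + b) ^ N) ≤ volume (A + B) := by
  set t := b / (a + b) with ht
  have hab : 0 < a + b := by positivity
  have h0 : 0 < t := by positivity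
  have h1t : 1 - t = a / (a + b) := by rw [ht]; field_simp; ring
  have h1 : 0 < 1 - t := by rw [h1t]; positivity
  have key : ∀ (s c : ℝ) (A : Set (Fin N → ℝ)), 0 < c → s = c / (a + b) → ENNReal.ofReal (c ^ N) ≤ volume A →
      ENNReal.ofReal ((a + b) ^ N) ≤ volume (s⁻¹ • A) := by
    intro s c A hc hs hA
    rw [Measure.addHaar_smul]
    calc ENNReal.ofReal ((a + b) ^ N) = ENNReal.ofReal |s⁻¹ ^ Module.finrank ℝ (Fin N → ℝ)| * ENNReal.ofReal (c ^ N) := by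
          rw [← ENNReal.ofReal_mul (abs_nonneg _)]
          congr 1
          rw [hs, abs_of_pos (by positivity), Module.finrank_fin_fun, ← mul_pow]
          congr 1
          field_simp
      _ ≤ _ := by gcongr
  have kA := key (1 - t) a A ha h1t hA
  have kB := key t b B hb ht hB
  have mA' : MeasurableSet ((1 - t)⁻¹ • A) := mA.const_smul₀ _
  have mB' : MeasurableSet (t⁻¹ • B) := mB.const_smul₀ _
  have := xpl N t h0 (by linarith) (((1 - t)⁻¹ • A).indicator 1) ((t⁻¹ • B).indicator 1) ((A + B).indicator 1)
    (measurable_one.indicator mA') (measurable_one.indicator mB') (measurable_one.indicator mAB) (by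
      intro x y
      by_cases hx : x ∈ (1 - t)⁻¹ • A
      · by_cases hy : y ∈ t⁻¹ • B
        · have : (1 - t) • x + t • y ∈ A + B := by
            obtain ⟨x', hx', rfl⟩ := hx
            obtain ⟨y', hy', rfl⟩ := hy
            simp only [smul_smul]
            rw [mul_inv_cancel₀ h1.ne', mul_inv_cancel₀ h0.ne', one_smul, one_smul]
            exact add_mem_add hx' hy'
          simp [this, hx, hy]
        · simp [hy, h0]
      · simp [hx, h1])
  rw [lintegral_indicator_one mA', lintegral_indicator_one mB', lintegral_indicator_one mAB] at this
  refine le_trans ?_ this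
  have hne : ENNReal.ofReal ((a + b) ^ N) ≠ 0 := by simpa using pow_pos hab N
  calc ENNReal.ofReal ((a + b) ^ N) = ENNReal.ofReal ((a + b) ^ N) ^ (1 - t) * ENNReal.ofReal ((a + b) ^ N) ^ t := by
        rw [← ENNReal.rpow_add _ _ hne (by simp)]; simp
    _ ≤ _ := by gcongr

lemma xbm {N : ℕ} (A B : Set (EuclideanSpace ℝ (Fin N))) (mA : MeasurableSet A)
    (mB : MeasurableSet B) (mAB : MeasurableSet (A + B)) (a b : ℝ) (ha : 0 ≤ a) (hb : 0 ≤ b)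
    (nA : A.Nonempty) (nB : B.Nonempty)
    (hA : ENNReal.ofReal (a ^ N) ≤ volume A) (hB : ENNReal.ofReal (b ^ N) ≤ volume B) :
    ENNReal.ofReal ((a + b) ^ N) ≤ volume (A + B) := by
  rcases ha.eq_or_lt with rfl | ha
  · obtain ⟨x, hx⟩ := nA
    rw [zero_add]
    refine hB.trans ?_
    have : volume B = volume ((fun z => x + z) '' B) := by simp
    rw [this]
    refine measure_mono ?_
    rintro _ ⟨z, hz, rfl⟩
    exact add_mem_add hx hz
  rcases hb.eq_or_lt with rfl | hb
  · obtain ⟨x, hx⟩ := nB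
    rw [add_zero]
    refine hA.trans ?_
    have : volume A = volume ((fun z => z + x) '' A) := by simp
    rw [this]
    refine measure_mono ?_
    rintro _ ⟨z, hz, rfl⟩
    exact add_mem_add hz hx
  have mp := PiLp.volume_preserving_toLp (Fin N)
  have e := fun (S : Set (EuclideanSpace ℝ (Fin N))) (hS : MeasurableSet S) => mp.measure_preimage hS.nullMeasurableSet
  have hadd : (WithLp.toLp 2 : (Fin N → ℝ) → EuclideanSpace ℝ (Fin N)) ⁻¹' (A + B) = WithLp.toLp 2 ⁻¹' A + WithLp.toLp 2 ⁻¹' B := by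
    ext z
    constructor
    · rintro ⟨x, hx, y, hy, hxy⟩
      refine ⟨WithLp.ofLp x, by simpa using hx, WithLp.ofLp y, by simpa using hy, ?_⟩
      have := congrArg WithLp.ofLp hxy
      simpa using this
    · rintro ⟨x, hx, y, hy, rfl⟩
      exact ⟨_, hx, _, hy, by simp⟩
  rw [← e _ mAB, hadd]
  refine xbm_pi _ _ (mp.measurable mA) (mp.measurable mB) ?_ a b ha hb ?_ ?_
  · rw [← hadd]; exact mp.measurable mAB
  · rw [e _ mA]; exact hA
  · rw [e _ mB]; exact hB

open MeasureTheory Metric Set Real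
open scoped ENNReal Pointwise

noncomputable def xom (N : ℕ) : ℝ := volume.real (ball (0 : EuclideanSpace ℝ (Fin N)) 1)

lemma xom_pos (N : ℕ) : 0 < xom N := by
  unfold xom
  exact ENNReal.toReal_pos (measure_ball_pos _ _ one_pos).ne' measure_ball_lt_top.ne

lemma xvol_ball {N : ℕ} (hN : N ≠ 0) (x : EuclideanSpace ℝ (Fin N)) {r : ℝ} (hr : 0 ≤ r) :
    volume (ball x r) = ENNReal.ofReal (xom N * r ^ N) := by
  have : Nontrivial (EuclideanSpace ℝ (Fin N)) := by
    have : Nonempty (Fin N) := ⟨⟨0, Nat.pos_of_ne_zero hN⟩⟩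
    infer_instance
  rw [Measure.addHaar_ball _ _ hr, finrank_euclideanSpace_fin, mul_comm (xom N), ENNReal.ofReal_mul (by positivity)]
  congr 1
  rw [xom, Measure.real, ENNReal.ofReal_toReal measure_ball_lt_top.ne]

lemma xvol_cball {N : ℕ} (hN : N ≠ 0) (x : EuclideanSpace ℝ (Fin N)) {r : ℝ} (hr : 0 ≤ r) :
    volume (closedBall x r) = ENNReal.ofReal (xom N * r ^ N) := by
  rw [Measure.addHaar_closedBall _ _ hr, finrank_euclideanSpace_fin, mul_comm (xom N), ENNReal.ofReal_mul (by positivity)]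
  congr 1
  rw [xom, Measure.real, ENNReal.ofReal_toReal measure_ball_lt_top.ne]

lemma xbm_ball {N : ℕ} (hN : N ≠ 0) (A : Set (EuclideanSpace ℝ (Fin N))) (hA : IsOpen A)
    (nA : A.Nonempty) (ρ r : ℝ) (hρ : 0 ≤ ρ) (hr : 0 ≤ r)
    (h : ENNReal.ofReal (xom N * ρ ^ N) ≤ volume A) :
    ENNReal.ofReal (xom N * (ρ + r) ^ N) ≤ volume (A + closedBall (0 : EuclideanSpace ℝ (Fin N)) r) := by
  set o := (xom N) ^ ((N : ℝ)⁻¹) with ho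
  have hom := xom_pos N
  have h1 : o ^ N = xom N := by
    rw [ho]; exact Real.rpow_inv_natCast_pow hom.le hN
  have ho0 : 0 ≤ o := by positivity
  have := xbm A (closedBall 0 r) hA.measurableSet measurableSet_closedBall
    (hA.add_right).measurableSet (o * ρ) (o * r) (by positivity) (by positivity) nA
    ⟨0, by simpa using hr⟩ (by rwa [mul_pow, h1]) (by rw [xvol_cball hN _ hr, mul_pow, h1])
  rwa [← mul_add, mul_pow, h1] at this

/-- profile of the decreasing rearrangement -/
noncomputable def xprof {N : ℕ} (w : EuclideanSpace ℝ (Fin N) → ℝ) (r : ℝ) : ℝ :=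
  sInf {s : ℝ | 0 ≤ s ∧ volume {x | s < w x} ≤ ENNReal.ofReal (xom N * |r| ^ N)}

section prof
variable {N : ℕ} {w : EuclideanSpace ℝ (Fin N) → ℝ}

lemma xV_fin (hc : HasCompactSupport w) {s : ℝ} (hs : 0 ≤ s) : volume {x | s < w x} < ⊤ := by
  refine lt_of_le_of_lt (measure_mono ?_) hc.isCompact.measure_lt_top
  intro x hx
  refine subset_tsupport _ ?_
  simp only [mem_ofPred_eq] at hx
  simp only [Function.mem_support]
  linarith

lemma xV_anti {s t : ℝ} (h : s ≤ t) : volume {x | t < w x} ≤ volume {x | s < w x} :=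
  measure_mono fun _ hx => lt_of_le_of_lt h hx

lemma xV_rc {s : ℝ} {a : ℝ≥0∞} (h : a < volume {x | s < w x}) :
    ∃ s' > s, a < volume {x | s' < w x} := by
  have e : {x | s < w x} = ⋃ n : ℕ, {x | s + 1 / ((n : ℝ) + 1) < w x} := by
    ext x
    simp only [mem_ofPred_eq, mem_iUnion]
    constructor
    · intro hx
      obtain ⟨n, hn⟩ := exists_nat_one_div_lt (sub_pos.2 hx)
      exact ⟨n, by linarith⟩
    · rintro ⟨n, hn⟩
      have : (0:ℝ) < 1 / ((n : ℝ) + 1) := by positivity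
      linarith
  have mono : Monotone fun n : ℕ => {x | s + 1 / ((n : ℝ) + 1) < w x} := by
    intro n m hnm x hx
    simp only [mem_ofPred_eq] at hx ⊢
    refine lt_of_le_of_lt ?_ hx
    gcongr
  rw [e, mono.measure_iUnion] at h
  obtain ⟨n, hn⟩ := lt_iSup_iff.1 h
  exact ⟨_, by simp; positivity, hn⟩

lemma xprof_nonneg (r : ℝ) : 0 ≤ xprof w r := Real.sInf_nonneg fun _ h => h.1

lemma xprof_bdd (r : ℝ) : BddBelow {s : ℝ | 0 ≤ s ∧ volume {x | s < w x} ≤ ENNReal.ofReal (xom N * |r| ^ N)} :=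
  ⟨0, fun _ h => h.1⟩

lemma xprof_gal (hb : ∃ M, ∀ x, w x ≤ M) {s r : ℝ} (hs : 0 ≤ s) :
    s < xprof w r ↔ ENNReal.ofReal (xom N * |r| ^ N) < volume {x | s < w x} := by
  constructor
  · intro h
    by_contra! h2
    exact absurd (csInf_le (xprof_bdd r) ⟨hs, h2⟩) (not_le.2 h)
  · intro h
    obtain ⟨s', hs', h'⟩ := xV_rc h
    refine lt_of_lt_of_le hs' (le_csInf ?_ ?_)
    · obtain ⟨M, hM⟩ := hb
      refine ⟨max M 0, le_max_right _ _, ?_⟩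
      have : {x | max M 0 < w x} = ∅ := by
        ext x; simpa using fun h => absurd (hM x) (not_le.2 h)
      rw [this]; simp
    · rintro t ⟨_, ht⟩
      by_contra! hlt
      exact absurd (h'.trans_le ((xV_anti hlt.le).trans ht)) (lt_irrefl _)

lemma xprof_anti (hb : ∃ M, ∀ x, w x ≤ M) {r r' : ℝ} (h : |r| ≤ |r'|) : xprof w r' ≤ xprof w r := by
  refine le_of_forall_lt fun s hs => ?_
  by_cases h0 : 0 ≤ s
  · rw [xprof_gal hb h0] at hs ⊢
    refine lt_of_le_of_lt ?_ hs
    have := xom_pos N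
    gcongr
  · exact lt_of_lt_of_le (not_le.1 h0) (xprof_nonneg r)

lemma xprof_shift (hN : N ≠ 0) (hb : ∃ M, ∀ x, w x ≤ M) {L : NNReal} (hL : LipschitzWith L w)
    (hc : HasCompactSupport w) {r δ : ℝ} (hr : 0 ≤ r) (hδ : 0 ≤ δ) :
    xprof w r ≤ xprof w (r + δ) + L * δ := by
  by_contra! hlt
  set s := xprof w (r + δ) + L * δ with hs
  have hs0 : 0 ≤ s := add_nonneg (xprof_nonneg _) (by positivity)
  have hom := xom_pos N
  have h1 := (xprof_gal hb hs0).1 hlt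
  rw [abs_of_nonneg hr] at h1
  have hfin := xV_fin hc hs0
  have h2 : ∃ ρ > r, ENNReal.ofReal (xom N * ρ ^ N) ≤ volume {x | s < w x} := by
    have hlt' : xom N * r ^ N < (volume {x | s < w x}).toReal :=
      (ENNReal.ofReal_lt_iff_lt_toReal (by positivity) hfin.ne).1 h1
    have cont : ContinuousAt (fun ρ : ℝ => xom N * ρ ^ N) r := by fun_prop
    have ev := (cont.eventually_lt_const hlt').filter_mono (nhdsWithin_le_nhds (s := Ioi r))
    obtain ⟨ρ, hρ, hρ2⟩ := (ev.and self_mem_nhdsWithin).exists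
    exact ⟨ρ, hρ2, (ENNReal.ofReal_le_iff_le_toReal hfin.ne).2 hρ.le⟩
  obtain ⟨ρ, hρ, h3⟩ := h2
  have hop : IsOpen {x | s < w x} := isOpen_lt continuous_const hL.continuous
  have hne : {x | s < w x}.Nonempty := by
    rw [nonempty_iff_ne_empty]
    intro h; rw [h] at h1; simp at h1
  have h4 := xbm_ball hN _ hop hne ρ δ (hr.trans hρ.le) hδ h3
  have h5 : {x | s < w x} + closedBall (0 : EuclideanSpace ℝ (Fin N)) δ ⊆ {x | xprof w (r + δ) < w x} := by
    rintro _ ⟨x, hx, y, hy, rfl⟩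
    simp only [mem_ofPred_eq, mem_closedBall, dist_zero_right] at hx hy ⊢
    have := hL.dist_le_mul x (x + y)
    rw [Real.dist_eq, dist_self_add_right] at this
    have h6 := (abs_le.1 this).2
    have : (L : ℝ) * ‖y‖ ≤ L * δ := by gcongr
    linarith
  have h7 : ENNReal.ofReal (xom N * |r + δ| ^ N) < volume {x | xprof w (r + δ) < w x} := by
    refine lt_of_lt_of_le ?_ (h4.trans (measure_mono h5))
    rw [ENNReal.ofReal_lt_ofReal_iff (by have : 0 < ρ := lt_of_le_of_lt hr hρ; positivity), abs_of_nonneg (by positivity)]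
    have : (r + δ) ^ N < (ρ + δ) ^ N := pow_lt_pow_left₀ (by linarith) (by positivity) hN
    gcongr
  exact lt_irrefl _ ((xprof_gal hb (xprof_nonneg _)).2 h7)

lemma xprof_abs (r : ℝ) : xprof w |r| = xprof w r := by simp [xprof]

lemma xprof_lip (hN : N ≠ 0) (hb : ∃ M, ∀ x, w x ≤ M) {L : NNReal} (hL : LipschitzWith L w)
    (hc : HasCompactSupport w) : LipschitzWith L (xprof w) := by
  have key : ∀ r r' : ℝ, 0 ≤ r → r ≤ r' → |xprof w r - xprof w r'| ≤ L * (r' - r) := by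
    intro r r' hr hrr
    have h1 := xprof_shift hN hb hL hc hr (sub_nonneg.2 hrr)
    rw [add_sub_cancel] at h1
    have h2 : xprof w r' ≤ xprof w r := xprof_anti hb (by rw [abs_of_nonneg hr, abs_of_nonneg (hr.trans hrr)]; exact hrr)
    rw [abs_le]; constructor <;> nlinarith [mul_nonneg L.2 (sub_nonneg.2 hrr), L.2]
  refine LipschitzWith.of_dist_le_mul fun r r' => ?_
  rw [← xprof_abs r, ← xprof_abs r', Real.dist_eq, Real.dist_eq]
  have h3 : |(|r| - |r'|)| ≤ |r - r'| := abs_abs_sub_abs_le r r'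
  have hL0 : (0:ℝ) ≤ L := L.2
  rcases le_total |r| |r'| with h | h
  · refine (key _ _ (abs_nonneg _) h).trans ?_
    gcongr
    rw [abs_sub_comm] at h3
    exact (le_abs_self _).trans h3
  · rw [abs_sub_comm]
    refine (key _ _ (abs_nonneg _) h).trans ?_
    gcongr
    exact (le_abs_self _).trans h3

lemma xprof_vol (hN : N ≠ 0) (hb : ∃ M, ∀ x, w x ≤ M) (hc : HasCompactSupport w) {s : ℝ} (hs : 0 ≤ s) :
    volume {x : EuclideanSpace ℝ (Fin N) | s < xprof w ‖x‖} = volume {x | s < w x} := by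
  have hfin := xV_fin hc hs
  have hom := xom_pos N
  set v := (volume {x | s < w x}).toReal with hv
  have hv0 : 0 ≤ v := ENNReal.toReal_nonneg
  set ρ := (v / xom N) ^ ((N : ℝ)⁻¹) with hρ
  have h1 : ρ ^ N = v / xom N := Real.rpow_inv_natCast_pow (by positivity) hN
  have hρ0 : 0 ≤ ρ := by positivity
  have : {x : EuclideanSpace ℝ (Fin N) | s < xprof w ‖x‖} = ball 0 ρ := by
    ext x
    simp only [mem_ofPred_eq, mem_ball, dist_zero_right]
    rw [xprof_gal hb hs, abs_norm, ENNReal.ofReal_lt_iff_lt_toReal (by positivity) hfin.ne, ← hv,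
      ← pow_lt_pow_iff_left₀ (norm_nonneg x) hρ0 hN, h1, lt_div_iff₀ hom, mul_comm]
  rw [this, xvol_ball hN _ hρ0, h1, mul_div_cancel₀ _ hom.ne', hv, ENNReal.ofReal_toReal hfin.ne]
end prof

open MeasureTheory Metric Set Real
open scoped ENNReal Pointwise

noncomputable def xL (m t r : ℝ) : ℝ := t * (r / t) ^ m / m

noncomputable def xQ {N : ℕ} (m t : ℝ) (g : EuclideanSpace ℝ (Fin N) → ℝ) (x : EuclideanSpace ℝ (Fin N)) : ℝ :=
  ⨆ y, (g y - xL m t ‖x - y‖)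

section Q
variable {N : ℕ} {m t : ℝ} {g : EuclideanSpace ℝ (Fin N) → ℝ}

lemma xL_nonneg (hm : 1 < m) (ht : 0 < t) {r : ℝ} (hr : 0 ≤ r) : 0 ≤ xL m t r := by
  unfold xL; positivity

lemma xL_zero (hm : 1 < m) : xL m t 0 = 0 := by
  simp [xL, Real.zero_rpow (by linarith : m ≠ 0)]

lemma xQ_bdd (hm : 1 < m) (ht : 0 < t) {M : ℝ} (hM : ∀ x, g x ≤ M) (x) :
    BddAbove (range fun y => g y - xL m t ‖x - y‖) := by
  refine ⟨M, ?_⟩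
  rintro _ ⟨y, rfl⟩
  have := xL_nonneg hm ht (norm_nonneg (x - y))
  have := hM y
  simp only; linarith

lemma xQ_lt (hm : 1 < m) (ht : 0 < t) {M : ℝ} (hM : ∀ x, g x ≤ M) (x) (s : ℝ) :
    s < xQ m t g x ↔ ∃ y, s < g y - xL m t ‖x - y‖ :=
  lt_ciSup_iff (xQ_bdd hm ht hM x)

lemma xQ_ge (hm : 1 < m) (ht : 0 < t) {M : ℝ} (hM : ∀ x, g x ≤ M) (x y) :
    g y - xL m t ‖x - y‖ ≤ xQ m t g x := le_ciSup (xQ_bdd hm ht hM x) y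

lemma xQ_self (hm : 1 < m) (ht : 0 < t) {M : ℝ} (hM : ∀ x, g x ≤ M) (x) :
    g x ≤ xQ m t g x := by
  have := xQ_ge hm ht hM x x
  simpa [xL_zero hm] using this

lemma xL_cont (hm : 1 < m) (y : EuclideanSpace ℝ (Fin N)) :
    Continuous fun x => xL m t ‖x - y‖ := by
  unfold xL
  have : Continuous fun x : EuclideanSpace ℝ (Fin N) => (‖x - y‖ / t) ^ m :=
    Continuous.rpow_const (by fun_prop) (fun _ => Or.inr (by linarith))
  fun_prop

lemma xQ_open (hm : 1 < m) (ht : 0 < t) {M : ℝ} (hM : ∀ x, g x ≤ M) (s : ℝ) :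
    IsOpen {x | s < xQ m t g x} := by
  have : {x | s < xQ m t g x} = ⋃ y, {x | s < g y - xL m t ‖x - y‖} := by
    ext x; simp only [mem_ofPred_eq, mem_iUnion]; exact xQ_lt hm ht hM x s
  rw [this]
  exact isOpen_iUnion fun y => isOpen_lt continuous_const (continuous_const.sub (xL_cont hm y))

lemma xQ_meas (hm : 1 < m) (ht : 0 < t) {M : ℝ} (hM : ∀ x, g x ≤ M) : Measurable (xQ m t g) :=
  measurable_of_Ioi fun s => (xQ_open hm ht hM s).measurableSet

lemma xyoung {p : ℝ} (hpm : p.HolderConjugate m) (ht : 0 < t) {b r : ℝ} (hb : 0 ≤ b) (hr : 0 ≤ r) :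
    b * r ≤ xL m t r + t * (b ^ p / p) := by
  have := Real.young_inequality_of_nonneg hb (div_nonneg hr ht.le) hpm
  unfold xL
  calc b * r = t * (b * (r / t)) := by field_simp
    _ ≤ t * (b ^ p / p + (r / t) ^ m / m) := by gcongr
    _ = _ := by ring

lemma xL_big (hm : 1 < m) {K δ : ℝ} (hK : 0 ≤ K) (hδ : 0 < δ) :
    ∃ t0 > 0, ∀ t, 0 < t → t ≤ t0 → ∀ r, δ ≤ r → K * r ≤ xL m t r := by
  set A := (m * K + 1) ^ (1 / (m - 1)) with hA
  have hA0 : 0 < A := by positivity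
  refine ⟨δ / A, by positivity, fun t ht htt r hr => ?_⟩
  have hr0 : 0 < r := lt_of_lt_of_le hδ hr
  have h1 : A ≤ r / t := by
    rw [le_div_iff₀ ht]; rw [le_div_iff₀ hA0] at htt; nlinarith
  have h2 : m * K + 1 ≤ (r / t) ^ (m - 1) := by
    calc m * K + 1 = A ^ (m - 1) := by
          rw [hA, ← Real.rpow_mul (by positivity), one_div_mul_cancel (by linarith), Real.rpow_one]
      _ ≤ _ := Real.rpow_le_rpow hA0.le h1 (by linarith)
  have h3 : (r / t) ^ m = (r / t) ^ (m - 1) * (r / t) := by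
    rw [← Real.rpow_add_one (by positivity)]; ring_nf
  unfold xL
  rw [h3]
  have : t * ((r / t) ^ (m - 1) * (r / t)) / m = (r / t) ^ (m - 1) * r / m := by field_simp
  rw [this, le_div_iff₀ (by linarith)]
  nlinarith

lemma xQ_up {p : ℝ} (hpm : p.HolderConjugate m) {K : NNReal} (hK : LipschitzWith K g) (x)
    {b δ : ℝ} (hb : 0 ≤ b) (hδ : 0 < δ) (h : ∀ y, ‖x - y‖ < δ → g y - g x ≤ b * ‖x - y‖) :
    ∃ t0 > 0, ∀ t, 0 < t → t ≤ t0 → xQ m t g x ≤ g x + t * (b ^ p / p) := by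
  have hm : 1 < m := hpm.symm.lt
  obtain ⟨t0, h0, H⟩ := xL_big (δ := δ) hm K.coe_nonneg hδ
  refine ⟨t0, h0, fun t ht htt => ciSup_le fun y => ?_⟩
  have hp := hpm.lt
  have : 0 ≤ t * (b ^ p / p) := by positivity
  rcases lt_or_ge ‖x - y‖ δ with hd | hd
  · have := xyoung hpm ht hb (norm_nonneg (x - y))
    linarith [h y hd]
  · have h1 := H t ht htt _ hd
    have h2 := hK.dist_le_mul y x
    rw [Real.dist_eq, dist_comm, dist_eq_norm] at h2
    have := (abs_le.1 h2).2
    linarith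

lemma xQ_lipup {p : ℝ} (hpm : p.HolderConjugate m) (ht : 0 < t) {K : NNReal} (hK : LipschitzWith K g) (x) :
    xQ m t g x ≤ g x + t * ((K:ℝ) ^ p / p) := by
  refine ciSup_le fun y => ?_
  have h2 := hK.dist_le_mul y x
  rw [Real.dist_eq, dist_comm, dist_eq_norm] at h2
  have := (abs_le.1 h2).2
  have := xyoung hpm ht K.coe_nonneg (norm_nonneg (x - y))
  linarith

lemma xQ_supp (hm : 1 < m) (ht : 0 < t) (ht1 : t ≤ 1) {M R : ℝ} (hM : ∀ x, g x ≤ M)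
    (hR : ∀ x, 0 < g x → ‖x‖ ≤ R) (x) (hx : 0 < xQ m t g x) : ‖x‖ ≤ R + max 1 (m * M) := by
  obtain ⟨y, hy⟩ := (xQ_lt hm ht hM x 0).1 hx
  have h0 := xL_nonneg hm ht (norm_nonneg (x - y))
  have h1 := hR y (by linarith)
  have h2 : ‖x - y‖ ≤ max 1 (m * M) := by
    by_contra! h
    rw [max_lt_iff] at h
    have h3 : ‖x - y‖ / t ≤ (‖x - y‖ / t) ^ m := by
      have : 1 ≤ ‖x - y‖ / t := by rw [le_div_iff₀ ht]; linarith
      exact Real.self_le_rpow_of_one_le this hm.le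
    have h4 : ‖x - y‖ / m ≤ xL m t ‖x - y‖ := by
      unfold xL
      calc ‖x - y‖ / m = t * (‖x - y‖ / t) / m := by field_simp
        _ ≤ _ := by gcongr
    have : ‖x - y‖ / m < M := by linarith [hM y]
    rw [div_lt_iff₀ (by linarith)] at this
    linarith
  calc ‖x‖ = ‖(x - y) + y‖ := by simp
    _ ≤ ‖x - y‖ + ‖y‖ := norm_add_le _ _
    _ ≤ _ := by linarith

lemma xQ_low {p : ℝ} (hpm : p.HolderConjugate m) {M : ℝ} (hM : ∀ x, g x ≤ M) (x)
    (D : EuclideanSpace ℝ (Fin N) →L[ℝ] ℝ) (hD : HasFDerivAt g D x) {η : ℝ} (hη : 0 < η) :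
    ∃ t0 > 0, ∀ t, 0 < t → t ≤ t0 → g x + t * (‖D‖ ^ p / p - η) ≤ xQ m t g x := by
  have hm := hpm.symm.lt
  have hp := hpm.lt
  obtain ⟨z, hz1, hz2⟩ : ∃ z : EuclideanSpace ℝ (Fin N), ‖z‖ ^ m = ‖D‖ ^ p ∧ D z = ‖D‖ ^ p := by
    by_cases h0 : ‖D‖ = 0
    · refine ⟨0, ?_, ?_⟩ <;> simp [h0, Real.zero_rpow (by linarith : p ≠ 0), Real.zero_rpow (by linarith : m ≠ 0)]
    have h0' : 0 < ‖D‖ := lt_of_le_of_ne (norm_nonneg _) (Ne.symm h0)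
    set e := (InnerProductSpace.toDual ℝ (EuclideanSpace ℝ (Fin N))).symm D with he
    have hne : ‖e‖ = ‖D‖ := by rw [he, LinearIsometryEquiv.norm_map]
    have hDe : D e = ‖D‖ ^ 2 := by
      rw [← hne, ← real_inner_self_eq_norm_sq, he, InnerProductSpace.toDual_symm_apply]
    refine ⟨‖D‖ ^ (p - 2) • e, ?_, ?_⟩
    · rw [norm_smul, hne, Real.norm_of_nonneg (by positivity), ← Real.rpow_add_one h0,
        ← Real.rpow_mul (norm_nonneg _)]
      congr 1
      have := hpm.sub_one_mul_conj
      linarith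
    · rw [map_smul, hDe, smul_eq_mul, ← Real.rpow_natCast, ← Real.rpow_add h0']
      norm_num
  have hd : HasDerivAt (fun s : ℝ => g (x + s • z)) (D z) 0 := by
    have h1 : HasDerivAt (fun s : ℝ => x + s • z) z 0 := by
      simpa using ((hasDerivAt_id (0:ℝ)).smul_const z).const_add x
    have h2 : HasFDerivAt g D (x + (0:ℝ) • z) := by simpa using hD
    exact h2.comp_hasDerivAt 0 h1
  rw [hasDerivAt_iff_isLittleO] at hd
  have hd := hd.def hη
  obtain ⟨ε, hε, H⟩ := Metric.eventually_nhds_iff.1 hd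
  refine ⟨ε / 2, by positivity, fun t ht htt => ?_⟩
  have h1 := H (y := t) (by rw [Real.dist_eq, sub_zero, abs_of_pos ht]; linarith)
  have h2 := xQ_ge (t := t) hm ht hM x (x + t • z)
  have h3 : xL m t ‖x - (x + t • z)‖ = t * (‖D‖ ^ p / m) := by
    rw [sub_add_cancel_left, norm_neg, norm_smul, Real.norm_of_nonneg ht.le, xL, mul_div_cancel_left₀ _ ht.ne', hz1]
    ring
  rw [h3] at h2
  simp only [zero_smul, add_zero, sub_zero, smul_eq_mul, hz2, Real.norm_eq_abs, abs_of_pos ht] at h1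
  have h4 := (abs_le.1 h1).1
  have h5 : t * (‖D‖ ^ p / m) + t * (‖D‖ ^ p / p) = t * ‖D‖ ^ p := by
    have := hpm.inv_add_inv_eq_one
    rw [div_eq_mul_inv, div_eq_mul_inv]
    linear_combination (t * ‖D‖ ^ p) * this
  linarith

end Q

open MeasureTheory Metric Set Real
open scoped ENNReal Pointwise

lemma xlipcomp {N : ℕ} {K L : NNReal} {h : ℝ → ℝ} {w : EuclideanSpace ℝ (Fin N) → ℝ} (hh : LipschitzWith K h)
    (hw : LipschitzWith L w) : LipschitzWith (K * L) (fun x => h (w x)) := hh.comp hw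

lemma xQ_cmp {N : ℕ} (hN : N ≠ 0) {m t : ℝ} (hm : 1 < m) (ht : 0 < t)
    {w : EuclideanSpace ℝ (Fin N) → ℝ} (hw : Continuous w) {M : ℝ} (hM0 : 0 ≤ M) (hM : ∀ x, w x ≤ M)
    {c : ℝ} (hc : 0 ≤ c) {s : ℝ} (hs : 0 ≤ s) :
    volume {x | s < xQ m t (fun x : EuclideanSpace ℝ (Fin N) => max (xprof w ‖x‖ - c) 0) x} ≤
      volume {x | s < xQ m t (fun x => max (w x - c) 0) x} := by
  have hom := xom_pos N
  set g := (fun x => max (w x - c) 0) with hg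
  set G := (fun x : EuclideanSpace ℝ (Fin N) => max (xprof w ‖x‖ - c) 0) with hG
  have hgM : ∀ x, g x ≤ M := fun x => by simp only [hg]; exact max_le (by linarith [hM x]) hM0
  have hb : ∃ M, ∀ x, w x ≤ M := ⟨M, hM⟩
  have hFM : ∀ r, xprof w r ≤ M := by
    intro r
    refine csInf_le (xprof_bdd r) ⟨hM0, ?_⟩
    have : {x | M < w x} = ∅ := by
      ext x; simpa using hM x
    rw [this]; simp
  have hGM : ∀ x, G x ≤ M := fun x => by
    simp only [hG]; exact max_le (by linarith [hFM ‖x‖]) hM0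
  set V := volume {x | s < xQ m t g x} with hV
  have key : ∀ x, s < xQ m t G x → ENNReal.ofReal (xom N * ‖x‖ ^ N) ≤ V := by
    intro x hx
    obtain ⟨y, hy⟩ := (xQ_lt hm ht hGM x s).1 hx
    have hL0 := xL_nonneg hm ht (norm_nonneg (x - y))
    set r := ‖x - y‖ with hr
    have h1 : c + (s + xL m t r) < xprof w ‖y‖ := by
      have : s + xL m t r < max (xprof w ‖y‖ - c) 0 := by simp only [hG] at hy; linarith
      rcases lt_max_iff.1 this with h | h <;> linarith
    have h2 := (xprof_gal hb (by positivity)).1 h1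
    rw [abs_norm] at h2
    have hne : {x | c + (s + xL m t r) < w x}.Nonempty := by
      rw [nonempty_iff_ne_empty]
      intro h; rw [h] at h2; simp at h2
    have h3 := xbm_ball hN _ (isOpen_lt continuous_const hw) hne ‖y‖ r (norm_nonneg _) (norm_nonneg _) h2.le
    refine le_trans ?_ (h3.trans (measure_mono ?_))
    · have : ‖x‖ ≤ ‖y‖ + r := by
        calc ‖x‖ = ‖y + (x - y)‖ := by simp
          _ ≤ _ := norm_add_le _ _
      gcongr
    · rintro _ ⟨a, ha, v, hv, rfl⟩
      simp only [mem_ofPred_eq, mem_closedBall, dist_zero_right] at ha hv ⊢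
      have h4 := xQ_ge hm ht hgM (a + v) a
      rw [add_sub_cancel_left] at h4
      have h5 : xL m t ‖v‖ ≤ xL m t r := by unfold xL; gcongr
      have h6 : w a - c ≤ g a := le_max_left _ _
      simp only [gt_iff_lt]
      linarith
  by_cases hVt : V = ⊤
  · rw [hVt]; exact le_top
  set v := V.toReal with hv
  have hv0 : 0 ≤ v := ENNReal.toReal_nonneg
  set ρ := (v / xom N) ^ ((N : ℝ)⁻¹) with hρ
  have h1 : ρ ^ N = v / xom N := Real.rpow_inv_natCast_pow (by positivity) hN
  have hρ0 : 0 ≤ ρ := by positivity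
  calc volume {x | s < xQ m t G x} ≤ volume (closedBall (0 : EuclideanSpace ℝ (Fin N)) ρ) := by
        refine measure_mono fun x hx => ?_
        have := key x hx
        rw [ENNReal.ofReal_le_iff_le_toReal hVt, ← hv, mul_comm, ← le_div_iff₀ hom, ← h1] at this
        rw [mem_closedBall, dist_zero_right]
        exact (pow_le_pow_iff_left₀ (norm_nonneg x) hρ0 hN).1 this
    _ = V := by
        rw [xvol_cball hN _ hρ0, h1, mul_div_cancel₀ _ hom.ne', hv, ENNReal.ofReal_toReal hVt]

lemma xlayer_cmp {N : ℕ} {f g : EuclideanSpace ℝ (Fin N) → ℝ} (hf : Measurable f) (hg : Measurable g)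
    (h : ∀ s, 0 < s → volume {x | s < f x} ≤ volume {x | s < g x}) :
    ∫⁻ x, ENNReal.ofReal (f x) ≤ ∫⁻ x, ENNReal.ofReal (g x) := by
  rw [xlayer _ _ hf.ennreal_ofReal, xlayer _ _ hg.ennreal_ofReal]
  refine setLIntegral_mono' measurableSet_Ioi fun s hs => ?_
  have e : ∀ f : EuclideanSpace ℝ (Fin N) → ℝ, {x | ENNReal.ofReal s < ENNReal.ofReal (f x)} = {x | s < f x} := by
    intro f; ext x
    simp only [mem_ofPred_eq]
    rw [ENNReal.ofReal_lt_ofReal_iff']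
    exact ⟨fun h => h.1, fun h => ⟨h, lt_trans hs h⟩⟩
  rw [e, e]
  exact h s hs

lemma xseq (t0 : ℝ) (h : 0 < t0) : ∀ᶠ n : ℕ in Filter.atTop, 1 / ((n:ℝ) + 1) ≤ t0 :=
  (tendsto_one_div_add_atTop_nhds_zero_nat.eventually_le_const h)

lemma xps {N : ℕ} (hN : N ≠ 0) {p : ℝ} (hp : 1 < p) {u : EuclideanSpace ℝ (Fin N) → ℝ}
    (hu : ContDiff ℝ 1 u) (hcs : HasCompactSupport u) {c : ℝ} (hc : 0 ≤ c) :
    ∫⁻ x in {x : EuclideanSpace ℝ (Fin N) | c < xprof (fun x => |u x|) ‖x‖},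
      ENNReal.ofReal (‖fderiv ℝ (fun x : EuclideanSpace ℝ (Fin N) => xprof (fun x => |u x|) ‖x‖) x‖ ^ p) ≤
    ∫⁻ x in {x | c ≤ |u x|}, ENNReal.ofReal (‖fderiv ℝ u x‖ ^ p) := by
  obtain ⟨K, hK⟩ := hu.lipschitzWith_of_hasCompactSupport hcs (by norm_num)
  set w := (fun x => |u x|) with hw
  have hwK : LipschitzWith K w := by
    have h1 : LipschitzWith 1 (fun y : ℝ => |y|) := LipschitzWith.of_dist_le_mul (by
      intro a b; rw [Real.dist_eq, Real.dist_eq]; simpa using abs_abs_sub_abs_le a b)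
    have := xlipcomp h1 hK
    rwa [one_mul] at this
  have hwc : HasCompactSupport w := hcs.comp_left (g := fun y : ℝ => |y|) abs_zero
  obtain ⟨M, hM⟩ := hcs.exists_bound_of_continuous hu.continuous
  have hM : ∀ x, w x ≤ M := hM
  have hM0 : 0 ≤ M := (abs_nonneg _).trans (hM 0)
  have hb : ∃ M, ∀ x, w x ≤ M := ⟨M, hM⟩
  set f := xprof w with hf
  have hfL : LipschitzWith K f := xprof_lip hN hb hwK hwc
  set F := (fun x : EuclideanSpace ℝ (Fin N) => f ‖x‖) with hF
  have hFL : LipschitzWith K F := by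
    have := xlipcomp hfL (lipschitzWith_one_norm (E := EuclideanSpace ℝ (Fin N)))
    rwa [mul_one] at this
  set g := (fun x => max (w x - c) 0) with hg
  set G := (fun x : EuclideanSpace ℝ (Fin N) => max (f ‖x‖ - c) 0) with hG
  have maxL : LipschitzWith 1 fun y : ℝ => max (y - c) 0 := by
    refine LipschitzWith.of_dist_le_mul fun a b => ?_
    rw [Real.dist_eq, Real.dist_eq]
    have := abs_max_sub_max_le_abs (a - c) (b - c) 0
    simpa using this
  have hgL : LipschitzWith K g := by
    have := xlipcomp maxL hwK
    rwa [one_mul] at this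
  have hGL : LipschitzWith K G := by
    have := xlipcomp maxL hFL
    rwa [one_mul] at this
  have hgM : ∀ x, g x ≤ M := fun x => by simp only [hg]; exact max_le (by linarith [hM x]) hM0
  have hFM : ∀ r, f r ≤ M := by
    intro r
    refine csInf_le (xprof_bdd r) ⟨hM0, ?_⟩
    have : {x | M < w x} = ∅ := by
      ext x; simpa using hM x
    rw [this]; simp
  have hGM : ∀ x, G x ≤ M := fun x => by
    simp only [hG]; exact max_le (by linarith [hFM ‖x‖]) hM0
  set m := p.conjExponent with hm'
  have hpm : p.HolderConjugate m := Real.HolderConjugate.conjExponent hp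
  have hm := hpm.symm.lt
  have hp0 : 0 < p := by linarith
  obtain ⟨R, hR⟩ := hcs.isCompact.isBounded.exists_norm_le
  have hgR : ∀ x, 0 < g x → ‖x‖ ≤ R := by
    intro x hx
    apply hR
    refine subset_tsupport _ ?_
    simp only [Function.mem_support]
    intro h0
    simp only [hg, hw, h0, abs_zero, zero_sub, lt_max_iff, lt_irrefl, or_false] at hx
    linarith
  have hg0 : ∀ x, 0 ≤ g x := fun x => le_max_right _ _
  have hG0 : ∀ x, 0 ≤ G x := fun x => le_max_right _ _
  set T : ℕ → ℝ := fun n => 1 / ((n:ℝ) + 1) with hT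
  have hT0 : ∀ n, 0 < T n := fun n => by simp only [hT]; positivity
  have hT1 : ∀ n, T n ≤ 1 := fun n => by
    simp only [hT]; rw [div_le_one (by positivity)]; linarith [n.cast_nonneg (α := ℝ)]
  set a : ℕ → EuclideanSpace ℝ (Fin N) → ℝ≥0∞ := fun n x => ENNReal.ofReal ((xQ m (T n) G x - G x) / T n) with ha
  set b : ℕ → EuclideanSpace ℝ (Fin N) → ℝ≥0∞ := fun n x => ENNReal.ofReal ((xQ m (T n) g x - g x) / T n) with hb'
  have hgm := hgL.continuous.measurable
  have hGm := hGL.continuous.measurable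
  have hQgm : ∀ n, Measurable (xQ m (T n) g) := fun n => xQ_meas hm (hT0 n) hgM
  have hQGm : ∀ n, Measurable (xQ m (T n) G) := fun n => xQ_meas hm (hT0 n) hGM
  -- integrals
  have hgfin : ∫⁻ x, ENNReal.ofReal (g x) ≠ ⊤ := by
    have : ∫⁻ x, ENNReal.ofReal (g x) ≤ ∫⁻ x in closedBall (0 : EuclideanSpace ℝ (Fin N)) R, ENNReal.ofReal M := by
      rw [← lintegral_indicator measurableSet_closedBall]
      refine lintegral_mono fun x => ?_
      by_cases hx : 0 < g x
      · rw [indicator_of_mem (by simpa using hgR x hx)]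
        exact ENNReal.ofReal_le_ofReal (hgM x)
      · rw [ENNReal.ofReal_of_nonpos (not_lt.1 hx)]; exact zero_le
    refine ne_top_of_le_ne_top ?_ this
    simp only [lintegral_const, Measure.restrict_apply MeasurableSet.univ, univ_inter]
    exact ENNReal.mul_ne_top ENNReal.ofReal_ne_top measure_closedBall_lt_top.ne
  have hvol : ∀ s, 0 < s → volume {x | s < G x} = volume {x | s < g x} := by
    intro s hs
    have e1 : {x | s < G x} = {x : EuclideanSpace ℝ (Fin N) | c + s < f ‖x‖} := by
      ext x; simp only [hG, mem_ofPred_eq, lt_max_iff]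
      exact ⟨fun h => by rcases h with h | h <;> linarith, fun h => Or.inl (by linarith)⟩
    have e2 : {x | s < g x} = {x | c + s < w x} := by
      ext x; simp only [hg, mem_ofPred_eq, lt_max_iff]
      exact ⟨fun h => by rcases h with h | h <;> linarith, fun h => Or.inl (by linarith)⟩
    rw [e1, e2]
    exact xprof_vol hN hb hwc (by positivity)
  have hGg : ∫⁻ x, ENNReal.ofReal (G x) = ∫⁻ x, ENNReal.ofReal (g x) :=
    le_antisymm (xlayer_cmp hGm hgm fun s hs => (hvol s hs).le) (xlayer_cmp hgm hGm fun s hs => (hvol s hs).ge)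
  have int_eq : ∀ (h : EuclideanSpace ℝ (Fin N) → ℝ) (_ : ∀ x, 0 ≤ h x) (_ : ∀ x, h x ≤ M) (_ : Measurable h)
      (_ : ∫⁻ x, ENNReal.ofReal (h x) ≠ ⊤) (n : ℕ),
      ∫⁻ x, ENNReal.ofReal ((xQ m (T n) h x - h x) / T n) =
        ((∫⁻ x, ENNReal.ofReal (xQ m (T n) h x)) - ∫⁻ x, ENNReal.ofReal (h x)) / ENNReal.ofReal (T n) := by
    intro h h0 h1 h2 h3 n
    simp_rw [ENNReal.ofReal_div_of_pos (hT0 n), div_eq_mul_inv]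
    rw [lintegral_mul_const' _ _ (by simp [hT0 n])]
    congr 1
    rw [← lintegral_sub h2.ennreal_ofReal h3
      (Filter.Eventually.of_forall fun x => ENNReal.ofReal_le_ofReal (xQ_self hm (hT0 n) h1 x))]
    refine lintegral_congr fun x => ?_
    rw [ENNReal.ofReal_sub _ (h0 x)]
  have hab : ∀ n, ∫⁻ x, a n x ≤ ∫⁻ x, b n x := by
    intro n
    simp only [ha, hb']
    rw [int_eq G hG0 hGM hGm (by rw [hGg]; exact hgfin), int_eq g hg0 hgM hgm hgfin, hGg]
    gcongr ?_ / _
    refine tsub_le_tsub_right ?_ _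
    exact xlayer_cmp (hQGm n) (hQgm n) fun s hs => xQ_cmp hN hm (hT0 n) hwK.continuous hM0 hM hc hs.le
  have ham : ∀ n, Measurable (a n) := fun n => (((hQGm n).sub hGm).div_const _).ennreal_ofReal
  have hbm : ∀ n, Measurable (b n) := fun n => (((hQgm n).sub hgm).div_const _).ennreal_ofReal
  have mF : MeasurableSet {x : EuclideanSpace ℝ (Fin N) | c < f ‖x‖} :=
    (isOpen_lt continuous_const hFL.continuous).measurableSet
  have mU : MeasurableSet {x | c ≤ w x} := (isClosed_le continuous_const hwK.continuous).measurableSet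
  -- lower bound
  have A : ∀ x, ({x : EuclideanSpace ℝ (Fin N) | c < f ‖x‖}.indicator
      (fun x => ENNReal.ofReal (‖fderiv ℝ F x‖ ^ p / p))) x ≤ Filter.liminf (fun n => a n x) Filter.atTop := by
    intro x
    by_cases hx : c < f ‖x‖
    swap
    · rw [indicator_of_notMem (by exact hx)]; exact zero_le
    rw [indicator_of_mem (by exact hx)]
    by_cases hd : DifferentiableAt ℝ F x
    swap
    · rw [fderiv_zero_of_not_differentiableAt hd]
      simp [Real.zero_rpow hp0.ne']
    have hGd : HasFDerivAt G (fderiv ℝ F x) x := by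
      have h1 : HasFDerivAt (fun x => F x - c) (fderiv ℝ F x) x := hd.hasFDerivAt.sub_const c
      refine h1.congr_of_eventuallyEq ?_
      have := (hFL.continuous.continuousAt (x := x)).eventually_const_lt hx
      filter_upwards [this] with y hy
      simp only [hG]
      rw [max_eq_left]
      simp only [hF] at hy; linarith
    refine ENNReal.le_of_forall_pos_le_add fun η hη _ => ?_
    obtain ⟨t0, ht0, H⟩ := xQ_low hpm hGM x _ hGd (η := η) (by exact_mod_cast hη)
    have h1 : ENNReal.ofReal (‖fderiv ℝ F x‖ ^ p / p - η) ≤ Filter.liminf (fun n => a n x) Filter.atTop := by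
      refine Filter.le_liminf_of_le ?_ ?_
      · isBoundedDefault
      filter_upwards [xseq t0 ht0] with n hn
      refine ENNReal.ofReal_le_ofReal ?_
      rw [le_div_iff₀ (hT0 n)]
      have := H (T n) (hT0 n) hn
      linarith
    calc ENNReal.ofReal (‖fderiv ℝ F x‖ ^ p / p) = ENNReal.ofReal ((‖fderiv ℝ F x‖ ^ p / p - η) + η) := by ring_nf
      _ ≤ ENNReal.ofReal (‖fderiv ℝ F x‖ ^ p / p - η) + ENNReal.ofReal η := ENNReal.ofReal_add_le
      _ ≤ _ := by
        rw [ENNReal.ofReal_coe_nnreal]; gcongr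
  have B : ∀ x, Filter.limsup (fun n => b n x) Filter.atTop ≤ ({x | c ≤ w x}.indicator
      (fun x => ENNReal.ofReal (‖fderiv ℝ u x‖ ^ p / p))) x := by
    intro x
    have up : ∀ β δ : ℝ, 0 ≤ β → 0 < δ → (∀ y, ‖x - y‖ < δ → g y - g x ≤ β * ‖x - y‖) →
        Filter.limsup (fun n => b n x) Filter.atTop ≤ ENNReal.ofReal (β ^ p / p) := by
      intro β δ hβ hδ h
      obtain ⟨t0, ht0, H⟩ := xQ_up hpm hgL x hβ hδ h
      refine Filter.limsup_le_of_le ?_ ?_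
      · isBoundedDefault
      filter_upwards [xseq t0 ht0] with n hn
      refine ENNReal.ofReal_le_ofReal ?_
      rw [div_le_iff₀ (hT0 n)]
      have := H (T n) (hT0 n) hn
      linarith
    by_cases hx : c ≤ w x
    · rw [indicator_of_mem (by exact hx)]
      have hlim : Filter.Tendsto (fun η : ℝ => ENNReal.ofReal ((‖fderiv ℝ u x‖ + η) ^ p / p)) (nhdsWithin 0 (Ioi 0))
          (nhds (ENNReal.ofReal (‖fderiv ℝ u x‖ ^ p / p))) := by
        have : Continuous fun η : ℝ => (‖fderiv ℝ u x‖ + η) ^ p / p :=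
          (Continuous.rpow_const (by fun_prop) (fun _ => Or.inr hp0.le)).div_const _
        have := (ENNReal.continuous_ofReal.comp this).tendsto 0
        simp only [Function.comp_apply, add_zero] at this
        exact this.mono_left nhdsWithin_le_nhds
      refine ge_of_tendsto hlim ?_
      filter_upwards [self_mem_nhdsWithin] with η hη
      have hη : 0 < η := hη
      have hd := ((hu.differentiable (by norm_num)) x).hasFDerivAt
      have hd := (hasFDerivAt_iff_isLittleO.1 hd).def hη
      obtain ⟨δ, hδ, H⟩ := Metric.eventually_nhds_iff.1 hd
      refine up _ δ (by positivity) hδ fun y hy => ?_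
      have h1 := H (y := y) (by rw [dist_comm, dist_eq_norm]; exact hy)
      have h2 : |u y - u x| ≤ (‖fderiv ℝ u x‖ + η) * ‖x - y‖ := by
        have h3 := (fderiv ℝ u x).le_opNorm (y - x)
        rw [Real.norm_eq_abs] at h1 h3
        rw [norm_sub_rev x y, add_mul]
        have : |u y - u x| ≤ |u y - u x - fderiv ℝ u x (y - x)| + |fderiv ℝ u x (y - x)| := by
          have := abs_add_le (u y - u x - fderiv ℝ u x (y - x)) (fderiv ℝ u x (y - x))
          simpa using this
        linarith
      have h3 : |u y| - |u x| ≤ |u y - u x| := abs_sub_abs_le_abs_sub _ _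
      have h4 : 0 ≤ (‖fderiv ℝ u x‖ + η) * ‖x - y‖ := by positivity
      simp only [hg, hw] at hx ⊢
      rw [max_eq_left (by linarith : 0 ≤ |u x| - c)]
      rcases max_cases (|u y| - c) 0 with h | h <;> linarith
    · rw [indicator_of_notMem (by exact hx)]
      have hx := not_le.1 hx
      have := (hwK.continuous.continuousAt (x := x)).eventually_lt_const hx
      obtain ⟨δ, hδ, H⟩ := Metric.eventually_nhds_iff.1 this
      have := up 0 δ le_rfl hδ fun y hy => by
        have h1 := H (y := y) (by rw [dist_comm, dist_eq_norm]; exact hy)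
        simp only [hg]
        rw [max_eq_right (by linarith), max_eq_right (by linarith)]; simp
      simpa [Real.zero_rpow hp0.ne'] using this
  -- conclusion
  have main : ∫⁻ x in {x : EuclideanSpace ℝ (Fin N) | c < f ‖x‖}, ENNReal.ofReal (‖fderiv ℝ F x‖ ^ p / p) ≤
      ∫⁻ x in {x | c ≤ w x}, ENNReal.ofReal (‖fderiv ℝ u x‖ ^ p / p) := by
    rw [← lintegral_indicator mF, ← lintegral_indicator mU]
    set R' := R + max 1 (m * M) with hR'
    calc _ ≤ ∫⁻ x, Filter.liminf (fun n => a n x) Filter.atTop := lintegral_mono A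
      _ ≤ Filter.liminf (fun n => ∫⁻ x, a n x) Filter.atTop := lintegral_liminf_le ham
      _ ≤ Filter.liminf (fun n => ∫⁻ x, b n x) Filter.atTop :=
          Filter.liminf_le_liminf (Filter.Eventually.of_forall hab)
      _ ≤ Filter.limsup (fun n => ∫⁻ x, b n x) Filter.atTop := Filter.liminf_le_limsup
      _ ≤ ∫⁻ x, Filter.limsup (fun n => b n x) Filter.atTop := by
          refine limsup_lintegral_le ((closedBall 0 R').indicator fun _ => ENNReal.ofReal ((K:ℝ) ^ p / p)) hbm ?_ ?_
          · intro n
            refine Filter.Eventually.of_forall fun x => ?_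
            by_cases hx : 0 < xQ m (T n) g x
            · rw [indicator_of_mem (by simpa using xQ_supp hm (hT0 n) (hT1 n) hgM hgR x hx)]
              refine ENNReal.ofReal_le_ofReal ?_
              rw [div_le_iff₀ (hT0 n)]
              have := xQ_lipup hpm (hT0 n) hgL x
              linarith
            · have : b n x = 0 := by
                simp only [hb']
                refine ENNReal.ofReal_of_nonpos ?_
                refine div_nonpos_of_nonpos_of_nonneg ?_ (hT0 n).le
                linarith [hg0 x, not_lt.1 hx]
              rw [this]; exact zero_le
          · rw [lintegral_indicator measurableSet_closedBall]
            simp only [lintegral_const, Measure.restrict_apply MeasurableSet.univ, univ_inter]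
            exact ENNReal.mul_ne_top ENNReal.ofReal_ne_top measure_closedBall_lt_top.ne
      _ ≤ _ := lintegral_mono B
  simp_rw [ENNReal.ofReal_div_of_pos hp0, div_eq_mul_inv] at main
  rw [lintegral_mul_const' _ _ (by simp [hp0]), lintegral_mul_const' _ _ (by simp [hp0])] at main
  exact (ENNReal.mul_le_mul_iff_left (by simp) (by simp [hp0])).1 main

open MeasureTheory Metric Set Real
open scoped ENNReal Pointwise

section trunc
/-- smooth truncation -/
lemma xtrunc {k c : ℝ} (hk : 0 < k) (hkc : k < c) : ∃ T : ℝ → ℝ, ContDiff ℝ (⊤ : ℕ∞) T ∧ T 0 = 0 ∧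
    (∀ s, min |s| k ≤ |T s|) ∧ (∀ s, |deriv T s| ≤ 1) ∧ (∀ s, c ≤ |s| → deriv T s = 0) := by
  let χ : ContDiffBump (0:ℝ) := ⟨k, c, hk, hkc⟩
  have hχ : ContDiff ℝ (⊤ : ℕ∞) χ := χ.contDiff
  have hχc : Continuous χ := hχ.continuous
  let T : ℝ → ℝ := fun s => ∫ x in (0:ℝ)..s, χ x
  have hT : ∀ s, HasDerivAt T (χ s) s := fun s =>
    intervalIntegral.integral_hasDerivAt_right (hχc.intervalIntegrable _ _)
      (hχc.stronglyMeasurableAtFilter _ _) hχc.continuousAt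
  have hd : deriv T = χ := funext fun s => (hT s).deriv
  have h0 : T 0 = 0 := by simp [T]
  have hmono : Monotone T := monotone_of_deriv_nonneg (fun s => (hT s).differentiableAt)
    (fun s => by rw [hd]; exact χ.nonneg)
  have hid : ∀ s, |s| ≤ k → T s = s := by
    intro s hs
    have : ∫ x in (0:ℝ)..s, χ x = ∫ x in (0:ℝ)..s, (1:ℝ) := by
      refine intervalIntegral.integral_congr fun x hx => ?_
      refine χ.one_of_mem_closedBall ?_
      rw [mem_closedBall, dist_zero_right, Real.norm_eq_abs]
      show |x| ≤ k
      rw [mem_uIcc] at hx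
      rw [abs_le] at hs ⊢
      rcases hx with h | h <;> constructor <;> linarith [hs.1, hs.2, h.1, h.2]
    simp only [T]; rw [this]; simp
  refine ⟨T, ?_, h0, ?_, ?_, ?_⟩
  · exact contDiff_infty_iff_deriv.2 ⟨fun s => (hT s).differentiableAt, by rw [hd]; exact hχ⟩
  · intro s
    rcases le_total 0 s with h | h
    · rw [abs_of_nonneg h]
      have h1 := hmono (min_le_left s k)
      rw [hid (min s k) (by rw [abs_of_nonneg (le_min h hk.le)]; exact min_le_right _ _)] at h1
      exact h1.trans (le_abs_self _)
    · rw [abs_of_nonpos h]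
      have h1 := hmono (neg_le_neg (min_le_left (-s) k))
      rw [hid (- min (-s) k) (by rw [abs_neg, abs_of_nonneg (le_min (by linarith) hk.le)]; exact min_le_right _ _), neg_neg] at h1
      refine le_trans ?_ (neg_le_abs _)
      linarith
  · intro s; rw [hd, abs_of_nonneg χ.nonneg]; exact χ.le_one
  · intro s hs; rw [hd]
    refine χ.zero_of_le_dist ?_
    rw [dist_zero_right, Real.norm_eq_abs]; exact hs
end trunc

section lam
variable {N : ℕ} {p q : ℝ} {D : Set (EuclideanSpace ℝ (Fin N))}

lemma xray_nonneg (v : EuclideanSpace ℝ (Fin N) → ℝ) : 0 ≤ rayleighQuot p q D v := by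
  unfold rayleighQuot
  exact div_nonneg (integral_nonneg fun x => by positivity)
    (Real.rpow_nonneg (integral_nonneg fun x => by positivity) _)

lemma xlam_nonneg : 0 ≤ lambdaPQ p q D := by
  refine Real.sInf_nonneg ?_
  rintro R ⟨v, _, _, _, _, rfl⟩
  exact xray_nonneg v

lemma xlam_le (hp : 0 < p) (hq : 0 < q) {v : EuclideanSpace ℝ (Fin N) → ℝ} (h1 : ContDiff ℝ (⊤ : ℕ∞) v)
    (h2 : HasCompactSupport v) (h3 : tsupport v ⊆ D) (h4 : ∃ x ∈ D, v x ≠ 0) :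
    lambdaPQ p q D * (∫ x in D, |v x| ^ q) ^ (p / q) ≤ ∫ x in D, ‖fderiv ℝ v x‖ ^ p := by
  have h : lambdaPQ p q D ≤ rayleighQuot p q D v := by
    refine csInf_le ⟨0, ?_⟩ ⟨v, h1, h2, h3, h4, rfl⟩
    rintro R ⟨v, _, _, _, _, rfl⟩
    exact xray_nonneg v
  have h5 : 0 ≤ (∫ x in D, |v x| ^ q) := integral_nonneg fun x => by positivity
  rcases h5.eq_or_lt with h6 | h6
  · rw [← h6, Real.zero_rpow (by positivity), mul_zero]
    exact integral_nonneg fun x => by positivity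
  · unfold rayleighQuot at h
    rwa [le_div_iff₀ (by positivity)] at h

lemma xint_pos (hq : 0 < q) (hD : IsOpen D) {v : EuclideanSpace ℝ (Fin N) → ℝ} (h1 : Continuous v)
    (h2 : HasCompactSupport v) (h3 : tsupport v ⊆ D) (h4 : ∃ x ∈ D, v x ≠ 0) :
    0 < ∫ x in D, |v x| ^ q := by
  obtain ⟨x, hx, hv⟩ := h4
  rw [setIntegral_eq_integral_of_forall_compl_eq_zero]
  · refine Continuous.integral_pos_of_hasCompactSupport_nonneg_nonzero (x := x) ?_ ?_ ?_ ?_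
    · exact (h1.abs).rpow_const fun _ => Or.inr hq.le
    · exact h2.comp_left (g := fun y : ℝ => |y| ^ q) (by simp [Real.zero_rpow hq.ne'])
    · intro x; positivity
    · have := abs_pos.2 hv; positivity
  · intro x hx
    have : v x = 0 := by
      by_contra h
      exact hx (h3 (subset_tsupport _ h))
    simp [this, Real.zero_rpow hq.ne']

lemma xlam_ne (hD : IsOpen D) (hne : D.Nonempty) :
    {R : ℝ | ∃ v : EuclideanSpace ℝ (Fin N) → ℝ, ContDiff ℝ (⊤ : ℕ∞) v ∧ HasCompactSupport v ∧
      tsupport v ⊆ D ∧ (∃ x ∈ D, v x ≠ 0) ∧ R = rayleighQuot p q D v}.Nonempty := by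
  obtain ⟨x, hx⟩ := hne
  obtain ⟨v, h1, h2, h3, _, h5⟩ := exists_contDiff_tsupport_subset (n := (⊤ : ℕ∞)) (hD.mem_nhds hx)
  exact ⟨_, v, h3, h2, h1, ⟨x, hx, by rw [h5]; exact one_ne_zero⟩, rfl⟩

lemma xnear (hp : 0 < p) (hq : 0 < q) (hD : IsOpen D) (hne : D.Nonempty) {ε : ℝ} (hε : 0 < ε) :
    ∃ u : EuclideanSpace ℝ (Fin N) → ℝ, ContDiff ℝ (⊤ : ℕ∞) u ∧ HasCompactSupport u ∧
      tsupport u ⊆ D ∧ (∃ x ∈ D, u x ≠ 0) ∧ (∫ x in D, |u x| ^ q) = 1 ∧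
      (∫ x in D, ‖fderiv ℝ u x‖ ^ p) ≤ lambdaPQ p q D + ε := by
  obtain ⟨R, ⟨v, h1, h2, h3, h4, rfl⟩, h5⟩ := exists_lt_of_csInf_lt (xlam_ne (p := p) (q := q) hD hne)
    (show lambdaPQ p q D < lambdaPQ p q D + ε by linarith)
  have hI := xint_pos hq hD h1.continuous h2 h3 h4
  set I := ∫ x in D, |v x| ^ q with hIdef
  set k := I ^ (-(1/q)) with hk
  have hk0 : 0 < k := by positivity
  refine ⟨fun x => k * v x, contDiff_const.mul h1, h2.mul_left, (closure_mono ?_).trans h3, ?_, ?_, ?_⟩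
  · intro x hx; simp only [Function.mem_support] at hx ⊢; exact right_ne_zero_of_mul hx
  · obtain ⟨x, hx, hv⟩ := h4
    exact ⟨x, hx, mul_ne_zero hk0.ne' hv⟩
  · simp_rw [abs_mul, abs_of_pos hk0, Real.mul_rpow hk0.le (abs_nonneg _)]
    rw [integral_const_mul, ← hIdef, hk, ← Real.rpow_mul hI.le]
    rw [show -(1/q) * q = -1 by field_simp, Real.rpow_neg_one, inv_mul_cancel₀ hI.ne']
  · have : ∀ x, ‖fderiv ℝ (fun x => k * v x) x‖ ^ p = k ^ p * ‖fderiv ℝ v x‖ ^ p := by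
      intro x
      rw [fderiv_const_mul ((h1.differentiable (by simp)) x), norm_smul, Real.norm_of_nonneg hk0.le,
        Real.mul_rpow hk0.le (norm_nonneg _)]
    simp_rw [this]
    rw [integral_const_mul]
    refine le_trans (le_of_eq ?_) h5.le
    unfold rayleighQuot
    rw [← hIdef, hk, ← Real.rpow_mul hI.le, show -(1/q) * p = -(p / q) by ring, Real.rpow_neg hI.le]
    ring

lemma xint_D {E : Type*} [NormedAddCommGroup E] [NormedSpace ℝ E] {v : EuclideanSpace ℝ (Fin N) → ℝ} (h3 : tsupport v ⊆ D)
    (H : EuclideanSpace ℝ (Fin N) → E) (h : ∀ x, x ∉ tsupport v → H x = 0) : ∫ x in D, H x = ∫ x, H x :=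
  setIntegral_eq_integral_of_forall_compl_eq_zero fun x hx => h x fun h => hx (h3 h)

lemma xgrad_zero {v : EuclideanSpace ℝ (Fin N) → ℝ} (hp : 0 < p) (x) (hx : x ∉ tsupport v) : ‖fderiv ℝ v x‖ ^ p = 0 := by
  have : fderiv ℝ v x = 0 := by
    by_contra h
    exact hx (support_fderiv_subset ℝ h)
  simp [this, Real.zero_rpow hp.ne']

lemma xgrad_int {v : EuclideanSpace ℝ (Fin N) → ℝ} (hp : 0 < p) (h1 : ContDiff ℝ (⊤ : ℕ∞) v)
    (h2 : HasCompactSupport v) : Integrable fun x => ‖fderiv ℝ v x‖ ^ p := by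
  refine Continuous.integrable_of_hasCompactSupport ?_ ?_
  · exact ((h1.continuous_fderiv (by simp)).norm).rpow_const fun _ => Or.inr hp.le
  · exact (h2.fderiv ℝ).comp_left (g := fun y => ‖y‖ ^ p) (by simp [Real.zero_rpow hp.ne'])

lemma xval_int {v : EuclideanSpace ℝ (Fin N) → ℝ} (hq : 0 < q) (h1 : Continuous v)
    (h2 : HasCompactSupport v) : Integrable fun x => |v x| ^ q := by
  refine Continuous.integrable_of_hasCompactSupport ?_ ?_
  · exact (h1.abs).rpow_const fun _ => Or.inr hq.le
  · exact h2.comp_left (g := fun y : ℝ => |y| ^ q) (by simp [Real.zero_rpow hq.ne'])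

lemma xval_min_int {v : EuclideanSpace ℝ (Fin N) → ℝ} {c : ℝ} (hc : 0 ≤ c) (hq : 0 < q) (h1 : Continuous v)
    (h2 : HasCompactSupport v) : Integrable fun x => (min |v x| c) ^ q := by
  refine Continuous.integrable_of_hasCompactSupport ?_ ?_
  · exact ((h1.abs).min continuous_const).rpow_const fun _ => Or.inr hq.le
  · exact h2.comp_left (g := fun y : ℝ => (min |y| c) ^ q) (by simp [hc, Real.zero_rpow hq.ne'])

lemma xtrunc_lam (hp : 0 < p) (hpq : p ≤ q) {u : EuclideanSpace ℝ (Fin N) → ℝ} (h1 : ContDiff ℝ (⊤ : ℕ∞) u)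
    (h2 : HasCompactSupport u) (h3 : tsupport u ⊆ D) (h4 : ∃ x ∈ D, u x ≠ 0) (h5 : (∫ x in D, |u x| ^ q) = 1)
    {c : ℝ} (hc : 0 ≤ c) :
    lambdaPQ p q D * (∫ x, (min |u x| c) ^ q) ≤ ∫ x in {x | |u x| < c}, ‖fderiv ℝ u x‖ ^ p := by
  have hq : 0 < q := lt_of_lt_of_le hp hpq
  rcases hc.eq_or_lt with rfl | hc
  · simp [Real.zero_rpow hq.ne']
    exact integral_nonneg fun x => by positivity
  set X := ∫ x in {x | |u x| < c}, ‖fderiv ℝ u x‖ ^ p with hX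
  set I := ∫ x, (min |u x| c) ^ q with hI
  have hI0 : 0 ≤ I := integral_nonneg fun x => by positivity
  have hI1 : I ≤ 1 := by
    rw [← h5, xint_D h3 _ (fun x hx => by rw [image_eq_zero_of_notMem_tsupport hx]; simp [Real.zero_rpow hq.ne'])]
    refine integral_mono (xval_min_int hc.le hq h1.continuous h2) (xval_int hq h1.continuous h2) fun x => ?_
    simp only
    gcongr
    exact min_le_left _ _
  have hl := xlam_nonneg (p := p) (q := q) (D := D)
  have mset : MeasurableSet {x | |u x| < c} := (isOpen_lt h1.continuous.abs continuous_const).measurableSet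
  have key : ∀ k : ℝ, 0 < k → k < 1 → lambdaPQ p q D * (k ^ p * I) ≤ X := by
    intro k hk hk1
    obtain ⟨T, T1, T2, T3, T4, T5⟩ := xtrunc (k := k * c) (c := c) (by positivity) (by nlinarith)
    set v := fun x => T (u x) with hv
    have v1 : ContDiff ℝ (⊤ : ℕ∞) v := T1.comp h1
    have v2 : HasCompactSupport v := h2.comp_left T2
    have v3 : tsupport v ⊆ D := (closure_mono (Function.support_comp_subset T2 u)).trans h3
    have v4 : ∃ x ∈ D, v x ≠ 0 := by
      obtain ⟨x, hx, hux⟩ := h4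
      refine ⟨x, hx, ?_⟩
      have := T3 (u x)
      have h6 : 0 < min |u x| (k * c) := lt_min (abs_pos.2 hux) (by positivity)
      exact abs_pos.1 (lt_of_lt_of_le h6 this)
    have h6 := xlam_le hp hq v1 v2 v3 v4
    rw [xint_D v3 _ (fun x hx => by rw [image_eq_zero_of_notMem_tsupport hx]; simp [Real.zero_rpow hq.ne']),
      xint_D v3 _ (fun x hx => xgrad_zero hp x hx)] at h6
    have h7 : k ^ q * I ≤ ∫ x, |v x| ^ q := by
      rw [hI, ← integral_const_mul]
      refine integral_mono ((xval_min_int hc.le hq h1.continuous h2).const_mul _) (xval_int hq v1.continuous v2) fun x => ?_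
      simp only
      rw [← Real.mul_rpow hk.le (by positivity)]
      refine Real.rpow_le_rpow (by positivity) (le_trans ?_ (T3 (u x))) hq.le
      rw [mul_min_of_nonneg _ _ hk.le]
      refine min_le_min_right _ ?_
      nlinarith [abs_nonneg (u x)]
    have h8 : ∫ x, ‖fderiv ℝ v x‖ ^ p ≤ X := by
      rw [hX, ← integral_indicator mset]
      refine integral_mono (xgrad_int hp v1 v2) ((xgrad_int hp h1 h2).indicator mset) fun x => ?_
      have hfd : fderiv ℝ v x = deriv T (u x) • fderiv ℝ u x := by
        have a1 : HasDerivAt T (deriv T (u x)) (u x) := ((T1.differentiable (by simp)) _).hasDerivAt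
        have a2 := ((h1.differentiable (by simp)) x).hasFDerivAt
        exact (a1.comp_hasFDerivAt x a2).fderiv
      by_cases hx : |u x| < c
      · rw [indicator_of_mem (by exact hx)]
        simp only
        rw [hfd, norm_smul]
        refine Real.rpow_le_rpow (by positivity) ?_ hp.le
        exact mul_le_of_le_one_left (norm_nonneg _) (T4 _)
      · rw [indicator_of_notMem (by exact hx), hfd, T5 _ (not_lt.1 hx)]
        simp [Real.zero_rpow hp.ne']
    refine le_trans ?_ (h6.trans h8)
    refine mul_le_mul_of_nonneg_left ?_ hl
    calc k ^ p * I ≤ k ^ p * I ^ (p / q) := by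
          gcongr
          exact Real.self_le_rpow_of_le_one hI0 hI1 ((div_le_one hq).2 hpq)
      _ = (k ^ q * I) ^ (p / q) := by
          rw [Real.mul_rpow (by positivity) hI0, ← Real.rpow_mul hk.le, mul_div_cancel₀ _ hq.ne']
      _ ≤ _ := by gcongr
  have hlim : Filter.Tendsto (fun k : ℝ => lambdaPQ p q D * (k ^ p * I)) (nhdsWithin 1 (Iio 1)) (nhds (lambdaPQ p q D * I)) := by
    have : Continuous fun k : ℝ => lambdaPQ p q D * (k ^ p * I) :=
      continuous_const.mul ((continuous_id.rpow_const fun _ => Or.inr hp.le).mul continuous_const)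
    have := this.tendsto 1
    simp only [Real.one_rpow, one_mul] at this
    exact this.mono_left nhdsWithin_le_nhds
  refine le_of_tendsto hlim ?_
  have : Ioo (0:ℝ) 1 ∈ nhdsWithin (1:ℝ) (Iio 1) := Ioo_mem_nhdsLT one_pos
  filter_upwards [this] with k hk
  exact key k hk.1 hk.2

end lam

open MeasureTheory Metric Set Real
open scoped ENNReal Pointwise

lemma xequi {N : ℕ} (hN : N ≠ 0) {q : ℝ} (hq : 0 < q) {w : EuclideanSpace ℝ (Fin N) → ℝ}
    (hb : ∃ M, ∀ x, w x ≤ M) (h0 : ∀ x, 0 ≤ w x) {L : NNReal} (hL : LipschitzWith L w)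
    (hc : HasCompactSupport w) {c : ℝ} (hc0 : 0 ≤ c) :
    ∫ x : EuclideanSpace ℝ (Fin N), (min (xprof w ‖x‖) c) ^ q = ∫ x, (min (w x) c) ^ q := by
  have hf := (xprof_lip hN hb hL hc).continuous
  have m1 : Measurable fun x : EuclideanSpace ℝ (Fin N) => (min (xprof w ‖x‖) c) ^ q :=
    (((hf.comp continuous_norm).min continuous_const).rpow_const fun _ => Or.inr hq.le).measurable
  have m2 : Measurable fun x => (min (w x) c) ^ q :=
    (((hL.continuous).min continuous_const).rpow_const fun _ => Or.inr hq.le).measurable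
  have p1 : ∀ x : EuclideanSpace ℝ (Fin N), 0 ≤ min (xprof w ‖x‖) c := fun x => le_min (xprof_nonneg _) hc0
  have p2 : ∀ x : EuclideanSpace ℝ (Fin N), 0 ≤ min (w x) c := fun x => le_min (h0 _) hc0
  rw [integral_eq_lintegral_of_nonneg_ae (Filter.Eventually.of_forall fun x => Real.rpow_nonneg (p1 x) _) m1.aestronglyMeasurable,
    integral_eq_lintegral_of_nonneg_ae (Filter.Eventually.of_forall fun x => Real.rpow_nonneg (p2 x) _) m2.aestronglyMeasurable]
  congr 1
  have key : ∀ s, 0 < s → volume {x : EuclideanSpace ℝ (Fin N) | s < (min (xprof w ‖x‖) c) ^ q} =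
      volume {x | s < (min (w x) c) ^ q} := by
    intro s hs
    have e : ∀ y : ℝ, 0 ≤ y → (s < y ^ q ↔ s ^ q⁻¹ < y) := fun y hy => by
      rw [Real.rpow_inv_lt_iff_of_pos hs.le hy hq]
    have e1 : {x : EuclideanSpace ℝ (Fin N) | s < (min (xprof w ‖x‖) c) ^ q} =
        {x | s ^ q⁻¹ < xprof w ‖x‖ ∧ s ^ q⁻¹ < c} := by
      ext x; simp only [mem_ofPred_eq]; rw [e _ (p1 x), lt_min_iff]
    have e2 : {x | s < (min (w x) c) ^ q} = {x | s ^ q⁻¹ < w x ∧ s ^ q⁻¹ < c} := by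
      ext x; simp only [mem_ofPred_eq]; rw [e _ (p2 x), lt_min_iff]
    rw [e1, e2]
    by_cases hsc : s ^ q⁻¹ < c
    · simp only [hsc, and_true]
      exact xprof_vol hN hb hc (by positivity)
    · simp [hsc]
  exact le_antisymm (xlayer_cmp m1 m2 fun s hs => (key s hs).le) (xlayer_cmp m2 m1 fun s hs => (key s hs).ge)

structure xGood (N : ℕ) (p q lam ε R : ℝ) (f : ℝ → ℝ) : Prop where
  lip : ∃ K : NNReal, LipschitzWith K f
  nonneg : ∀ r, 0 ≤ f r
  anti : ∀ r r', |r| ≤ |r'| → f r' ≤ f r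
  supp : ∀ r, R ≤ r → f r = 0
  int : ∫ x : EuclideanSpace ℝ (Fin N), f ‖x‖ ^ q = 1
  J : ∀ ρ, 0 ≤ ρ → (∫ x in ball (0 : EuclideanSpace ℝ (Fin N)) ρ,
      ‖fderiv ℝ (fun x : EuclideanSpace ℝ (Fin N) => f ‖x‖) x‖ ^ p) - lam * (∫ x in ball (0 : EuclideanSpace ℝ (Fin N)) ρ, f ‖x‖ ^ q)
        ≤ ε - lam * f ρ ^ q * (xom N * ρ ^ N)

lemma xgrad_bint {N : ℕ} {p : ℝ} (hp : 0 < p) {K : NNReal} {F : EuclideanSpace ℝ (Fin N) → ℝ} (hF : LipschitzWith K F)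
    {s : Set (EuclideanSpace ℝ (Fin N))} (hs : volume s ≠ ⊤) : IntegrableOn (fun x => ‖fderiv ℝ F x‖ ^ p) s := by
  refine Measure.integrableOn_of_bounded (M := (K:ℝ) ^ p) hs ?_ ?_
  · exact ((measurable_fderiv ℝ F).norm.pow_const p).aestronglyMeasurable
  · refine Filter.Eventually.of_forall fun x => ?_
    rw [Real.norm_of_nonneg (by positivity)]
    exact Real.rpow_le_rpow (norm_nonneg _) (norm_fderiv_le_of_lipschitz ℝ hF) hp.le

lemma xgood {N : ℕ} (hN : N ≠ 0) {p q : ℝ} (hp : 1 < p) (hpq : p ≤ q) {D : Set (EuclideanSpace ℝ (Fin N))}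
    {u : EuclideanSpace ℝ (Fin N) → ℝ} (h1 : ContDiff ℝ (⊤ : ℕ∞) u)
    (h2 : HasCompactSupport u) (h3 : tsupport u ⊆ D) (h4 : ∃ x ∈ D, u x ≠ 0) (h5 : (∫ x in D, |u x| ^ q) = 1)
    {ε R : ℝ} (h6 : (∫ x in D, ‖fderiv ℝ u x‖ ^ p) ≤ lambdaPQ p q D + ε) (hR : 0 ≤ R)
    (hD : volume D ≤ ENNReal.ofReal (xom N * R ^ N)) :
    xGood N p q (lambdaPQ p q D) ε R (xprof fun x => |u x|) := by
  have hp0 : 0 < p := by linarith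
  have hq : 0 < q := by linarith
  have hom := xom_pos N
  have h1' : ContDiff ℝ 1 u := h1.of_le (by exact_mod_cast le_top)
  obtain ⟨K, hK⟩ := h1'.lipschitzWith_of_hasCompactSupport h2 (by norm_num)
  set w := (fun x => |u x|) with hw
  have hwK : LipschitzWith K w := by
    have h1 : LipschitzWith 1 (fun y : ℝ => |y|) := LipschitzWith.of_dist_le_mul (by
      intro a b; rw [Real.dist_eq, Real.dist_eq]; simpa using abs_abs_sub_abs_le a b)
    have := xlipcomp h1 hK
    rwa [one_mul] at this
  have hwc : HasCompactSupport w := h2.comp_left (g := fun y : ℝ => |y|) abs_zero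
  obtain ⟨M, hM⟩ := h2.exists_bound_of_continuous h1.continuous
  have hM : ∀ x, w x ≤ M := hM
  have hM0 : 0 ≤ M := (abs_nonneg _).trans (hM 0)
  have hb : ∃ M, ∀ x, w x ≤ M := ⟨M, hM⟩
  have hfL : LipschitzWith K (xprof w) := xprof_lip hN hb hwK hwc
  have hps := fun c hc => xps hN hp h1' h2 (c := c) hc
  have heq := fun c hc => xequi hN hq hb (fun x => abs_nonneg (u x)) hwK hwc (c := c) hc
  have hFM : ∀ r, xprof w r ≤ M := by
    intro r
    refine csInf_le (xprof_bdd r) ⟨hM0, ?_⟩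
    have : {x | M < w x} = ∅ := by
      ext x; simpa using hM x
    rw [this]; simp
  have hanti : ∀ r r', |r| ≤ |r'| → xprof w r' ≤ xprof w r := fun r r' h => xprof_anti hb h
  have hnn : ∀ r, 0 ≤ xprof w r := fun r => xprof_nonneg r
  have hsupp : ∀ r, R ≤ r → xprof w r = 0 := by
    intro r hr
    refine le_antisymm ?_ (hnn r)
    by_contra! h
    rw [xprof_gal hb le_rfl] at h
    refine absurd h (not_lt.2 ?_)
    calc volume {x | 0 < w x} ≤ volume D := measure_mono fun x hx => h3 (subset_tsupport _ (by
          simpa [hw] using hx))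
      _ ≤ _ := hD
      _ ≤ _ := by
        rw [abs_of_nonneg (hR.trans hr)]; gcongr
  set f := xprof w with hf
  set F := (fun x : EuclideanSpace ℝ (Fin N) => f ‖x‖) with hF
  have hFL : LipschitzWith K F := by
    have := xlipcomp hfL (lipschitzWith_one_norm (E := EuclideanSpace ℝ (Fin N)))
    rwa [mul_one] at this
  set lam := lambdaPQ p q D with hlam
  have hint : ∫ x : EuclideanSpace ℝ (Fin N), f ‖x‖ ^ q = 1 := by
    have e1 := heq M hM0
    simp_rw [min_eq_left (hFM _), min_eq_left (hM _)] at e1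
    rw [e1, ← h5, xint_D h3 _ (fun x hx => by rw [image_eq_zero_of_notMem_tsupport hx]; simp [Real.zero_rpow hq.ne'])]
  have hFint : Integrable fun x : EuclideanSpace ℝ (Fin N) => f ‖x‖ ^ q := by
    by_contra h
    rw [integral_undef h] at hint
    norm_num at hint
  refine ⟨⟨K, hfL⟩, hnn, hanti, hsupp, hint, fun ρ hρ => ?_⟩
  set c := f ρ with hc
  have hc0 : 0 ≤ c := hnn ρ
  have mS : MeasurableSet {x : EuclideanSpace ℝ (Fin N) | c < f ‖x‖} :=
    (isOpen_lt continuous_const hFL.continuous).measurableSet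
  have mU : MeasurableSet {x | c ≤ |u x|} := (isClosed_le continuous_const hwK.continuous).measurableSet
  have hsub : {x : EuclideanSpace ℝ (Fin N) | c < f ‖x‖} ⊆ ball 0 ρ := by
    intro x hx
    rw [mem_ball, dist_zero_right]
    by_contra! h
    exact absurd hx (not_lt.2 (hanti _ _ (by rw [abs_of_nonneg hρ, abs_norm]; exact h)))
  have hge : ∀ x ∈ ball (0 : EuclideanSpace ℝ (Fin N)) ρ, c ≤ F x := by
    intro x hx
    rw [mem_ball, dist_zero_right] at hx
    exact hanti _ _ (by rw [abs_of_nonneg hρ, abs_norm]; exact hx.le)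
  have s1 : ∫ x in ball (0 : EuclideanSpace ℝ (Fin N)) ρ, ‖fderiv ℝ F x‖ ^ p =
      ∫ x in {x : EuclideanSpace ℝ (Fin N) | c < f ‖x‖}, ‖fderiv ℝ F x‖ ^ p := by
    refine setIntegral_eq_of_subset_of_forall_sdiff_eq_zero measurableSet_ball hsub ?_
    rintro x ⟨hx, hx2⟩
    have hxc : F x = c := le_antisymm (not_lt.1 hx2) (hge x hx)
    have : IsLocalMin F x := by
      filter_upwards [isOpen_ball.mem_nhds hx] with y hy
      rw [hxc]; exact hge y hy
    rw [this.fderiv_eq_zero]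
    simp [Real.zero_rpow hp0.ne']
  have s2 : ∫ x in {x : EuclideanSpace ℝ (Fin N) | c < f ‖x‖}, ‖fderiv ℝ F x‖ ^ p ≤
      ∫ x in {x | c ≤ |u x|}, ‖fderiv ℝ u x‖ ^ p := by
    have i1 : IntegrableOn (fun x => ‖fderiv ℝ F x‖ ^ p) {x : EuclideanSpace ℝ (Fin N) | c < f ‖x‖} :=
      (xgrad_bint hp0 hFL (measure_ball_lt_top (x := 0) (r := ρ)).ne).mono_set hsub
    have i2 : IntegrableOn (fun x => ‖fderiv ℝ u x‖ ^ p) {x | c ≤ |u x|} := (xgrad_int hp0 h1 h2).integrableOn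
    rw [← ENNReal.ofReal_le_ofReal_iff (integral_nonneg fun x => by positivity),
      ofReal_integral_eq_lintegral_ofReal i1 (Filter.Eventually.of_forall fun x => by positivity),
      ofReal_integral_eq_lintegral_ofReal i2 (Filter.Eventually.of_forall fun x => by positivity)]
    exact hps c hc0
  have s3 := xtrunc_lam hp0 hpq h1 h2 h3 h4 h5 hc0
  have s4 : (∫ x in {x | c ≤ |u x|}, ‖fderiv ℝ u x‖ ^ p) + ∫ x in {x | |u x| < c}, ‖fderiv ℝ u x‖ ^ p ≤ lam + ε := by
    have : {x | |u x| < c} = {x | c ≤ |u x|}ᶜ := by ext x; simp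
    rw [this, integral_add_compl mU (xgrad_int hp0 h1 h2), ← xint_D h3 _ (fun x hx => xgrad_zero hp0 x hx)]
    exact h6
  have e1 := heq c hc0
  have s5 : ∫ x : EuclideanSpace ℝ (Fin N), (min (f ‖x‖) c) ^ q =
      c ^ q * (xom N * ρ ^ N) + (1 - ∫ x in ball (0 : EuclideanSpace ℝ (Fin N)) ρ, f ‖x‖ ^ q) := by
    have hmi : Integrable fun x : EuclideanSpace ℝ (Fin N) => (min (f ‖x‖) c) ^ q := by
      refine hFint.mono ?_ (Filter.Eventually.of_forall fun x => ?_)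
      · exact ((hFL.continuous.min continuous_const).rpow_const fun _ => Or.inr hq.le).aestronglyMeasurable
      · rw [Real.norm_of_nonneg (Real.rpow_nonneg (le_min (hnn _) hc0) _), Real.norm_of_nonneg (Real.rpow_nonneg (hnn _) _)]
        exact Real.rpow_le_rpow (le_min (hnn _) hc0) (min_le_left _ _) hq.le
    rw [← integral_add_compl (measurableSet_ball (x := (0 : EuclideanSpace ℝ (Fin N))) (ε := ρ)) hmi]
    congr 1
    · rw [setIntegral_congr_fun measurableSet_ball (g := fun _ => c ^ q) (fun x hx => by
        simp only; rw [min_eq_right (hge x hx)])]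
      rw [setIntegral_const, Measure.real, xvol_ball hN _ hρ, ENNReal.toReal_ofReal (by positivity), smul_eq_mul, mul_comm]
    · rw [setIntegral_congr_fun measurableSet_ball.compl (g := fun x => f ‖x‖ ^ q) (fun x hx => by
        simp only; rw [min_eq_left]
        rw [mem_compl_iff, mem_ball, dist_zero_right, not_lt] at hx
        exact hanti _ _ (by rw [abs_of_nonneg hρ, abs_norm]; exact hx))]
      rw [← hint, ← integral_add_compl (measurableSet_ball (x := (0 : EuclideanSpace ℝ (Fin N))) (ε := ρ)) hFint]
      ring
  have hl := xlam_nonneg (p := p) (q := q) (D := D)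
  rw [s1]
  rw [← e1, s5] at s3
  have : lam * (c ^ q * (xom N * ρ ^ N) + (1 - ∫ x in ball (0 : EuclideanSpace ℝ (Fin N)) ρ, f ‖x‖ ^ q)) =
    lam * c ^ q * (xom N * ρ ^ N) + lam - lam * ∫ x in ball (0 : EuclideanSpace ℝ (Fin N)) ρ, f ‖x‖ ^ q := by ring
  linarith

open MeasureTheory Metric Set Real
open scoped ENNReal Pointwise

lemma xexps {N : ℕ} (hN : 2 ≤ N) {p q : ℝ} (hp : 1 < p) (hpq : p ≤ q) (hq : ltCritical N p q) :
    ∃ p1 q1 : ℝ, 1 ≤ p1 ∧ p1 < N ∧ p1 ≤ p ∧ q < q1 ∧ p1⁻¹ - (N:ℝ)⁻¹ ≤ q1⁻¹ := by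
  have hN' : (2:ℝ) ≤ N := by exact_mod_cast hN
  rcases lt_or_ge p N with h | h
  · refine ⟨p, N * p / (N - p), hp.le, h, le_rfl, hq h, ?_⟩
    have : 0 < (N:ℝ) - p := by linarith
    have h1 : 0 < (N:ℝ) := by linarith
    have h2 : 0 < p := by linarith
    refine le_of_eq ?_
    field_simp
  · set s := min (q + 1)⁻¹ (1 - (N:ℝ)⁻¹) with hs
    have hNi : (N:ℝ)⁻¹ ≤ 1 / 2 := by rw [one_div]; gcongr
    have hNi0 : 0 < (N:ℝ)⁻¹ := by positivity
    have hq0 : 0 < q := by linarith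
    have hs0 : 0 < s := lt_min (by positivity) (by linarith)
    have h1 : ((N:ℝ)⁻¹ + s)⁻¹ < N := by
      rw [inv_lt_comm₀ (by positivity) (by linarith)]; linarith
    refine ⟨((N:ℝ)⁻¹ + s)⁻¹, q + 1, ?_, h1, by linarith, by linarith, ?_⟩
    · rw [one_le_inv₀ (by positivity)]
      have := min_le_right (q + 1)⁻¹ (1 - (N:ℝ)⁻¹)
      linarith
    · rw [inv_inv]
      have := min_le_left (q + 1)⁻¹ (1 - (N:ℝ)⁻¹)
      linarith

lemma xsob {N : ℕ} (hN : 2 ≤ N) {p q : ℝ} (hp : 1 < p) (hpq : p ≤ q) (hq : ltCritical N p q)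
    {D : Set (EuclideanSpace ℝ (Fin N))} (hDo : IsOpen D) (hD : Bornology.IsBounded D) :
    ∃ q1 C : ℝ, q < q1 ∧ 0 ≤ C ∧ ∀ u : EuclideanSpace ℝ (Fin N) → ℝ, ContDiff ℝ (⊤ : ℕ∞) u →
      HasCompactSupport u → tsupport u ⊆ D →
      (∫ x, |u x| ^ q1) ≤ (C * (∫ x in D, ‖fderiv ℝ u x‖ ^ p) ^ p⁻¹) ^ q1 := by
  obtain ⟨p1, q1, a1, a2, a3, a4, a5⟩ := xexps hN hp hpq hq
  have hq1 : 0 < q1 := by linarith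
  have hp1 : 0 < p1 := by linarith
  have hp0 : 0 < p := by linarith
  set P : NNReal := ⟨p1, hp1.le⟩ with hP
  set Q : NNReal := ⟨q1, hq1.le⟩ with hQ
  set C0 : NNReal := eLpNormLESNormFDerivOfLeConst ℝ (volume : Measure (EuclideanSpace ℝ (Fin N))) D P Q with hC0
  have hDf : volume D ≠ ⊤ := hD.measure_lt_top.ne
  set C1 : ℝ≥0∞ := (volume D) ^ (1 / p1 - 1 / p) with hC1
  have hC1f : C1 ≠ ⊤ := by
    refine ENNReal.rpow_ne_top_of_nonneg ?_ hDf
    rw [sub_nonneg]; gcongr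
  refine ⟨q1, C0 * C1.toReal, a4, by positivity, fun u h1 h2 h3 => ?_⟩
  have hfin : Module.finrank ℝ (EuclideanSpace ℝ (Fin N)) = N := finrank_euclideanSpace_fin
  have h1' : ContDiff ℝ 1 u := h1.of_le (by exact_mod_cast le_top)
  have g := eLpNorm_le_eLpNorm_fderiv_of_le (volume : Measure (EuclideanSpace ℝ (Fin N))) (u := u) (s := D) (p := P) (q := Q) h1'
    ((subset_tsupport u).trans h3) (by exact_mod_cast a1) (by rw [hfin]; exact_mod_cast a2)
    (by rw [hfin]; exact a5) hD
  rw [← hC0] at g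
  have hcf := (h1.continuous_fderiv (by simp))
  have hsd : Function.support (fderiv ℝ u) ⊆ D := (support_fderiv_subset ℝ).trans h3
  have g2 : eLpNorm (fderiv ℝ u) P volume ≤ eLpNorm (fderiv ℝ u) (ENNReal.ofReal p) volume * C1 := by
    have hsn : Function.support (fun x => ‖fderiv ℝ u x‖) ⊆ D := by
      intro x hx
      exact hsd (by simpa using hx)
    have er : ∀ P : ℝ≥0∞, eLpNorm (fderiv ℝ u) P volume = eLpNorm (fderiv ℝ u) P (volume.restrict D) := by
      intro P
      rw [← eLpNorm_norm, ← eLpNorm_norm (μ := volume.restrict D)]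
      exact (eLpNorm_restrict_eq_of_support_subset hsn).symm
    rw [er, er]
    have := eLpNorm_le_eLpNorm_mul_rpow_measure_univ (μ := volume.restrict D) (f := fderiv ℝ u)
      (p := (P : ℝ≥0∞)) (q := ENNReal.ofReal p) (by
        rw [← ENNReal.ofReal_coe_nnreal]; exact ENNReal.ofReal_le_ofReal a3) hcf.aestronglyMeasurable
    rw [ENNReal.toReal_ofReal hp0.le, Measure.restrict_apply MeasurableSet.univ, univ_inter] at this
    exact this
  have m1 : MemLp u Q volume := h1.continuous.memLp_of_hasCompactSupport h2
  have m2 : MemLp (fderiv ℝ u) (ENNReal.ofReal p) volume := hcf.memLp_of_hasCompactSupport (h2.fderiv ℝ)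
  rw [m2.eLpNorm_eq_integral_rpow_norm (by simpa using hp0) (by simp)] at g2
  rw [m1.eLpNorm_eq_integral_rpow_norm (by
    rw [Ne, ENNReal.coe_eq_zero]; intro h; rw [← NNReal.coe_inj] at h; exact hq1.ne' h) (by simp)] at g
  rw [ENNReal.toReal_ofReal hp0.le] at g2
  have e : ((Q : ℝ≥0∞)).toReal = q1 := rfl
  rw [e] at g
  set X := ∫ x, |u x| ^ q1 with hX
  have hX' : ∫ x, ‖u x‖ ^ q1 = X := rfl
  rw [hX'] at g
  set Y := ∫ x, ‖fderiv ℝ u x‖ ^ p with hY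
  have hX0 : 0 ≤ X := integral_nonneg fun x => by positivity
  have hY0 : 0 ≤ Y := integral_nonneg fun x => by positivity
  have g3 : X ^ q1⁻¹ ≤ C0 * C1.toReal * Y ^ p⁻¹ := by
    have := g.trans (mul_le_mul_right g2 _)
    rw [← ENNReal.ofReal_toReal hC1f, ← ENNReal.ofReal_coe_nnreal, ← ENNReal.ofReal_mul (by positivity),
      ← ENNReal.ofReal_mul (by positivity), ENNReal.ofReal_le_ofReal_iff (by positivity)] at this
    linarith
  rw [xint_D h3 _ (fun x hx => xgrad_zero hp0 x hx), ← hY]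
  calc X = (X ^ q1⁻¹) ^ q1 := by rw [Real.rpow_inv_rpow hX0 hq1.ne']
    _ ≤ _ := by gcongr

lemma xpt {q q1 M y c : ℝ} (hq : 0 < q) (hqq : q < q1) (hM : 0 < M) (hc : 0 ≤ c) (hy : 0 ≤ y) :
    y ^ q ≤ c ^ q + (if c < y then M ^ q else 0) + M ^ (q - q1) * y ^ q1 := by
  have h1 : 0 ≤ c ^ q := by positivity
  have h2 : 0 ≤ M ^ (q - q1) * y ^ q1 := by positivity
  have h3 : 0 ≤ (if c < y then M ^ q else 0) := by split_ifs <;> positivity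
  by_cases hcy : c < y
  · rw [if_pos hcy]
    rcases le_total y M with h | h
    · have : y ^ q ≤ M ^ q := by gcongr
      linarith
    · have hy : 0 < y := lt_of_lt_of_le hM h
      have : y ^ q ≤ M ^ (q - q1) * y ^ q1 := by
        have e : y ^ q = y ^ (q - q1) * y ^ q1 := by rw [← Real.rpow_add hy]; ring_nf
        rw [e]
        refine mul_le_mul_of_nonneg_right ?_ (by positivity)
        exact Real.rpow_le_rpow_of_nonpos hM h (by linarith)
      have : 0 ≤ M ^ q := by positivity
      linarith
  · have : y ^ q ≤ c ^ q := by
      have := not_lt.1 hcy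
      gcongr
    linarith

lemma xnc_int {N : ℕ} {q q1 M c : ℝ} (hq : 0 < q) (hqq : q < q1) (hM : 0 < M) (hc : 0 ≤ c)
    {D : Set (EuclideanSpace ℝ (Fin N))} (hDo : IsOpen D) (hD : Bornology.IsBounded D)
    {u : EuclideanSpace ℝ (Fin N) → ℝ} (h1 : ContDiff ℝ (⊤ : ℕ∞) u)
    (h2 : HasCompactSupport u) (h3 : tsupport u ⊆ D) :
    (∫ x in D, |u x| ^ q) ≤ c ^ q * volume.real D + M ^ q * volume.real {x | c < |u x|} +
      M ^ (q - q1) * ∫ x, |u x| ^ q1 := by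
  have hq1 : 0 < q1 := by linarith
  have mU : MeasurableSet {x | c < |u x|} := (isOpen_lt continuous_const h1.continuous.abs).measurableSet
  have hfin : volume {x | c < |u x|} < ⊤ := by
    have := xV_fin (w := fun x => |u x|) (h2.comp_left (g := fun y : ℝ => |y|) abs_zero) hc
    exact this
  have hDf : volume D < ⊤ := hD.measure_lt_top
  have i1 : Integrable (D.indicator fun _ => c ^ q) := (integrable_indicator_iff hDo.measurableSet).2 (integrableOn_const hDf.ne)
  have i2 : Integrable ({x | c < |u x|}.indicator fun _ => M ^ q) := (integrable_indicator_iff mU).2 (integrableOn_const hfin.ne)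
  have i3 : Integrable fun x => M ^ (q - q1) * |u x| ^ q1 := (xval_int hq1 h1.continuous h2).const_mul _
  rw [xint_D h3 _ (fun x hx => by rw [image_eq_zero_of_notMem_tsupport hx]; simp [Real.zero_rpow hq.ne'])]
  calc ∫ x, |u x| ^ q ≤ ∫ x, (D.indicator (fun _ => c ^ q) x + {x | c < |u x|}.indicator (fun _ => M ^ q) x + M ^ (q - q1) * |u x| ^ q1) := by
        refine integral_mono (xval_int hq h1.continuous h2) ((i1.add i2).add i3) fun x => ?_
        simp only
        by_cases hx : x ∈ D
        · rw [indicator_of_mem hx]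
          have := xpt hq hqq hM hc (abs_nonneg (u x))
          simpa [indicator_apply] using this
        · have : u x = 0 := image_eq_zero_of_notMem_tsupport fun h => hx (h3 h)
          rw [this]
          simp only [abs_zero, Real.zero_rpow hq.ne', Real.zero_rpow hq1.ne', indicator_of_notMem hx, mul_zero, add_zero, zero_add]
          exact indicator_nonneg (fun _ _ => by positivity) _
    _ = _ := by
        have i12 : Integrable (fun x => D.indicator (fun _ => c ^ q) x + {x | c < |u x|}.indicator (fun _ => M ^ q) x) := i1.add i2
        rw [integral_add i12 i3, integral_add i1 i2, integral_indicator hDo.measurableSet, integral_indicator mU,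
          setIntegral_const, setIntegral_const, integral_const_mul, smul_eq_mul, smul_eq_mul]
        ring

lemma xc0 {q V : ℝ} (hq : 0 < q) (hV : 0 ≤ V) : ∃ c, 0 < c ∧ c ^ q * V ≤ 1 / 4 := by
  refine ⟨(1 / (4 * (V + 1))) ^ q⁻¹, by positivity, ?_⟩
  rw [Real.rpow_inv_rpow (by positivity) hq.ne', div_mul_eq_mul_div, one_mul, div_le_div_iff₀ (by positivity) (by positivity)]
  linarith

/-- positivity of lambda -/
lemma xlam_pos {N : ℕ} (hN : 2 ≤ N) {p q : ℝ} (hp : 1 < p) (hpq : p ≤ q) (hq : ltCritical N p q)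
    {D : Set (EuclideanSpace ℝ (Fin N))} (hDo : IsOpen D) (hD : Bornology.IsBounded D) (hne : D.Nonempty) :
    0 < lambdaPQ p q D := by
  refine lt_of_le_of_ne xlam_nonneg fun h0 => ?_
  have hp0 : 0 < p := by linarith
  have hq0 : 0 < q := by linarith
  obtain ⟨q1, C, hqq, hC, hS⟩ := xsob hN hp hpq hq hDo hD
  have hq1 : 0 < q1 := by linarith
  obtain ⟨c, hc, hcV⟩ := xc0 (V := volume.real D) hq0 measureReal_nonneg
  have hlim : Filter.Tendsto (fun ε : ℝ => c ^ (q - q1) * (C * ε ^ p⁻¹) ^ q1) (nhdsWithin 0 (Ioi 0)) (nhds 0) := by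
    have h1 : Continuous fun ε : ℝ => ε ^ p⁻¹ := continuous_id.rpow_const fun _ => Or.inr (by positivity)
    have : Continuous (fun ε : ℝ => c ^ (q - q1) * (C * ε ^ p⁻¹) ^ q1) :=
      continuous_const.mul ((continuous_const.mul h1).rpow_const fun _ => Or.inr hq1.le)
    have := this.tendsto 0
    rw [Real.zero_rpow (by positivity), mul_zero, Real.zero_rpow hq1.ne', mul_zero] at this
    exact this.mono_left nhdsWithin_le_nhds
  obtain ⟨ε, h1, h2⟩ := ((hlim.eventually_le_const (show (0:ℝ) < 1 / 4 by norm_num)).and self_mem_nhdsWithin).exists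
  obtain ⟨u, u1, u2, u3, u4, u5, u6⟩ := xnear (p := p) (q := q) hp0 hq0 hDo hne (ε := ε) h2
  rw [← h0, zero_add] at u6
  have h3 := hS u u1 u2 u3
  have h4 : (∫ x, |u x| ^ q1) ≤ (C * ε ^ p⁻¹) ^ q1 := by
    refine h3.trans ?_
    have : 0 ≤ ∫ x in D, ‖fderiv ℝ u x‖ ^ p := integral_nonneg fun x => by positivity
    gcongr
  have h5 : (∫ x in D, |u x| ^ q) ≤ c ^ q * volume.real D + c ^ (q - q1) * ∫ x, |u x| ^ q1 := by
    have hDf : volume D < ⊤ := hD.measure_lt_top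
    have i1 : Integrable (D.indicator fun _ => c ^ q) := (integrable_indicator_iff hDo.measurableSet).2 (integrableOn_const hDf.ne)
    have i3 : Integrable fun x => c ^ (q - q1) * |u x| ^ q1 := (xval_int hq1 u1.continuous u2).const_mul _
    rw [xint_D u3 _ (fun x hx => by rw [image_eq_zero_of_notMem_tsupport hx]; simp [Real.zero_rpow hq0.ne'])]
    calc ∫ x, |u x| ^ q ≤ ∫ x, (D.indicator (fun _ => c ^ q) x + c ^ (q - q1) * |u x| ^ q1) := by
          refine integral_mono (xval_int hq0 u1.continuous u2) (i1.add i3) fun x => ?_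
          simp only
          by_cases hx : x ∈ D
          · rw [indicator_of_mem hx]
            rcases le_total |u x| c with h | h
            · have : |u x| ^ q ≤ c ^ q := by gcongr
              have : 0 ≤ c ^ (q - q1) * |u x| ^ q1 := by positivity
              linarith
            · have hy : 0 < |u x| := lt_of_lt_of_le hc h
              have e : |u x| ^ q = |u x| ^ (q - q1) * |u x| ^ q1 := by rw [← Real.rpow_add hy]; ring_nf
              have : |u x| ^ q ≤ c ^ (q - q1) * |u x| ^ q1 := by
                rw [e]
                refine mul_le_mul_of_nonneg_right ?_ (by positivity)
                exact Real.rpow_le_rpow_of_nonpos hc h (by linarith)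
              have : 0 ≤ c ^ q := by positivity
              linarith
          · have : u x = 0 := image_eq_zero_of_notMem_tsupport fun h => hx (u3 h)
            rw [this]
            simp [Real.zero_rpow hq0.ne', Real.zero_rpow hq1.ne', indicator_of_notMem hx]
      _ = _ := by
          rw [integral_add i1 i3, integral_indicator hDo.measurableSet,
            setIntegral_const, integral_const_mul, smul_eq_mul]
          ring
  have h6 : c ^ (q - q1) * ∫ x, |u x| ^ q1 ≤ c ^ (q - q1) * (C * ε ^ p⁻¹) ^ q1 := by gcongr
  rw [u5] at h5
  linarith

/-- nonconcentration -/
lemma xnonconc {N : ℕ} (hN : 2 ≤ N) {p q : ℝ} (hp : 1 < p) (hpq : p ≤ q) (hq : ltCritical N p q)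
    {D : Set (EuclideanSpace ℝ (Fin N))} (hDo : IsOpen D) (hD : Bornology.IsBounded D) (A : ℝ) (hA : 0 ≤ A) :
    ∃ c0 r1 : ℝ, 0 < c0 ∧ 0 < r1 ∧ ∀ u : EuclideanSpace ℝ (Fin N) → ℝ, ContDiff ℝ (⊤ : ℕ∞) u →
      HasCompactSupport u → tsupport u ⊆ D → (∫ x in D, |u x| ^ q) = 1 →
      (∫ x in D, ‖fderiv ℝ u x‖ ^ p) ≤ A → c0 ≤ xprof (fun x => |u x|) r1 := by
  have hp0 : 0 < p := by linarith
  have hq0 : 0 < q := by linarith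
  obtain ⟨q1, C, hqq, hC, hS⟩ := xsob hN hp hpq hq hDo hD
  have hq1 : 0 < q1 := by linarith
  obtain ⟨c, hc, hcV⟩ := xc0 (V := volume.real D) hq0 measureReal_nonneg
  set B := (C * A ^ p⁻¹) ^ q1 with hB
  have hB0 : 0 ≤ B := by positivity
  obtain ⟨M', hM', hMB⟩ := xc0 (q := q1 - q) (V := B) (by linarith) hB0
  set M := M'⁻¹ with hM
  have hM0 : 0 < M := by positivity
  have hMB' : M ^ (q - q1) * B ≤ 1 / 4 := by
    rw [hM, Real.inv_rpow hM'.le, ← Real.rpow_neg hM'.le, neg_sub]; exact hMB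
  have hom := xom_pos N
  set v0 := 1 / (4 * M ^ q) with hv0
  have hv0' : 0 < v0 := by positivity
  set r1 := (v0 / xom N) ^ ((N : ℝ)⁻¹) with hr1
  have hr1' : r1 ^ N = v0 / xom N := Real.rpow_inv_natCast_pow (by positivity) (by omega)
  have hr0 : 0 < r1 := by positivity
  refine ⟨c, r1, hc, hr0, fun u u1 u2 u3 u5 u6 => ?_⟩
  have h3 := hS u u1 u2 u3
  have h4 : (∫ x, |u x| ^ q1) ≤ B := by
    refine h3.trans ?_
    have : 0 ≤ ∫ x in D, ‖fderiv ℝ u x‖ ^ p := integral_nonneg fun x => by positivity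
    rw [hB]
    gcongr
  have h5 := xnc_int hq0 hqq hM0 hc.le hDo hD u1 u2 u3
  rw [u5] at h5
  have h6 : M ^ (q - q1) * ∫ x, |u x| ^ q1 ≤ M ^ (q - q1) * B := by gcongr
  have hfin : volume {x | c < |u x|} < ⊤ := by
    have := xV_fin (w := fun x => |u x|) (u2.comp_left (g := fun y : ℝ => |y|) abs_zero) hc.le
    exact this
  have h7 : v0 < volume.real {x | c < |u x|} := by
    rw [hv0, div_lt_iff₀ (by positivity)]
    linarith
  obtain ⟨K, hK⟩ := u2.exists_bound_of_continuous u1.continuous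
  have hK' : ∀ x, |u x| ≤ K := hK
  refine le_of_lt ((xprof_gal (w := fun x => |u x|) ⟨K, hK'⟩ hc.le).2 ?_)
  rw [abs_of_pos hr0, hr1', mul_div_cancel₀ _ hom.ne', ENNReal.ofReal_lt_iff_lt_toReal hv0'.le hfin.ne]
  exact h7

open MeasureTheory Metric Set Real
open scoped ENNReal Pointwise

lemma xpolar {N : ℕ} (hN0 : N ≠ 0) (G : EuclideanSpace ℝ (Fin N) → ℝ) :
    ∫ x, G x = ∫ z : (sphere (0 : EuclideanSpace ℝ (Fin N)) 1) × (Ioi (0:ℝ)), G ((z.2 : ℝ) • (z.1 : EuclideanSpace ℝ (Fin N)))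
      ∂((volume : Measure (EuclideanSpace ℝ (Fin N))).toSphere.prod
        (Measure.volumeIoiPow (Module.finrank ℝ (EuclideanSpace ℝ (Fin N)) - 1))) := by
  have h0 := Nat.pos_of_ne_zero hN0
  have : Nontrivial (EuclideanSpace ℝ (Fin N)) := by
    have : Nonempty (Fin N) := ⟨⟨0, h0⟩⟩
    infer_instance
  set μ : Measure (EuclideanSpace ℝ (Fin N)) := volume with hμ
  calc ∫ x, G x ∂μ = ∫ x : ({(0)}ᶜ : Set (EuclideanSpace ℝ (Fin N))), G x.1 ∂(μ.comap (↑)) := by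
        rw [integral_subtype_comap (measurableSet_singleton _).compl fun x ↦ G x, restrict_compl_singleton]
    _ = _ := by
        rw [← μ.measurePreserving_homeomorphUnitSphereProd.integral_comp (Homeomorph.measurableEmbedding _)]
        refine integral_congr_ae (Filter.Eventually.of_forall fun x => ?_)
        have hx : ‖(x : EuclideanSpace ℝ (Fin N))‖ ≠ 0 := norm_ne_zero_iff.2 (fun h => x.2 h)
        simp [smul_smul, hx]

lemma xpolar_int {N : ℕ} (h0 : N ≠ 0) {G : EuclideanSpace ℝ (Fin N) → ℝ} (hG : Integrable G) :
    Integrable (fun z : (sphere (0 : EuclideanSpace ℝ (Fin N)) 1) × (Ioi (0:ℝ)) => G ((z.2 : ℝ) • (z.1 : EuclideanSpace ℝ (Fin N))))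
      ((volume : Measure (EuclideanSpace ℝ (Fin N))).toSphere.prod
        (Measure.volumeIoiPow (Module.finrank ℝ (EuclideanSpace ℝ (Fin N)) - 1))) := by
  have : Nontrivial (EuclideanSpace ℝ (Fin N)) := by
    have : Nonempty (Fin N) := ⟨⟨0, Nat.pos_of_ne_zero h0⟩⟩
    infer_instance
  set μ : Measure (EuclideanSpace ℝ (Fin N)) := volume with hμ
  rw [← μ.measurePreserving_homeomorphUnitSphereProd.integrable_comp_emb (Homeomorph.measurableEmbedding _)]
  have h1 : Integrable (fun x : ({(0)}ᶜ : Set (EuclideanSpace ℝ (Fin N))) => G x.1) (μ.comap (↑)) := by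
    have := hG.integrableOn (s := ({(0)}ᶜ : Set (EuclideanSpace ℝ (Fin N))))
    rw [integrableOn_iff_comap_subtypeVal (measurableSet_singleton _).compl] at this
    exact this
  refine h1.congr (Filter.Eventually.of_forall fun x => ?_)
  have hx : ‖(x : EuclideanSpace ℝ (Fin N))‖ ≠ 0 := norm_ne_zero_iff.2 (fun h => x.2 h)
  simp [smul_smul, hx]

lemma xray {T : Set ℝ} (hT : IsOpen T) (hb : ∃ M, ∀ t ∈ T, t ≤ M)
    (hs : ∀ t ∈ T, 0 < t → ∀ s, 0 < s → s ≤ t → s ∈ T) : ∃ ρ, 0 ≤ ρ ∧ ∀ t, 0 < t → (t ∈ T ↔ t < ρ) := by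
  by_cases hne : (T ∩ Ioi 0).Nonempty
  · have hbd : BddAbove (T ∩ Ioi 0) := by
      obtain ⟨M, hM⟩ := hb
      exact ⟨M, fun t ht => hM t ht.1⟩
    refine ⟨sSup (T ∩ Ioi 0), ?_, fun t ht => ⟨fun h => ?_, fun h => ?_⟩⟩
    · obtain ⟨t, ht⟩ := hne
      exact (le_of_lt ht.2).trans (le_csSup hbd ht)
    · obtain ⟨δ, hδ, hball⟩ := Metric.isOpen_iff.1 hT t h
      have : t + δ / 2 ∈ T := hball (by rw [mem_ball, Real.dist_eq, add_sub_cancel_left, abs_of_pos (by positivity)]; linarith)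
      have h2 := le_csSup hbd ⟨this, show 0 < t + δ / 2 by linarith⟩
      linarith
    · obtain ⟨s, hs1, hs2⟩ := exists_lt_of_lt_csSup hne h
      exact hs s hs1.1 hs1.2 t ht hs2.le
  · refine ⟨0, le_rfl, fun t ht => ⟨fun h => absurd ⟨t, h, ht⟩ hne, fun h => absurd h (not_lt.2 ht.le)⟩⟩

lemma xstar {N : ℕ} (h0 : N ≠ 0) {K : Set (EuclideanSpace ℝ (Fin N))} (hK : IsOpen K) (hKb : Bornology.IsBounded K)
    (hs : ∀ x ∈ K, ∀ t : ℝ, 0 < t → t ≤ 1 → t • x ∈ K) {H : ℝ → ℝ}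
    (hi : IntegrableOn (fun x : EuclideanSpace ℝ (Fin N) => H ‖x‖) K) {ε : ℝ}
    (hH : ∀ ρ, 0 ≤ ρ → ∫ x in ball (0 : EuclideanSpace ℝ (Fin N)) ρ, H ‖x‖ ≤ ε) :
    ∫ x in K, H ‖x‖ ≤ ε := by
  have : Nontrivial (EuclideanSpace ℝ (Fin N)) := by
    have : Nonempty (Fin N) := ⟨⟨0, Nat.pos_of_ne_zero h0⟩⟩
    infer_instance
  set σ := (volume : Measure (EuclideanSpace ℝ (Fin N))).toSphere with hσ
  set ν := Measure.volumeIoiPow (Module.finrank ℝ (EuclideanSpace ℝ (Fin N)) - 1) with hν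
  have hσ0 : 0 < σ.real univ := by
    rw [hσ, Measure.toSphere_real_apply_univ]
    have h1 : 0 < volume.real (ball (0 : EuclideanSpace ℝ (Fin N)) 1) :=
      ENNReal.toReal_pos (measure_ball_pos _ _ one_pos).ne' measure_ball_lt_top.ne
    have h2 : 0 < Module.finrank ℝ (EuclideanSpace ℝ (Fin N)) := Module.finrank_pos
    positivity
  have hnorm : ∀ z : (sphere (0 : EuclideanSpace ℝ (Fin N)) 1) × (Ioi (0:ℝ)),
      ‖(z.2 : ℝ) • (z.1 : EuclideanSpace ℝ (Fin N))‖ = z.2 := by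
    intro z
    have h1 : (0:ℝ) < z.2 := z.2.2
    rw [norm_smul, norm_eq_of_mem_sphere, mul_one, Real.norm_of_nonneg h1.le]
  have hball : ∀ ρ, 0 ≤ ρ → ∫ t : Ioi (0:ℝ), (Iio ρ).indicator H t ∂ν ≤ ε / σ.real univ := by
    intro ρ hρ
    have h1 := hH ρ hρ
    rw [← integral_indicator measurableSet_ball, xpolar h0] at h1
    rw [le_div_iff₀ hσ0, mul_comm]
    refine le_of_eq_of_le ?_ h1
    have := integral_fun_snd (μ := σ) (ν := ν) (fun t : Ioi (0:ℝ) => (Iio ρ).indicator H t)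
    rw [smul_eq_mul] at this
    rw [← this]
    refine integral_congr_ae (Filter.Eventually.of_forall fun z => ?_)
    have hz := hnorm z
    simp only
    by_cases hzρ : (z.2 : ℝ) < ρ
    · rw [indicator_of_mem (show (z.2 : ℝ) ∈ Iio ρ from hzρ), indicator_of_mem (by rw [mem_ball_zero_iff, hz]; exact hzρ), hz]
    · rw [indicator_of_notMem (show (z.2 : ℝ) ∉ Iio ρ from hzρ), indicator_of_notMem (by rw [mem_ball_zero_iff, hz]; exact hzρ)]
  have hG : Integrable (K.indicator fun x : EuclideanSpace ℝ (Fin N) => H ‖x‖) := (integrable_indicator_iff hK.measurableSet).2 hi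
  rw [← integral_indicator hK.measurableSet, xpolar h0, integral_prod _ (xpolar_int h0 hG)]
  have hc : ∫ _θ : sphere (0 : EuclideanSpace ℝ (Fin N)) 1, ε / σ.real univ ∂σ = ε := by
    rw [integral_const, smul_eq_mul]; field_simp
  rw [← hc]
  refine integral_mono (xpolar_int h0 hG).integral_prod_left (integrable_const _) fun θ => ?_
  simp only
  obtain ⟨M, hM⟩ := hKb.exists_norm_le
  obtain ⟨ρ, hρ, hT⟩ := xray (T := {t : ℝ | t • (θ : EuclideanSpace ℝ (Fin N)) ∈ K}) (hK.preimage (by fun_prop)) ⟨M, fun t ht => by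
      have := hM _ ht
      rw [norm_smul, norm_eq_of_mem_sphere, mul_one] at this
      exact (le_abs_self t).trans this⟩ (fun t ht h1 s h2 h3 => by
      have := hs _ ht (s / t) (by positivity) (by rw [div_le_one h1]; exact h3)
      rw [smul_smul, div_mul_cancel₀ _ h1.ne'] at this
      exact this)
  refine le_of_eq_of_le ?_ (hball ρ hρ)
  refine integral_congr_ae (Filter.Eventually.of_forall fun t => ?_)
  have h1 : (t : ℝ) • (θ : EuclideanSpace ℝ (Fin N)) ∈ K ↔ (t : ℝ) < ρ := hT t t.2
  have h2 := hnorm (θ, t)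
  simp only at h2
  simp only
  by_cases hzρ : (t : ℝ) < ρ
  · rw [indicator_of_mem (show (t : ℝ) ∈ Iio ρ from hzρ), indicator_of_mem (h1.2 hzρ), h2]
  · rw [indicator_of_notMem (show (t : ℝ) ∉ Iio ρ from hzρ), indicator_of_notMem (fun h => hzρ (h1.1 h))]

lemma xradial {N : ℕ} {f : ℝ → ℝ} {x y : EuclideanSpace ℝ (Fin N)} (h : ‖x‖ = ‖y‖) :
    ‖fderiv ℝ (fun x : EuclideanSpace ℝ (Fin N) => f ‖x‖) x‖ = ‖fderiv ℝ (fun x : EuclideanSpace ℝ (Fin N) => f ‖x‖) y‖ := by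
  set L := (Submodule.span ℝ {x - y})ᗮ.reflection with hL
  have hLx : L x = y := Submodule.reflection_sub h
  have h1 : (fun x : EuclideanSpace ℝ (Fin N) => f ‖x‖) = (fun x : EuclideanSpace ℝ (Fin N) => f ‖x‖) ∘ L := by
    ext z; simp
  have h2 := L.toContinuousLinearEquiv.comp_right_fderiv (f := fun x : EuclideanSpace ℝ (Fin N) => f ‖x‖) (x := x)
  have h3 : ((fun x : EuclideanSpace ℝ (Fin N) => f ‖x‖) ∘ L.toContinuousLinearEquiv) = (fun x : EuclideanSpace ℝ (Fin N) => f ‖x‖) := h1.symm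
  rw [h3] at h2
  rw [h2]
  have h4 : L.toContinuousLinearEquiv x = y := hLx
  rw [h4]
  exact ContinuousLinearMap.opNorm_comp_linearIsometryEquiv _ L

open MeasureTheory Metric Set Real
open scoped ENNReal Pointwise

lemma xFlip {N : ℕ} {f : ℝ → ℝ} (h : ∃ K : NNReal, LipschitzWith K f) :
    ∃ K : NNReal, LipschitzWith K (fun x : EuclideanSpace ℝ (Fin N) => f ‖x‖) := by
  obtain ⟨K, hK⟩ := h
  exact ⟨K * 1, hK.comp lipschitzWith_one_norm⟩

lemma xFq_int {N : ℕ} {f : ℝ → ℝ} {q : ℝ} (hq : 0 ≤ q) (h : ∃ K : NNReal, LipschitzWith K f) (h0 : ∀ r, 0 ≤ f r)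
    (h1 : ∀ r r', |r| ≤ |r'| → f r' ≤ f r)
    {s : Set (EuclideanSpace ℝ (Fin N))} (hs : volume s ≠ ⊤) : IntegrableOn (fun x : EuclideanSpace ℝ (Fin N) => f ‖x‖ ^ q) s := by
  obtain ⟨K, hK⟩ := h
  refine Measure.integrableOn_of_bounded (M := (f 0) ^ q) hs ?_ ?_
  · have : Continuous (fun x : EuclideanSpace ℝ (Fin N) => f ‖x‖ ^ q) :=
      (hK.continuous.comp continuous_norm).rpow_const fun _ => Or.inr hq
    exact this.aestronglyMeasurable
  · refine Filter.Eventually.of_forall fun x => ?_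
    have := h0 ‖x‖
    rw [Real.norm_of_nonneg (by positivity)]
    exact Real.rpow_le_rpow this (h1 _ _ (by simp)) hq

lemma xball_inter {N : ℕ} (hN : N ≠ 0) {a b : ℝ} (ha : 0 ≤ a) (hb : 0 ≤ b) :
    volume.real (ball (0 : EuclideanSpace ℝ (Fin N)) a ∩ ball 0 b) = xom N * (min a b) ^ N := by
  have : ball (0 : EuclideanSpace ℝ (Fin N)) a ∩ ball 0 b = ball 0 (min a b) := by
    ext x; simp
  rw [this, measureReal_def, xvol_ball hN _ (le_min ha hb), ENNReal.toReal_ofReal]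
  have := (xom_pos N).le
  have := le_min ha hb
  positivity

lemma xstarB {N : ℕ} (hN : N ≠ 0) {p q lam ε R : ℝ} {f : ℝ → ℝ} (hp : 0 < p) (hq : 0 < q) (hl : 0 ≤ lam)
    (hf : xGood N p q lam ε R f) {K : Set (EuclideanSpace ℝ (Fin N))} (hK : IsOpen K) (hKb : Bornology.IsBounded K)
    (hs : ∀ x ∈ K, ∀ t : ℝ, 0 < t → t ≤ 1 → t • x ∈ K) {c0 r' r1 κ : ℝ} (hr' : 0 ≤ r') (hrr : 2 * r' ^ N = r1 ^ N)
    (hr1 : r' ≤ r1) (hc0 : 0 ≤ c0) (hcf : c0 ≤ f r1) (hκ : 0 ≤ κ) (hκ' : κ ≤ lam * c0 ^ q) :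
    (∫ x in K, ‖fderiv ℝ (fun x : EuclideanSpace ℝ (Fin N) => f ‖x‖) x‖ ^ p) ≤
      lam * (∫ x in K, f ‖x‖ ^ q) + ε - κ * (2 * volume.real (K ∩ ball 0 r') - volume.real (K ∩ ball 0 r1)) := by
  obtain ⟨L, hL⟩ := xFlip (N := N) hf.lip
  have h00 : 0 < N := Nat.pos_of_ne_zero hN
  set e : EuclideanSpace ℝ (Fin N) := EuclideanSpace.single ⟨0, h00⟩ 1 with he
  have hen : ‖e‖ = 1 := by simp [he]
  set F : EuclideanSpace ℝ (Fin N) → ℝ := fun x => f ‖x‖ with hF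
  set H : ℝ → ℝ := fun r => ‖fderiv ℝ F (r • e)‖ ^ p - lam * f r ^ q +
    κ * (2 * (Iio r').indicator (fun _ => (1:ℝ)) r - (Iio r1).indicator (fun _ => (1:ℝ)) r) with hH
  have hHx : ∀ x : EuclideanSpace ℝ (Fin N), H ‖x‖ = ‖fderiv ℝ F x‖ ^ p - lam * f ‖x‖ ^ q +
    κ * (2 * (ball (0 : EuclideanSpace ℝ (Fin N)) r').indicator (fun _ => (1:ℝ)) x - (ball (0 : EuclideanSpace ℝ (Fin N)) r1).indicator (fun _ => (1:ℝ)) x) := by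
    intro x
    have h1 : ‖fderiv ℝ F (‖x‖ • e)‖ = ‖fderiv ℝ F x‖ := xradial (by rw [norm_smul, hen]; simp)
    have h2 : ∀ r, (Iio r).indicator (fun _ => (1:ℝ)) ‖x‖ = (ball (0 : EuclideanSpace ℝ (Fin N)) r).indicator (fun _ => (1:ℝ)) x := by
      intro r
      by_cases h : ‖x‖ < r
      · rw [indicator_of_mem (show ‖x‖ ∈ Iio r from h), indicator_of_mem (by simpa using h)]
      · rw [indicator_of_notMem (show ‖x‖ ∉ Iio r from h), indicator_of_notMem (by simpa using h)]
    simp only [hH, h1, h2]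
  have ib : ∀ (s : Set (EuclideanSpace ℝ (Fin N))) (r : ℝ), volume s ≠ ⊤ → IntegrableOn ((ball (0 : EuclideanSpace ℝ (Fin N)) r).indicator (fun _ => (1:ℝ))) s := by
    intro s r h
    exact (integrableOn_const (C := (1:ℝ)) h).indicator measurableSet_ball
  have hint : ∀ s : Set (EuclideanSpace ℝ (Fin N)), MeasurableSet s → volume s ≠ ⊤ →
      IntegrableOn (fun x : EuclideanSpace ℝ (Fin N) => H ‖x‖) s ∧ ∫ x in s, H ‖x‖ = (∫ x in s, ‖fderiv ℝ F x‖ ^ p) - lam * (∫ x in s, f ‖x‖ ^ q) +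
        κ * (2 * volume.real (s ∩ ball 0 r') - volume.real (s ∩ ball 0 r1)) := by
    intro s ms hsf
    have i1 := xgrad_bint hp hL hsf
    have i2 : IntegrableOn (fun x : EuclideanSpace ℝ (Fin N) => lam * f ‖x‖ ^ q) s := (xFq_int hq.le hf.lip hf.nonneg hf.anti hsf).const_mul lam
    have i3 : IntegrableOn (fun x => 2 * (ball (0 : EuclideanSpace ℝ (Fin N)) r').indicator (fun _ => (1:ℝ)) x) s := (ib s r' hsf).const_mul 2
    have i4 := ib s r1 hsf
    have i34 : IntegrableOn (fun x => κ * (2 * (ball (0 : EuclideanSpace ℝ (Fin N)) r').indicator (fun _ => (1:ℝ)) x - (ball (0 : EuclideanSpace ℝ (Fin N)) r1).indicator (fun _ => (1:ℝ)) x)) s :=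
      (i3.sub i4).const_mul κ
    have i12 : IntegrableOn (fun x : EuclideanSpace ℝ (Fin N) => ‖fderiv ℝ F x‖ ^ p - lam * f ‖x‖ ^ q) s := i1.sub i2
    have eI : ∀ r, ∫ x in s, (ball (0 : EuclideanSpace ℝ (Fin N)) r).indicator (fun _ => (1:ℝ)) x = volume.real (s ∩ ball 0 r) := by
      intro r
      rw [setIntegral_indicator measurableSet_ball]; simp
    simp_rw [hHx]
    refine ⟨i12.add i34, ?_⟩
    rw [integral_add i12 i34, integral_sub i1 i2, integral_const_mul, integral_const_mul, integral_sub i3 i4, integral_const_mul, eI, eI]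
  have hKf : volume K ≠ ⊤ := hKb.measure_lt_top.ne
  have key := xstar hN hK hKb hs (hint K hK.measurableSet hKf).1 (ε := ε) ?_
  · rw [(hint K hK.measurableSet hKf).2] at key
    linarith
  · intro ρ hρ
    rw [(hint _ measurableSet_ball measure_ball_lt_top.ne).2, xball_inter hN hρ hr', xball_inter hN hρ (hr'.trans hr1)]
    have hJ := hf.J ρ hρ
    have hom := xom_pos N
    rcases le_total ρ r1 with h | h
    · rw [min_eq_left h]
      have h1 : c0 ≤ f ρ := hcf.trans (hf.anti _ _ (by rw [abs_of_nonneg hρ, abs_of_nonneg (hr'.trans hr1)]; exact h))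
      have h2 : κ ≤ lam * f ρ ^ q := hκ'.trans (by gcongr)
      have h3 : min ρ r' ^ N ≤ ρ ^ N := by
        have := le_min hρ hr'
        gcongr; exact min_le_left _ _
      have h4 : κ * (xom N * ρ ^ N) ≤ lam * f ρ ^ q * (xom N * ρ ^ N) := by gcongr
      have h5 : κ * (xom N * min ρ r' ^ N) ≤ κ * (xom N * ρ ^ N) := by gcongr
      linarith
    · rw [min_eq_right h, min_eq_right (hr1.trans h)]
      have h1 : 2 * (xom N * r' ^ N) - xom N * r1 ^ N = 0 := by rw [← hrr]; ring
      rw [h1]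
      have h2 : 0 ≤ f ρ := hf.nonneg ρ
      have : 0 ≤ lam * f ρ ^ q * (xom N * ρ ^ N) := by positivity
      linarith

open MeasureTheory Metric Set Real
open scoped ENNReal Pointwise

lemma xtr {N : ℕ} (Ω : Set (EuclideanSpace ℝ (Fin N))) (a : EuclideanSpace ℝ (Fin N)) (G : EuclideanSpace ℝ (Fin N) → ℝ) :
    ∫ x in Ω, G (x - a) = ∫ y in (fun y => y + a) ⁻¹' Ω, G y := by
  have := (measurePreserving_add_right (volume : Measure (EuclideanSpace ℝ (Fin N))) a).setIntegral_preimage_emb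
    (measurableEmbedding_addRight a) (fun x => G (x - a)) Ω
  simpa using this.symm

lemma xtr_int {N : ℕ} {Ω : Set (EuclideanSpace ℝ (Fin N))} {a : EuclideanSpace ℝ (Fin N)} {G : EuclideanSpace ℝ (Fin N) → ℝ}
    (h : IntegrableOn G ((fun y => y + a) ⁻¹' Ω)) : IntegrableOn (fun x => G (x - a)) Ω := by
  have := (measurePreserving_add_right (volume : Measure (EuclideanSpace ℝ (Fin N))) a).integrableOn_comp_preimage
    (measurableEmbedding_addRight a) (f := fun x => G (x - a)) (s := Ω)
  rw [← this]
  refine h.congr_fun_ae (Filter.Eventually.of_forall fun x => ?_)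
  simp

lemma xfdm {N : ℕ} (c : ℝ) (g : EuclideanSpace ℝ (Fin N) → ℝ) (x) :
    ‖fderiv ℝ (fun x => c * g x) x‖ ≤ |c| * ‖fderiv ℝ g x‖ := by
  by_cases hg : DifferentiableAt ℝ g x
  · rw [fderiv_const_mul hg, norm_smul, Real.norm_eq_abs]
  · by_cases hc : c = 0
    · simp [hc]
    · rw [fderiv_zero_of_not_differentiableAt]
      · simp; positivity
      · intro h
        apply hg
        have := h.const_mul c⁻¹
        simpa [← mul_assoc, inv_mul_cancel₀ hc] using this

lemma xjensen {p q a b B0 B1 : ℝ} (hp : 0 < p) (hpq : p ≤ q) (ha : 0 ≤ a) (hb : 0 ≤ b) (h0 : 0 ≤ B0) (h1 : 0 ≤ B1) (h : B0 + B1 ≤ 1) :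
    a ^ p * B0 + b ^ p * B1 ≤ (a ^ q * B0 + b ^ q * B1) ^ (p / q) := by
  have hq : 0 < q := by linarith
  have key := Real.rpow_arith_mean_le_arith_mean_rpow (Finset.univ : Finset (Fin 3)) ![B0, B1, 1 - B0 - B1] ![a ^ p, b ^ p, 0]
    (by intro i _; fin_cases i <;> simp <;> linarith) (by simp [Fin.sum_univ_three])
    (by intro i _; fin_cases i <;> simp <;> positivity) (p := q / p) (by rw [le_div_iff₀ hp]; linarith)
  simp only [Fin.sum_univ_three, Matrix.cons_val_zero, Matrix.cons_val_one, Matrix.cons_val, mul_zero, add_zero] at key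
  rw [Real.zero_rpow (by positivity), mul_zero, add_zero, ← Real.rpow_mul ha, ← Real.rpow_mul hb, mul_div_cancel₀ _ hp.ne'] at key
  have h5 : 0 ≤ B0 * a ^ p + B1 * b ^ p := by positivity
  have h6 := Real.rpow_le_rpow (by positivity) key (show 0 ≤ p / q by positivity)
  rw [← Real.rpow_mul h5, show q / p * (p / q) = 1 by field_simp, Real.rpow_one] at h6
  rw [mul_comm (a ^ p), mul_comm (b ^ p), mul_comm (a ^ q), mul_comm (b ^ q)]
  exact h6

lemma xmu_le {N : ℕ} {p q : ℝ} {Ω : Set (EuclideanSpace ℝ (Fin N))} {v : EuclideanSpace ℝ (Fin N) → ℝ} {K : NNReal}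
    (h1 : LipschitzOnWith K v (closure Ω)) (h2 : ∃ x ∈ Ω, v x ≠ 0) (h3 : (∫ x in Ω, |v x| ^ (q - 2) * v x) = 0) :
    muPQ p q Ω ≤ rayleighQuot p q Ω v := by
  refine csInf_le ⟨0, ?_⟩ ⟨v, K, h1, h2, h3, rfl⟩
  rintro R ⟨v, _, _, _, _, rfl⟩
  exact xray_nonneg v

lemma xpowq {q t : ℝ} (hq : 1 < q) (ht : 0 ≤ t) : t ^ (q - 2) * t = t ^ (q - 1) := by
  rcases ht.eq_or_lt with h | h
  · rw [← h, mul_zero, Real.zero_rpow (by linarith)]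
  · rw [← Real.rpow_add_one h.ne']; ring_nf

set_option maxHeartbeats 1600000 in
lemma xasm {N : ℕ} (hN : 2 ≤ N) {p q lam ε d g0 : ℝ} {f : ℝ → ℝ} (hp : 1 < p) (hpq : p ≤ q) (hl : 0 ≤ lam)
    (hf : xGood N p q lam ε (d / 2) f) (hε : 0 ≤ ε) {Ω : Set (EuclideanSpace ℝ (Fin N))} (hΩ : IsOpen Ω) (hb : Bornology.IsBounded Ω)
    {x0 x1 : EuclideanSpace ℝ (Fin N)} (hd : ‖x0 - x1‖ = d) (hx0 : ∀ x ∈ Ω, ‖x - x0‖ ≤ d) (hx1 : ∀ x ∈ Ω, ‖x - x1‖ ≤ d)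
    {K0 K1 : Set (EuclideanSpace ℝ (Fin N))} (hK0 : K0 = (fun y => y + x0) ⁻¹' Ω) (hK1 : K1 = (fun y => y + x1) ⁻¹' Ω)
    {m0 m1 B0 B1 α β : ℝ} (hm0 : m0 = ∫ x in K0, f ‖x‖ ^ (q - 1)) (hm1 : m1 = ∫ x in K1, f ‖x‖ ^ (q - 1))
    (hB0 : B0 = ∫ x in K0, f ‖x‖ ^ q) (hB1 : B1 = ∫ x in K1, f ‖x‖ ^ q) (hm0p : 0 < m0)
    (hα : 0 < α) (hβ : 0 < β) (hαm : α ^ (q - 1) * m0 = 1) (hβm : β ^ (q - 1) * m1 = 1)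
    (hA0 : (∫ x in K0, ‖fderiv ℝ (fun x : EuclideanSpace ℝ (Fin N) => f ‖x‖) x‖ ^ p) ≤ lam * B0 + ε - g0)
    (hA1 : (∫ x in K1, ‖fderiv ℝ (fun x : EuclideanSpace ℝ (Fin N) => f ‖x‖) x‖ ^ p) ≤ lam * B1 + ε) :
    ∃ S, α ^ p * B0 + β ^ p * B1 ≤ S ∧ (muPQ p q Ω - lam) * S ≤ ε * (α ^ p + β ^ p) - g0 * α ^ p := by
  have hp0 : 0 < p := by linarith
  have hq1 : 1 < q := by linarith
  have hq0 : 0 < q := by linarith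
  obtain ⟨L, hL⟩ := xFlip (N := N) hf.lip
  have : Nontrivial (EuclideanSpace ℝ (Fin N)) := by
    have : Nonempty (Fin N) := ⟨⟨0, by omega⟩⟩
    infer_instance
  set F : EuclideanSpace ℝ (Fin N) → ℝ := fun x => f ‖x‖ with hF
  have F0 : ∀ x, 0 ≤ F x := fun x => hf.nonneg _
  have Fz : ∀ x, d / 2 ≤ ‖x‖ → F x = 0 := fun x hx => hf.supp _ hx
  have hdis : ∀ x, d / 2 ≤ ‖x - x0‖ ∨ d / 2 < ‖x - x1‖ := by
    intro x
    by_contra! h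
    have : ‖x0 - x1‖ ≤ ‖x - x0‖ + ‖x - x1‖ := by
      have e : x0 - x1 = (x - x1) - (x - x0) := by abel
      rw [e]; linarith [norm_sub_le (x - x1) (x - x0)]
    linarith
  have hz : ∀ x, F (x - x0) = 0 ∨ F (x - x1) = 0 := fun x => (hdis x).imp (fun h => Fz _ h) (fun h => Fz _ h.le)
  have hK0b : volume K0 ≠ ⊤ := by
    rw [hK0, measure_preimage_add_right]; exact hb.measure_lt_top.ne
  have hK1b : volume K1 ≠ ⊤ := by
    rw [hK1, measure_preimage_add_right]; exact hb.measure_lt_top.ne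
  have hK0o : IsOpen K0 := by rw [hK0]; exact hΩ.preimage (by fun_prop)
  have hK1o : IsOpen K1 := by rw [hK1]; exact hΩ.preimage (by fun_prop)
  have iF : ∀ s : ℝ, 0 ≤ s → ∀ K : Set (EuclideanSpace ℝ (Fin N)), volume K ≠ ⊤ → IntegrableOn (fun x => F x ^ s) K :=
    fun s hs K hK => xFq_int hs hf.lip hf.nonneg hf.anti hK
  set v : EuclideanSpace ℝ (Fin N) → ℝ := fun x => α * F (x - x0) - β * F (x - x1) with hv
  -- values
  have vq : ∀ x, |v x| ^ q = α ^ q * F (x - x0) ^ q + β ^ q * F (x - x1) ^ q := by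
    intro x
    rcases hz x with h | h
    · simp only [hv, h, mul_zero, zero_sub, abs_neg, Real.zero_rpow hq0.ne', zero_add]
      rw [abs_of_nonneg (mul_nonneg hβ.le (F0 _)), Real.mul_rpow hβ.le (F0 _)]
    · simp only [hv, h, mul_zero, sub_zero, Real.zero_rpow hq0.ne', add_zero]
      rw [abs_of_nonneg (mul_nonneg hα.le (F0 _)), Real.mul_rpow hα.le (F0 _)]
  have vc : ∀ x, |v x| ^ (q - 2) * v x = α ^ (q - 1) * F (x - x0) ^ (q - 1) - β ^ (q - 1) * F (x - x1) ^ (q - 1) := by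
    intro x
    have hz1 : (0:ℝ) ^ (q - 1) = 0 := Real.zero_rpow (by linarith)
    rcases hz x with h | h
    · simp only [hv, h, mul_zero, zero_sub, abs_neg, hz1]
      rw [abs_of_nonneg (mul_nonneg hβ.le (F0 _)), mul_neg, xpowq hq1 (mul_nonneg hβ.le (F0 _)), Real.mul_rpow hβ.le (F0 _)]
    · simp only [hv, h, mul_zero, sub_zero, hz1]
      rw [abs_of_nonneg (mul_nonneg hα.le (F0 _)), xpowq hq1 (mul_nonneg hα.le (F0 _)), Real.mul_rpow hα.le (F0 _)]
  have i0 : ∀ s : ℝ, 0 ≤ s → IntegrableOn (fun x => α ^ s * F (x - x0) ^ s) Ω := fun s hs =>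
    (xtr_int (G := fun y => F y ^ s) (by rw [← hK0]; exact iF s hs _ hK0b)).const_mul _
  have i1 : ∀ s : ℝ, 0 ≤ s → IntegrableOn (fun x => β ^ s * F (x - x1) ^ s) Ω := fun s hs =>
    (xtr_int (G := fun y => F y ^ s) (by rw [← hK1]; exact iF s hs _ hK1b)).const_mul _
  have e0 : ∀ s : ℝ, ∫ x in Ω, F (x - x0) ^ s = ∫ x in K0, F x ^ s := fun s => by
    rw [xtr Ω x0 (fun y => F y ^ s), hK0]
  have e1 : ∀ s : ℝ, ∫ x in Ω, F (x - x1) ^ s = ∫ x in K1, F x ^ s := fun s => by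
    rw [xtr Ω x1 (fun y => F y ^ s), hK1]
  have Iq : ∫ x in Ω, |v x| ^ q = α ^ q * B0 + β ^ q * B1 := by
    simp_rw [vq]
    rw [integral_add (i0 q hq0.le) (i1 q hq0.le), integral_const_mul, integral_const_mul, e0, e1, hB0, hB1]
  have Ic : ∫ x in Ω, |v x| ^ (q - 2) * v x = 0 := by
    simp_rw [vc]
    rw [integral_sub (i0 (q - 1) (by linarith)) (i1 (q - 1) (by linarith)), integral_const_mul, integral_const_mul, e0, e1]
    change α ^ (q - 1) * (∫ x in K0, f ‖x‖ ^ (q - 1)) - β ^ (q - 1) * (∫ x in K1, f ‖x‖ ^ (q - 1)) = 0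
    rw [← hm0, ← hm1, hαm, hβm, sub_self]
  have hnz : ∃ x ∈ Ω, v x ≠ 0 := by
    by_contra! hcon
    have : m0 = 0 := by
      rw [hm0]
      refine setIntegral_eq_zero_of_forall_eq_zero fun y hy => ?_
      rw [hK0] at hy
      have h1 := vc (y + x0)
      rw [hcon _ hy] at h1
      have h2 : F y = 0 := by
        have h3 := hcon _ hy
        rcases hz (y + x0) with h | h
        · simpa using h
        · simp only [hv, h, mul_zero, sub_zero, add_sub_cancel_right] at h3
          exact (mul_eq_zero.1 h3).resolve_left hα.ne'
      change F y ^ (q - 1) = 0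
      rw [h2, Real.zero_rpow (by linarith)]
    linarith
  have vlip : ∃ L' : NNReal, LipschitzWith L' v := by
    have a1 : ∀ a, LipschitzWith (L * 1) (fun x => F (x - a)) := fun a =>
      hL.comp (LipschitzWith.of_dist_le_mul fun x y => by simp)
    have a2 : ∀ (c : ℝ) (a), ∃ L' : NNReal, LipschitzWith L' (fun x => c * F (x - a)) := fun c a => by
      refine ⟨‖c‖₊ * (L * 1), ?_⟩
      have := (lipschitzWith_smul (α := ℝ) (β := ℝ) c).comp (a1 a)
      exact this
    obtain ⟨L1, h1⟩ := a2 α x0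
    obtain ⟨L2, h2⟩ := a2 β x1
    exact ⟨L1 + L2, h1.sub h2⟩
  obtain ⟨L', hL'⟩ := vlip
  have hμ := xmu_le (p := p) (hL'.lipschitzOnWith (s := closure Ω)) hnz Ic
  -- gradient
  have hg : ∀ᵐ x ∂(volume.restrict Ω), ‖fderiv ℝ v x‖ ^ p ≤ α ^ p * ‖fderiv ℝ F (x - x0)‖ ^ p + β ^ p * ‖fderiv ℝ F (x - x1)‖ ^ p := by
    have hnull : volume (sphere x0 (d / 2)) = 0 := Measure.addHaar_sphere _ _ _
    refine ae_restrict_of_ae ?_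
    filter_upwards [measure_eq_zero_iff_ae_notMem.1 hnull] with x hx
    have hdis2 : d / 2 < ‖x - x0‖ ∨ d / 2 < ‖x - x1‖ := by
      rcases hdis x with h | h
      · left
        refine lt_of_le_of_ne h fun h' => hx ?_
        rw [mem_sphere, dist_eq_norm, h']
      · exact Or.inr h
    have ev : ∀ a, d / 2 < ‖x - a‖ → ∀ᶠ y in nhds x, F (y - a) = 0 := by
      intro a ha
      have : ∀ᶠ y in nhds x, d / 2 < ‖y - a‖ := (isOpen_lt continuous_const (by fun_prop)).mem_nhds ha
      exact this.mono fun y hy => Fz _ hy.le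
    rcases hdis2 with h | h
    · have h1 : v =ᶠ[nhds x] fun y => (-β) * F (y - x1) := (ev _ h).mono fun y hy => by simp [hv, hy]
      rw [h1.fderiv_eq]
      have h2 := xfdm (-β) (fun y => F (y - x1)) x
      rw [fderiv_comp_sub, abs_neg, abs_of_pos hβ] at h2
      have h3 := Real.rpow_le_rpow (norm_nonneg _) h2 hp0.le
      rw [Real.mul_rpow hβ.le (norm_nonneg _)] at h3
      have : 0 ≤ α ^ p * ‖fderiv ℝ F (x - x0)‖ ^ p := by positivity
      linarith
    · have h1 : v =ᶠ[nhds x] fun y => α * F (y - x0) := (ev _ h).mono fun y hy => by simp [hv, hy]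
      rw [h1.fderiv_eq]
      have h2 := xfdm α (fun y => F (y - x0)) x
      rw [fderiv_comp_sub, abs_of_pos hα] at h2
      have h3 := Real.rpow_le_rpow (norm_nonneg _) h2 hp0.le
      rw [Real.mul_rpow hα.le (norm_nonneg _)] at h3
      have : 0 ≤ β ^ p * ‖fderiv ℝ F (x - x1)‖ ^ p := by positivity
      linarith
  have j0 : IntegrableOn (fun x => α ^ p * ‖fderiv ℝ F (x - x0)‖ ^ p) Ω :=
    (xtr_int (G := fun y => ‖fderiv ℝ F y‖ ^ p) (by rw [← hK0]; exact xgrad_bint hp0 hL hK0b)).const_mul _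
  have j1 : IntegrableOn (fun x => β ^ p * ‖fderiv ℝ F (x - x1)‖ ^ p) Ω :=
    (xtr_int (G := fun y => ‖fderiv ℝ F y‖ ^ p) (by rw [← hK1]; exact xgrad_bint hp0 hL hK1b)).const_mul _
  have Ig : ∫ x in Ω, ‖fderiv ℝ v x‖ ^ p ≤ α ^ p * (lam * B0 + ε - g0) + β ^ p * (lam * B1 + ε) := by
    calc _ ≤ ∫ x in Ω, (α ^ p * ‖fderiv ℝ F (x - x0)‖ ^ p + β ^ p * ‖fderiv ℝ F (x - x1)‖ ^ p) :=
          integral_mono_ae (xgrad_bint hp0 hL' hb.measure_lt_top.ne) (j0.add j1) hg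
      _ = α ^ p * (∫ x in K0, ‖fderiv ℝ F x‖ ^ p) + β ^ p * (∫ x in K1, ‖fderiv ℝ F x‖ ^ p) := by
          rw [integral_add j0 j1, integral_const_mul, integral_const_mul, xtr Ω x0 (fun y => ‖fderiv ℝ F y‖ ^ p),
            xtr Ω x1 (fun y => ‖fderiv ℝ F y‖ ^ p), hK0, hK1]
      _ ≤ _ := by gcongr
  -- B0 + B1 ≤ 1
  have B0n : 0 ≤ B0 := by rw [hB0]; exact integral_nonneg fun x => Real.rpow_nonneg (F0 x) _
  have B1n : 0 ≤ B1 := by rw [hB1]; exact integral_nonneg fun x => Real.rpow_nonneg (F0 x) _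
  have hBB : B0 + B1 ≤ 1 := by
    have hsub : K0 ∩ K1 ⊆ {0} := by
      intro y hy
      have y1 : y + x0 ∈ Ω := by have := hy.1; rwa [hK0] at this
      have y2 : y + x1 ∈ Ω := by have := hy.2; rwa [hK1] at this
      have a1 := hx1 _ y1
      have a2 := hx0 _ y2
      have pl := parallelogram_law_with_norm ℝ y (x0 - x1)
      rw [hd] at pl
      rw [show y + x0 - x1 = y + (x0 - x1) by abel] at a1
      rw [show y + x1 - x0 = y - (x0 - x1) by abel] at a2
      have hd0 : 0 ≤ d := by rw [← hd]; positivity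
      have b1 : ‖y + (x0 - x1)‖ * ‖y + (x0 - x1)‖ ≤ d * d := by gcongr
      have b2 : ‖y - (x0 - x1)‖ * ‖y - (x0 - x1)‖ ≤ d * d := by gcongr
      have b3 : ‖y‖ * ‖y‖ ≤ 0 := by linarith
      have b4 : ‖y‖ = 0 := by nlinarith [norm_nonneg y]
      simpa using b4
    have had : AEDisjoint volume K0 K1 := by
      refine measure_mono_null hsub (by simp)
    have hu : ∫ x in K0 ∪ K1, F x ^ q = B0 + B1 := by
      rw [hB0, hB1]
      exact setIntegral_union₀ had hK1o.measurableSet.nullMeasurableSet (iF q hq0.le _ hK0b) (iF q hq0.le _ hK1b)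
    have hi : Integrable (fun x => F x ^ q) := by
      by_contra hcon
      have := hf.int
      rw [integral_undef hcon] at this
      norm_num at this
    rw [← hu, ← hf.int]
    exact setIntegral_le_integral hi (Filter.Eventually.of_forall fun x => Real.rpow_nonneg (F0 x) _)
  have hJ := xjensen hp0 hpq hα.le hβ.le B0n B1n hBB
  refine ⟨_, hJ, ?_⟩
  set S := (α ^ q * B0 + β ^ q * B1) ^ (p / q) with hS
  unfold rayleighQuot at hμ
  rw [Iq, ← hS] at hμ
  have Sn : 0 ≤ S := by positivity
  have h1 : muPQ p q Ω * S ≤ ∫ x in Ω, ‖fderiv ℝ v x‖ ^ p := by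
    rcases Sn.eq_or_lt with h | h
    · rw [← h, mul_zero]; exact integral_nonneg fun x => by positivity
    · rwa [le_div_iff₀ h] at hμ
  have h2 : lam * (α ^ p * B0 + β ^ p * B1) ≤ lam * S := by gcongr
  linarith

open MeasureTheory Metric Set Real
open scoped ENNReal Pointwise

lemma xstarK {N : ℕ} {Ω : Set (EuclideanSpace ℝ (Fin N))} (hΩ : IsOpen Ω) (hc : Convex ℝ Ω) {a : EuclideanSpace ℝ (Fin N)}
    (ha : a ∈ closure Ω) : ∀ x ∈ (fun y => y + a) ⁻¹' Ω, ∀ t : ℝ, 0 < t → t ≤ 1 → t • x ∈ (fun y => y + a) ⁻¹' Ω := by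
  intro x hx t h0 h1
  have h2 : x + a ∈ interior Ω := by rw [hΩ.interior_eq]; exact hx
  have h3 := hc.combo_closure_interior_mem_interior ha h2 (a := 1 - t) (b := t) (by linarith) h0 (by ring)
  rw [hΩ.interior_eq] at h3
  change t • x + a ∈ Ω
  convert h3 using 1
  module

lemma xk_pos {N : ℕ} {Ω : Set (EuclideanSpace ℝ (Fin N))} (hΩ : IsOpen Ω) {a : EuclideanSpace ℝ (Fin N)}
    (ha : a ∈ closure Ω) {r : ℝ} (hr : 0 < r) : 0 < volume.real ((fun y => y + a) ⁻¹' Ω ∩ ball 0 r) := by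
  have ho : IsOpen ((fun y => y + a) ⁻¹' Ω ∩ ball 0 r) := (hΩ.preimage (by fun_prop)).inter isOpen_ball
  have hne : ((fun y => y + a) ⁻¹' Ω ∩ ball 0 r).Nonempty := by
    obtain ⟨x, hx, hxr⟩ := Metric.mem_closure_iff.1 ha r hr
    refine ⟨x - a, by simpa using hx, ?_⟩
    rw [mem_ball_zero_iff, ← dist_eq_norm, dist_comm]; exact hxr
  exact ENNReal.toReal_pos (ho.measure_pos _ hne).ne' (ne_top_of_le_ne_top measure_ball_lt_top.ne (measure_mono inter_subset_right))

lemma xmbound {N : ℕ} {p q lam ε R c0 r1 V : ℝ} {f : ℝ → ℝ} (hq : 1 < q) (hf : xGood N p q lam ε R f)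
    {K : Set (EuclideanSpace ℝ (Fin N))} (hK : IsOpen K) (hKb : volume K ≠ ⊤) (hV : volume.real K = V)
    (hc0 : 0 < c0) (hr1 : 0 < r1) (hc : c0 ≤ f r1) :
    c0 ^ (q - 1) * volume.real (K ∩ ball 0 r1) ≤ ∫ x in K, f ‖x‖ ^ (q - 1) ∧
    c0 ^ q * volume.real (K ∩ ball 0 r1) ≤ ∫ x in K, f ‖x‖ ^ q ∧
    ∫ x in K, f ‖x‖ ^ (q - 1) ≤ V + 1 := by
  have iF : ∀ s : ℝ, 0 ≤ s → ∀ K : Set (EuclideanSpace ℝ (Fin N)), volume K ≠ ⊤ → IntegrableOn (fun x => f ‖x‖ ^ s) K :=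
    fun s hs K hK => xFq_int hs hf.lip hf.nonneg hf.anti hK
  have low : ∀ s : ℝ, 0 ≤ s → c0 ^ s * volume.real (K ∩ ball 0 r1) ≤ ∫ x in K, f ‖x‖ ^ s := by
    intro s hs
    have hfin : volume (K ∩ ball 0 r1) ≠ ⊤ := ne_top_of_le_ne_top hKb (measure_mono inter_subset_left)
    calc c0 ^ s * volume.real (K ∩ ball 0 r1) = ∫ x in K ∩ ball 0 r1, c0 ^ s := by
          rw [setIntegral_const, smul_eq_mul, mul_comm]
      _ ≤ ∫ x in K ∩ ball 0 r1, f ‖x‖ ^ s := by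
          refine setIntegral_mono_on (integrableOn_const hfin) (iF s hs _ hfin) (hK.measurableSet.inter measurableSet_ball) fun x hx => ?_
          have h1 : ‖x‖ < r1 := by simpa using hx.2
          have h2 : c0 ≤ f ‖x‖ := hc.trans (hf.anti _ _ (by rw [abs_norm, abs_of_pos hr1]; exact h1.le))
          gcongr
      _ ≤ _ := setIntegral_mono_set (iF s hs _ hKb) (Filter.Eventually.of_forall fun x => Real.rpow_nonneg (hf.nonneg _) _)
          (Filter.Eventually.of_forall fun x hx => hx.1)
  refine ⟨low _ (by linarith), low _ (by linarith), ?_⟩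
  have hi : Integrable (fun x : EuclideanSpace ℝ (Fin N) => f ‖x‖ ^ q) := by
    by_contra hcon
    have := hf.int
    rw [integral_undef hcon] at this
    norm_num at this
  calc ∫ x in K, f ‖x‖ ^ (q - 1) ≤ ∫ x in K, (1 + f ‖x‖ ^ q) := by
        refine setIntegral_mono_on (iF _ (by linarith) _ hKb) ((integrableOn_const hKb).add hi.integrableOn) hK.measurableSet fun x hx => ?_
        have h0 := hf.nonneg ‖x‖
        have h1 : 0 ≤ f ‖x‖ ^ q := by positivity
        rcases le_total (f ‖x‖) 1 with h | h
        · have := Real.rpow_le_one h0 h (show 0 ≤ q - 1 by linarith)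
          linarith
        · have := Real.rpow_le_rpow_of_exponent_le h (show q - 1 ≤ q by linarith)
          linarith
    _ = V + ∫ x in K, f ‖x‖ ^ q := by
        have i1 : IntegrableOn (fun _ : EuclideanSpace ℝ (Fin N) => (1:ℝ)) K := integrableOn_const hKb
        rw [integral_add i1 hi.integrableOn, setIntegral_const, smul_eq_mul, mul_one, hV]
    _ ≤ V + 1 := by
        rw [← hf.int]
        have := setIntegral_le_integral (s := K) hi (Filter.Eventually.of_forall fun x => Real.rpow_nonneg (hf.nonneg _) _)
        linarith

lemma xunif {N : ℕ} (hN : 2 ≤ N) {p q d : ℝ} (hp : 1 < p) (hpq : p ≤ q) (hq : ltCritical N p q)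
    {Ω D : Set (EuclideanSpace ℝ (Fin N))} (hΩ : IsOpen Ω) (hb : Bornology.IsBounded Ω) (hcv : Convex ℝ Ω)
    (hDo : IsOpen D) (hDb : Bornology.IsBounded D) (hDne : D.Nonempty) (hDv : volume D ≤ ENNReal.ofReal (xom N * (d / 2) ^ N))
    {x0 x1 : EuclideanSpace ℝ (Fin N)} (h0c : x0 ∈ closure Ω) (h1c : x1 ∈ closure Ω)
    (hd : ‖x0 - x1‖ = d) (hx0 : ∀ x ∈ Ω, ‖x - x0‖ ≤ d) (hx1 : ∀ x ∈ Ω, ‖x - x1‖ ≤ d) :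
    ∃ s0 C a κ r' r1 : ℝ, 0 < s0 ∧ 0 < C ∧ 0 < a ∧ 0 < κ ∧ 0 < r' ∧ r' ≤ r1 ∧ 2 * r' ^ N = r1 ^ N ∧
      ∀ ε, 0 < ε → ε ≤ 1 → ∀ κ', (κ' = 0 ∨ κ' = κ) →
        0 ≤ κ' * (2 * volume.real ((fun y => y + x0) ⁻¹' Ω ∩ ball 0 r') - volume.real ((fun y => y + x0) ⁻¹' Ω ∩ ball 0 r1)) →
        ∃ S, s0 ≤ S ∧ (muPQ p q Ω - lambdaPQ p q D) * S ≤
        ε * C - κ' * (2 * volume.real ((fun y => y + x0) ⁻¹' Ω ∩ ball 0 r') - volume.real ((fun y => y + x0) ⁻¹' Ω ∩ ball 0 r1)) * a := by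
  have hp0 : 0 < p := by linarith
  have hq0 : 0 < q := by linarith
  have hq1 : 1 < q := by linarith
  have hN0 : N ≠ 0 := by omega
  have hlp := xlam_pos hN hp hpq hq hDo hDb hDne
  set lam := lambdaPQ p q D with hlam
  obtain ⟨c0, r1, hc0, hr1, hnc⟩ := xnonconc hN hp hpq hq hDo hDb (lam + 1) (by linarith)
  have hd0 : 0 ≤ d := by rw [← hd]; positivity
  set r' := (r1 ^ N / 2) ^ ((N : ℝ)⁻¹) with hr'
  have hr'e : r' ^ N = r1 ^ N / 2 := Real.rpow_inv_natCast_pow (by positivity) hN0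
  have hr'0 : 0 < r' := by positivity
  have hrr : 2 * r' ^ N = r1 ^ N := by rw [hr'e]; ring
  have hr'1 : r' ≤ r1 := by
    refine le_of_pow_le_pow_left₀ hN0 hr1.le ?_
    rw [hr'e]
    have : 0 < r1 ^ N := by positivity
    linarith
  set K0 := (fun y => y + x0) ⁻¹' Ω with hK0
  set K1 := (fun y => y + x1) ⁻¹' Ω with hK1
  have hK0o : IsOpen K0 := hΩ.preimage (by fun_prop)
  have hK1o : IsOpen K1 := hΩ.preimage (by fun_prop)
  set V := volume.real Ω with hV
  have hV0 : 0 ≤ V := measureReal_nonneg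
  have vK0 : volume K0 = volume Ω := by rw [hK0, measure_preimage_add_right]
  have vK1 : volume K1 = volume Ω := by rw [hK1, measure_preimage_add_right]
  have fK0 : volume K0 ≠ ⊤ := by rw [vK0]; exact hb.measure_lt_top.ne
  have fK1 : volume K1 ≠ ⊤ := by rw [vK1]; exact hb.measure_lt_top.ne
  have hKb : ∀ a, (∀ x ∈ Ω, ‖x - a‖ ≤ d) → Bornology.IsBounded ((fun y => y + a) ⁻¹' Ω) := by
    intro a ha
    refine isBounded_iff_forall_norm_le.2 ⟨d, fun y hy => ?_⟩
    simpa using ha _ hy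
  set k0 := volume.real (K0 ∩ ball 0 r1) with hk0
  set k1 := volume.real (K1 ∩ ball 0 r1) with hk1
  have k0p : 0 < k0 := xk_pos hΩ h0c hr1
  have k1p : 0 < k1 := xk_pos hΩ h1c hr1
  set s := -(q - 1)⁻¹ with hs
  have hs0 : s ≤ 0 := by
    rw [hs, neg_nonpos, inv_nonneg]; linarith
  set A0 := (c0 ^ (q - 1) * k0) ^ s with hA0
  set A1 := (c0 ^ (q - 1) * k1) ^ s with hA1
  set al := (V + 1) ^ s with hal
  have hal0 : 0 < al := by positivity
  refine ⟨al ^ p * (c0 ^ q * k0), A0 ^ p + A1 ^ p, al ^ p, lam * c0 ^ q, r', r1, by positivity, by positivity, by positivity, by positivity,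
    hr'0, hr'1, hrr, ?_⟩
  intro ε hε hε1 κ' hκ' hg
  set g0 := κ' * (2 * volume.real (K0 ∩ ball 0 r') - volume.real (K0 ∩ ball 0 r1)) with hg0
  obtain ⟨u, u1, u2, u3, u4, u5, u6⟩ := xnear (p := p) (q := q) hp0 hq0 hDo hDne hε
  have hf := xgood hN0 hp hpq u1 u2 u3 u4 u5 u6 (R := d / 2) (by positivity) hDv
  have hcf := hnc u u1 u2 u3 u5 (by rw [hlam]; linarith)
  set f := xprof fun x => |u x| with hfdef
  rw [← hlam] at hf
  clear_value f
  obtain ⟨b1, b2, b3⟩ := xmbound hq1 hf hK0o fK0 (V := V) (by rw [measureReal_def, vK0]; rfl) hc0 hr1 hcf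
  obtain ⟨b4, b5, b6⟩ := xmbound hq1 hf hK1o fK1 (V := V) (by rw [measureReal_def, vK1]; rfl) hc0 hr1 hcf
  rw [← hk0] at b1 b2
  rw [← hk1] at b4 b5
  set m0 := ∫ x in K0, f ‖x‖ ^ (q - 1) with hm0
  set m1 := ∫ x in K1, f ‖x‖ ^ (q - 1) with hm1
  have m0p : 0 < m0 := lt_of_lt_of_le (by positivity) b1
  have m1p : 0 < m1 := lt_of_lt_of_le (by positivity) b4
  have hpow : ∀ m : ℝ, 0 < m → (m ^ s) ^ (q - 1) * m = 1 := by
    intro m hm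
    rw [← Real.rpow_mul hm.le, hs, neg_mul, inv_mul_cancel₀ (by linarith), Real.rpow_neg_one, inv_mul_cancel₀ hm.ne']
  have hκ0 : 0 ≤ κ' := by rcases hκ' with h | h <;> rw [h]; positivity
  have hκ1 : κ' ≤ lam * c0 ^ q := by rcases hκ' with h | h <;> rw [h]; positivity
  have t0 := xstarB hN0 hp0 hq0 hlp.le hf hK0o (hKb _ hx0) (xstarK hΩ hcv h0c) hr'0.le hrr hr'1 hc0.le hcf hκ0 hκ1
  have t1 := xstarB hN0 hp0 hq0 hlp.le hf hK1o (hKb _ hx1) (xstarK hΩ hcv h1c) hr'0.le hrr hr'1 hc0.le hcf le_rfl (by positivity : (0:ℝ) ≤ lam * c0 ^ q)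
  rw [← hg0] at t0
  rw [zero_mul, sub_zero] at t1
  clear_value m0 m1 K0 K1 g0 lam r'
  obtain ⟨S, hS1, hS2⟩ := xasm (B0 := ∫ x in K0, f ‖x‖ ^ q) (B1 := ∫ x in K1, f ‖x‖ ^ q) (α := m0 ^ s) (β := m1 ^ s) hN hp hpq hlp.le hf hε.le hΩ hb hd hx0 hx1 hK0 hK1 hm0 hm1 rfl rfl m0p
    (show 0 < m0 ^ s by positivity) (show 0 < m1 ^ s by positivity) (hpow m0 m0p) (hpow m1 m1p) t0 t1
  have hα1 : al ≤ m0 ^ s := Real.rpow_le_rpow_of_nonpos m0p b3 hs0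
  have hα2 : m0 ^ s ≤ A0 := Real.rpow_le_rpow_of_nonpos (by positivity) b1 hs0
  have hβ2 : m1 ^ s ≤ A1 := Real.rpow_le_rpow_of_nonpos (by positivity) b4 hs0
  have hα1p : al ^ p ≤ (m0 ^ s) ^ p := by gcongr
  have hα2p : (m0 ^ s) ^ p ≤ A0 ^ p := by gcongr
  have hβ2p : (m1 ^ s) ^ p ≤ A1 ^ p := by gcongr
  refine ⟨S, le_trans ?_ hS1, hS2.trans ?_⟩
  · have h1 : al ^ p * (c0 ^ q * k0) ≤ (m0 ^ s) ^ p * ∫ x in K0, f ‖x‖ ^ q := by gcongr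
    have h2 : 0 ≤ (m1 ^ s) ^ p * ∫ x in K1, f ‖x‖ ^ q :=
      mul_nonneg (by positivity) (integral_nonneg fun x => Real.rpow_nonneg (hf.nonneg _) _)
    linarith
  · have h1 : ε * ((m0 ^ s) ^ p + (m1 ^ s) ^ p) ≤ ε * (A0 ^ p + A1 ^ p) := by gcongr
    have h2 : g0 * al ^ p ≤ g0 * (m0 ^ s) ^ p := by gcongr
    linarith

lemma xfin {N : ℕ} (hN : 2 ≤ N) {p q d : ℝ} (hp : 1 < p) (hpq : p ≤ q) (hq : ltCritical N p q)
    {Ω D : Set (EuclideanSpace ℝ (Fin N))} (hΩ : IsOpen Ω) (hb : Bornology.IsBounded Ω) (hcv : Convex ℝ Ω)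
    (hDo : IsOpen D) (hDb : Bornology.IsBounded D) (hDne : D.Nonempty) (hDv : volume D ≤ ENNReal.ofReal (xom N * (d / 2) ^ N))
    {x0 x1 : EuclideanSpace ℝ (Fin N)} (h0c : x0 ∈ closure Ω) (h1c : x1 ∈ closure Ω)
    (hd : ‖x0 - x1‖ = d) (hx0 : ∀ x ∈ Ω, ‖x - x0‖ ≤ d) (hx1 : ∀ x ∈ Ω, ‖x - x1‖ ≤ d) :
    muPQ p q Ω ≤ lambdaPQ p q D ∧ ((∀ r' r1, 0 < r' → r' ≤ r1 → 2 * r' ^ N = r1 ^ N →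
      volume.real ((fun y => y + x0) ⁻¹' Ω ∩ ball 0 r1) < 2 * volume.real ((fun y => y + x0) ⁻¹' Ω ∩ ball 0 r')) →
        muPQ p q Ω < lambdaPQ p q D) := by
  obtain ⟨s0, C, a, κ, r', r1, hs0, hC, ha, hκ, hr', hr1, hrr, H⟩ := xunif hN hp hpq hq hΩ hb hcv hDo hDb hDne hDv h0c h1c hd hx0 hx1
  constructor
  · by_contra! hcon
    have hδ : 0 < muPQ p q Ω - lambdaPQ p q D := by linarith
    set δ := muPQ p q Ω - lambdaPQ p q D with hδd
    obtain ⟨S, h1, h2⟩ := H (min 1 (δ * s0 / (2 * C))) (by positivity) (min_le_left _ _) 0 (Or.inl rfl) (by simp)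
    rw [zero_mul, zero_mul, sub_zero] at h2
    have h3 : min 1 (δ * s0 / (2 * C)) * C ≤ δ * s0 / (2 * C) * C := by gcongr; exact min_le_right _ _
    have h4 : δ * s0 / (2 * C) * C = δ * s0 / 2 := by field_simp
    have h5 : δ * s0 ≤ δ * S := by gcongr
    have h6 : 0 < δ * s0 := by positivity
    linarith
  · intro hG
    have hGr := hG r' r1 hr' hr1 hrr
    have hg : 0 < κ * (2 * volume.real ((fun y => y + x0) ⁻¹' Ω ∩ ball 0 r') - volume.real ((fun y => y + x0) ⁻¹' Ω ∩ ball 0 r1)) :=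
      mul_pos hκ (by linarith)
    have h0 := H
    set g := κ * (2 * volume.real ((fun y => y + x0) ⁻¹' Ω ∩ ball 0 r') - volume.real ((fun y => y + x0) ⁻¹' Ω ∩ ball 0 r1)) with hgd
    obtain ⟨S, h1, h2⟩ := H (min 1 (g * a / (2 * C))) (by positivity) (min_le_left _ _) κ (Or.inr rfl) hg.le
    rw [← hgd] at h2
    have h3 : min 1 (g * a / (2 * C)) * C ≤ g * a / (2 * C) * C := by gcongr; exact min_le_right _ _
    have h4 : g * a / (2 * C) * C = g * a / 2 := by field_simp
    have h6 : 0 < g * a := by positivity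
    by_contra! hcon
    have h7 : 0 ≤ (muPQ p q Ω - lambdaPQ p q D) * S := mul_nonneg (by linarith) (by linarith)
    linarith

open MeasureTheory Metric Set Real
open scoped ENNReal Pointwise

lemma xorth {N : ℕ} (hN : 2 ≤ N) (ν : EuclideanSpace ℝ (Fin N)) (hν : ‖ν‖ = 1) :
    ∃ w : EuclideanSpace ℝ (Fin N), ‖w‖ = 1 ∧ inner ℝ ν w = 0 := by
  obtain ⟨n, rfl⟩ : ∃ n, N = n + 1 := ⟨N - 1, by omega⟩
  have : Fact (Module.finrank ℝ (EuclideanSpace ℝ (Fin (n + 1))) = n + 1) := ⟨finrank_euclideanSpace_fin⟩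
  have h1 : Module.finrank ℝ (Submodule.span ℝ {ν})ᗮ = n := Submodule.finrank_orthogonal_span_singleton (by
    intro h; rw [h, norm_zero] at hν; norm_num at hν)
  have : Nontrivial (Submodule.span ℝ {ν})ᗮ := Module.nontrivial_of_finrank_pos (R := ℝ) (by omega)
  obtain ⟨w, hw⟩ := exists_ne (0 : (Submodule.span ℝ {ν})ᗮ)
  have hw0 : (w : EuclideanSpace ℝ (Fin (n + 1))) ≠ 0 := by simpa using hw
  have hin : inner ℝ ν (w : EuclideanSpace ℝ (Fin (n + 1))) = 0 :=
    Submodule.mem_orthogonal_singleton_iff_inner_right.1 w.2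
  refine ⟨‖(w : EuclideanSpace ℝ (Fin (n + 1)))‖⁻¹ • (w : EuclideanSpace ℝ (Fin (n + 1))), ?_, ?_⟩
  · rw [norm_smul, norm_inv, norm_norm, inv_mul_cancel₀ (norm_ne_zero_iff.2 hw0)]
  · rw [inner_smul_right, hin, mul_zero]

lemma xnorm_comb {N : ℕ} {ν w : EuclideanSpace ℝ (Fin N)} (hν : ‖ν‖ = 1) (hw : ‖w‖ = 1) (h : inner ℝ ν w = 0) (a b : ℝ) :
    ‖a • ν + b • w‖ ^ 2 = a ^ 2 + b ^ 2 := by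
  rw [@norm_add_sq_real, inner_smul_left, inner_smul_right, h, norm_smul, norm_smul, hν, hw]
  simp

lemma xnoncone {N : ℕ} (hN : 2 ≤ N) {K : Set (EuclideanSpace ℝ (Fin N))} (hK : IsOpen K) (hc : Convex ℝ K)
    (hst : ∀ x ∈ K, ∀ t : ℝ, 0 < t → t ≤ 1 → t • x ∈ K) {ν : EuclideanSpace ℝ (Fin N)} (hν : ‖ν‖ = 1) {s d : ℝ} (hs : 0 < s) (hd : 0 < d)
    (h1 : ball (-(s • ν)) s ⊆ K) (h2 : K ⊆ closedBall (-(d • ν)) d) {r' r1 : ℝ} (hr' : 0 < r') (hrr : r' ≤ r1) (hr : 2 * r' ^ N = r1 ^ N) :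
    volume.real (K ∩ ball 0 r1) < 2 * volume.real (K ∩ ball 0 r') := by
  have hr1 : 0 < r1 := by linarith
  have hlt : r' < r1 := by
    refine lt_of_le_of_ne hrr fun h => ?_
    rw [h] at hr
    have : 0 < r1 ^ N := by positivity
    linarith
  obtain ⟨w, hw, hνw⟩ := xorth hN ν hν
  set T := r1 / r' with hT
  have hT1 : 1 < T := by rw [hT, one_lt_div hr']; exact hlt
  set h := r' / (4 * d) with hh
  have hh0 : 0 < h := by positivity
  set θ : EuclideanSpace ℝ (Fin N) := (-h) • ν + (1:ℝ) • w with hθ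
  have nθ : ∀ t a : ℝ, ‖t • θ + a • ν‖ ^ 2 = (a - t * h) ^ 2 + t ^ 2 := by
    intro t a
    have e : t • θ + a • ν = (a - t * h) • ν + t • w := by rw [hθ]; module
    rw [e, xnorm_comb hν hw hνw]
  obtain ⟨ρ, hρ, hray⟩ := xray (T := {t : ℝ | t • θ ∈ K}) (hK.preimage (by fun_prop)) ⟨2 * d * h, fun t ht => by
      have a1 := h2 ht
      rw [mem_closedBall, dist_eq_norm, sub_neg_eq_add] at a1
      have a2 : ‖t • θ + d • ν‖ ^ 2 ≤ d ^ 2 := by gcongr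
      rw [nθ] at a2
      by_contra! hcon
      have h0 : 0 < t := lt_trans (by positivity) hcon
      nlinarith [mul_pos h0 (sub_pos.2 hcon), sq_nonneg (t * h)]⟩ (fun t ht b1 s b2 b3 => by
      have := hst _ ht (s / t) (by positivity) (by rw [div_le_one b1]; exact b3)
      rw [smul_smul, div_mul_cancel₀ _ b1.ne'] at this
      exact this)
  have hray' : ∀ t, 0 < t → (t • θ ∈ K ↔ t < ρ) := hray
  -- rho bounds
  have hρ0 : 0 < ρ := by
    set t := s * h / (1 + h ^ 2) with ht
    have ht0 : 0 < t := by positivity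
    have : t • θ ∈ K := by
      apply h1
      rw [mem_ball, dist_eq_norm, sub_neg_eq_add]
      refine lt_of_pow_lt_pow_left₀ 2 hs.le ?_
      rw [nθ]
      have e : t * (1 + h ^ 2) = s * h := by rw [ht]; field_simp
      nlinarith [mul_pos ht0 ht0, mul_pos (mul_pos ht0 hs) hh0]
    exact ht0.trans ((hray' t ht0).1 this)
  have hnorm : ∀ t : ℝ, 0 < t → t • θ ∈ K → ‖t • θ‖ < r' := by
    intro t h0 ht
    have a1 := h2 ht
    rw [mem_closedBall, dist_eq_norm, sub_neg_eq_add] at a1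
    have a2 : ‖t • θ + d • ν‖ ^ 2 ≤ d ^ 2 := by gcongr
    rw [nθ] at a2
    have a3 := nθ t 0
    rw [zero_smul, add_zero] at a3
    refine lt_of_pow_lt_pow_left₀ 2 hr'.le ?_
    rw [a3]
    have e : 4 * d * h = r' := by rw [hh]; field_simp
    have a4 : t * (1 + h ^ 2) ≤ 2 * d * h := by
      by_contra! hcon
      nlinarith [mul_pos h0 (sub_pos.2 hcon)]
    have a5 : t ≤ 2 * d * h := by nlinarith [mul_pos h0 (sq_pos_of_pos hh0)]
    have a6 : (0 - t * h) ^ 2 + t ^ 2 = t * (t * (1 + h ^ 2)) := by ring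
    have a7 : t * (t * (1 + h ^ 2)) ≤ (2 * d * h) * (2 * d * h) := by gcongr
    rw [a6]
    nlinarith
  set t := ρ * (T + 1) / (2 * T) with ht
  have hT0 : 0 < T := by linarith
  have ht0 : 0 < t := by positivity
  have htρ : t < ρ := by
    rw [ht, div_lt_iff₀ (by positivity)]
    nlinarith
  have hTt : ρ < T * t := by
    have : T * t = ρ * (T + 1) / 2 := by rw [ht]; field_simp
    rw [this]; nlinarith
  have hx : t • θ ∈ K := (hray' t ht0).2 htρ
  have hxc : T • (t • θ) ∉ closure K := by
    intro hcl
    have i1 : t • θ ∈ interior K := by rw [hK.interior_eq]; exact hx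
    -- choose s' between rho and T t
    set σ := (T * t - ρ) / (T * t - t) with hσ
    have hden : 0 < T * t - t := by linarith
    have hσ0 : 0 < σ := div_pos (by linarith) hden
    have hσ1 : σ ≤ 1 := by rw [hσ, div_le_one hden]; linarith
    have := hc.combo_closure_interior_mem_interior hcl i1 (a := 1 - σ) (b := σ) (by linarith) hσ0 (by ring)
    rw [hK.interior_eq] at this
    have e : (1 - σ) • T • t • θ + σ • t • θ = ρ • θ := by
      have : (1 - σ) * (T * t) + σ * t = ρ := by
        have : σ * (T * t - t) = T * t - ρ := div_mul_cancel₀ _ hden.ne'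
        linarith
      rw [← this]; module
    rw [e, hray' ρ hρ0] at this
    exact lt_irrefl _ this
  set U := (K ∩ ball 0 r') ∩ (fun x => T • x) ⁻¹' (closure K)ᶜ with hU
  have hUo : IsOpen U := (hK.inter isOpen_ball).inter (isClosed_closure.isOpen_compl.preimage (by fun_prop))
  have hUne : U.Nonempty := ⟨t • θ, ⟨hx, by rw [mem_ball_zero_iff]; exact hnorm t ht0 hx⟩, hxc⟩
  have hfin : ∀ r, volume (K ∩ ball 0 r) ≠ ⊤ := fun r => ne_top_of_le_ne_top measure_ball_lt_top.ne (measure_mono inter_subset_right)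
  have hUf : volume U ≠ ⊤ := ne_top_of_le_ne_top (hfin r') (measure_mono inter_subset_left)
  have hUp : 0 < volume.real U := ENNReal.toReal_pos (hUo.measure_pos _ hUne).ne' hUf
  set W := T⁻¹ • (K ∩ ball 0 r1) with hW
  have hWv : volume.real W = volume.real (K ∩ ball 0 r1) / 2 := by
    rw [hW, measureReal_def, Measure.addHaar_smul_of_nonneg _ (by positivity), ENNReal.toReal_mul, ENNReal.toReal_ofReal (by positivity),
      finrank_euclideanSpace_fin, ← measureReal_def, hT, inv_div, div_pow, ← hr]
    have : 0 < r' ^ N := by positivity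
    field_simp
  have hWm : ∀ x ∈ W, T • x ∈ K ∧ ‖x‖ < r' := by
    rintro x ⟨y, hy, rfl⟩
    have hyr : ‖y‖ < r1 := by simpa using hy.2
    simp only
    rw [smul_smul, mul_inv_cancel₀ hT0.ne', one_smul]
    refine ⟨hy.1, ?_⟩
    rw [norm_smul, norm_inv, Real.norm_of_nonneg hT0.le, inv_mul_lt_iff₀ hT0]
    have : T * r' = r1 := by rw [hT]; field_simp
    rw [this]; exact hyr
  have hWK : W ⊆ K ∩ ball 0 r' := by
    intro x hx
    obtain ⟨b1, b2⟩ := hWm x hx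
    refine ⟨?_, by simpa using b2⟩
    have := hst _ b1 T⁻¹ (by positivity) (inv_le_one_of_one_le₀ hT1.le)
    rwa [smul_smul, inv_mul_cancel₀ hT0.ne', one_smul] at this
  have hdisj : Disjoint W U := by
    rw [Set.disjoint_left]
    intro x hx hxU
    exact hxU.2 (subset_closure (hWm x hx).1)
  have hun : volume.real (W ∪ U) = volume.real W + volume.real U :=
    measureReal_union hdisj hUo.measurableSet (ne_top_of_le_ne_top (hfin r') (measure_mono hWK)) hUf
  have hle : volume.real (W ∪ U) ≤ volume.real (K ∩ ball 0 r') :=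
    measureReal_mono (union_subset hWK inter_subset_left) (hfin r')
  linarith

open MeasureTheory Metric Set Real
open scoped ENNReal Pointwise

lemma xscale {N : ℕ} (hN : 2 ≤ N) {p q : ℝ} (hp : 1 < p) (hpq : p ≤ q) (hq : ltCritical N p q)
    {Ω : Set (EuclideanSpace ℝ (Fin N))} (hΩo : IsOpen Ω) (hΩb : Bornology.IsBounded Ω) (hΩne : Ω.Nonempty)
    {θ : ℝ} (h0 : 0 < θ) (h1 : θ < 1) : lambdaPQ p q (θ⁻¹ • Ω) < lambdaPQ p q Ω := by
  have hq0 : 0 < q := by linarith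
  have hγ : 0 < p - N + N * (p / q) := by
    by_cases h : p < N
    · have := hq h
      rw [lt_div_iff₀ (by linarith)] at this
      have e : p - N + N * (p / q) = (N * p - q * (N - p)) / q := by field_simp; ring
      rw [e]; exact div_pos (by linarith) hq0
    · have : (0:ℝ) < N := by have : 0 < N := by omega
                             exact_mod_cast this
      have : 0 < N * (p / q) := by positivity
      linarith
  set c := θ ^ (p - N + N * (p / q)) with hc
  have hc0 : 0 < c := by positivity
  have hc1 : c < 1 := Real.rpow_lt_one h0.le h1 hγ
  have hpos := xlam_pos hN hp hpq hq hΩo hΩb hΩne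
  have key : lambdaPQ p q (θ⁻¹ • Ω) / c ≤ lambdaPQ p q Ω := by
    refine le_csInf (xlam_ne hΩo hΩne) ?_
    rintro R ⟨v, v1, v2, v3, ⟨x, hx, hvx⟩, rfl⟩
    rw [div_le_iff₀ hc0]
    have hsm : θ • θ⁻¹ • Ω = Ω := by rw [smul_smul, mul_inv_cancel₀ h0.ne', one_smul]
    have hint : ∀ g : EuclideanSpace ℝ (Fin N) → ℝ, ∫ x in θ⁻¹ • Ω, g (θ • x) = (θ ^ N)⁻¹ * ∫ x in Ω, g x := by
      intro g
      rw [Measure.setIntegral_comp_smul_of_pos _ _ _ h0, hsm, finrank_euclideanSpace_fin, smul_eq_mul]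
    refine csInf_le ⟨0, ?_⟩ ⟨fun x => v (θ • x), ?_, ?_, ?_, ⟨θ⁻¹ • x, smul_mem_smul_set hx, ?_⟩, ?_⟩
    · rintro R ⟨v, -, -, -, -, rfl⟩
      exact xray_nonneg v
    · exact v1.comp (contDiff_const_smul θ)
    · exact v2.comp_smul h0.ne'
    · have : tsupport (fun x => v (θ • x)) ⊆ (fun x => θ • x) ⁻¹' tsupport v :=
        closure_minimal (fun x hx => subset_tsupport v hx) ((isClosed_tsupport v).preimage (by fun_prop))
      intro y hy
      rw [mem_smul_set_iff_inv_smul_mem₀ (inv_ne_zero h0.ne'), inv_inv]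
      exact v3 (this hy)
    · simp only
      rw [smul_smul, mul_inv_cancel₀ h0.ne', one_smul]; exact hvx
    · unfold rayleighQuot
      have e1 : ∀ x, ‖fderiv ℝ (fun x => v (θ • x)) x‖ ^ p = θ ^ p * ‖fderiv ℝ v (θ • x)‖ ^ p := by
        intro x
        rw [show (fun x => v (θ • x)) = (fun x => v (θ • x)) from rfl, fderiv_comp_smul, norm_smul, Real.norm_of_nonneg h0.le,
          Real.mul_rpow h0.le (norm_nonneg _)]
      simp only [e1]
      rw [hint (fun x => θ ^ p * ‖fderiv ℝ v x‖ ^ p), hint (fun x => |v x| ^ q), integral_const_mul,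
        Real.mul_rpow (by positivity) (integral_nonneg fun x => by positivity)]
      have e2 : c = (θ ^ N)⁻¹ * θ ^ p / ((θ ^ N)⁻¹) ^ (p / q) := by
        rw [hc, ← Real.rpow_natCast, ← Real.rpow_neg h0.le, ← Real.rpow_mul h0.le, ← Real.rpow_add h0, ← Real.rpow_sub h0]
        congr 1; ring
      rw [e2, ← mul_assoc, mul_comm, mul_div_mul_comm]
  rw [div_le_iff₀ hc0] at key
  nlinarith

lemma xeq_of_inner {N : ℕ} {ν w : EuclideanSpace ℝ (Fin N)} {s : ℝ} (hs : 0 ≤ s) (hν : ‖ν‖ = 1) (hw : ‖w‖ ≤ s)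
    (h : s ≤ inner ℝ ν w) : w = s • ν := by
  rw [← sub_eq_zero, ← norm_eq_zero, ← sq_eq_zero_iff]
  refine le_antisymm ?_ (sq_nonneg _)
  rw [@norm_sub_sq_real, inner_smul_right, real_inner_comm, norm_smul, hν, Real.norm_of_nonneg hs]
  have : ‖w‖ ^ 2 ≤ s ^ 2 := by gcongr
  nlinarith

lemma xnormal {N : ℕ} {Ω : Set (EuclideanSpace ℝ (Fin N))} (hΩ : IsOpen Ω) (hc : Convex ℝ Ω) (hne : Ω.Nonempty)
    {y : EuclideanSpace ℝ (Fin N)} (hy : y ∉ Ω) : ∃ ν : EuclideanSpace ℝ (Fin N), ‖ν‖ = 1 ∧ ∀ x ∈ closure Ω, inner ℝ ν x ≤ inner ℝ ν y := by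
  obtain ⟨f, hf⟩ := geometric_hahn_banach_open_point hc hΩ hy
  set u := (InnerProductSpace.toDual ℝ (EuclideanSpace ℝ (Fin N))).symm f with hu
  have hfu : ∀ x, f x = inner ℝ u x := fun x => by rw [hu, InnerProductSpace.toDual_symm_apply]
  have hu0 : u ≠ 0 := by
    intro h0
    obtain ⟨a, ha⟩ := hne
    have := hf a ha
    rw [hfu, hfu, h0] at this
    simp at this
  refine ⟨‖u‖⁻¹ • u, by rw [norm_smul, norm_inv, norm_norm, inv_mul_cancel₀ (norm_ne_zero_iff.2 hu0)], fun x hx => ?_⟩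
  have hcl : closure Ω ⊆ {x | inner ℝ (‖u‖⁻¹ • u) x ≤ inner ℝ (‖u‖⁻¹ • u) y} := by
    refine closure_minimal (fun x hx => ?_) (isClosed_le (by fun_prop) (by fun_prop))
    have := hf x hx
    rw [hfu, hfu] at this
    change inner ℝ (‖u‖⁻¹ • u) x ≤ inner ℝ (‖u‖⁻¹ • u) y
    rw [real_inner_smul_left, real_inner_smul_left]
    gcongr
  exact hcl hx

open MeasureTheory Metric Set Real
open scoped ENNReal Pointwise


lemma xdiam {N : ℕ} {C : Set (EuclideanSpace ℝ (Fin N))} (hC : IsCompact C) (hne : C.Nonempty) :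
    ∃ x0 ∈ C, ∃ x1 ∈ C, ∀ x ∈ C, ∀ y ∈ C, ‖x - y‖ ≤ ‖x0 - x1‖ := by
  obtain ⟨z, hz, hmax⟩ := (hC.prod hC).exists_isMaxOn (hne.prod hne)
    (f := fun z : EuclideanSpace ℝ (Fin N) × EuclideanSpace ℝ (Fin N) => ‖z.1 - z.2‖) (by fun_prop)
  refine ⟨z.1, hz.1, z.2, hz.2, fun x hx y hy => ?_⟩
  exact isMaxOn_iff.1 hmax (x, y) (Set.mk_mem_prod hx hy)

lemma xmain {N : ℕ} (hN : 2 ≤ N) (p q : ℝ) (hp : 1 < p) (hpq : p ≤ q) (hq : ltCritical N p q)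
    (Ω : Set (EuclideanSpace ℝ (Fin N))) (hΩo : IsOpen Ω) (hΩb : Bornology.IsBounded Ω) (hΩc : Convex ℝ Ω)
    (hΩne : Ω.Nonempty) : muPQ p q Ω < lambdaPQ p q Ω := by
  have hN0 : N ≠ 0 := by omega
  have : Nontrivial (EuclideanSpace ℝ (Fin N)) := by
    have : Nonempty (Fin N) := ⟨⟨0, Nat.pos_of_ne_zero hN0⟩⟩
    infer_instance
  set C := closure Ω with hC
  have hCc : IsCompact C := hΩb.isCompact_closure
  have hCne : C.Nonempty := hΩne.closure
  obtain ⟨x0, hx0, x1, hx1, hmax⟩ := xdiam hCc hCne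
  set d := ‖x0 - x1‖ with hd
  have hdm : ∀ x ∈ C, ∀ y ∈ C, ‖x - y‖ ≤ d := hmax
  have hVf : volume Ω ≠ ⊤ := hΩb.measure_lt_top.ne
  set V := volume.real Ω with hV
  have hVo : volume Ω = ENNReal.ofReal V := by rw [hV, measureReal_def, ENNReal.ofReal_toReal hVf]
  have hV0 : 0 < V := ENNReal.toReal_pos (hΩo.measure_pos _ hΩne).ne' hVf
  have hd0' : 0 ≤ d := norm_nonneg _
  have hom := xom_pos N
  set M := C + -C with hM
  have hMc : IsCompact M := hCc.add hCc.neg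
  have hMs : M ⊆ closedBall 0 d := by
    rintro _ ⟨x, hx, y, hy, rfl⟩
    rw [mem_closedBall_zero_iff]
    have := hdm x hx (-y) hy
    rwa [sub_neg_eq_add] at this
  set a := V ^ ((N:ℝ)⁻¹) with ha
  have ha0 : 0 ≤ a := by positivity
  have haN : a ^ N = V := Real.rpow_inv_natCast_pow hV0.le hN0
  have hVC : ENNReal.ofReal (a ^ N) ≤ volume C := by rw [haN, ← hVo]; exact measure_mono subset_closure
  have hBM := xbm C (-C) hCc.measurableSet hCc.neg.measurableSet hMc.measurableSet a a ha0 ha0 hCne hCne.neg hVC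
    (by rwa [Measure.measure_neg])
  have e2 : (a + a) ^ N = 2 ^ N * V := by rw [← two_mul, mul_pow, haN]
  rw [e2] at hBM
  have hVle : 2 ^ N * V ≤ xom N * d ^ N := by
    have := hBM.trans (measure_mono hMs)
    rw [xvol_cball hN0 _ hd0'] at this
    exact (ENNReal.ofReal_le_ofReal_iff (by positivity)).1 this
  have hd0 : 0 < d := by
    rcases hd0'.eq_or_lt with h | h
    · rw [← h, zero_pow hN0, mul_zero] at hVle
      have : 0 < 2 ^ N * V := by positivity
      linarith
    · exact h
  have eW : 2 ^ N * (xom N * (d / 2) ^ N) = xom N * d ^ N := by rw [div_pow]; field_simp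
  set W := xom N * (d / 2) ^ N with hW
  have hW0 : 0 < W := by positivity
  have h2N : (0:ℝ) < 2 ^ N := by positivity
  have hVW : V ≤ W := by
    rw [← eW] at hVle
    exact le_of_mul_le_mul_left hVle h2N
  have hcl : ∀ y ∈ C, ∀ x ∈ Ω, ‖x - y‖ ≤ d := fun y hy x hx => hdm x (subset_closure hx) y hy
  rcases hVW.lt_or_eq with hlt | heq
  · set θ := (V / W) ^ ((N:ℝ)⁻¹) with hθ
    have hVW0 : 0 < V / W := by positivity
    have hθ0 : 0 < θ := by positivity
    have hθN : θ ^ N = V / W := Real.rpow_inv_natCast_pow hVW0.le hN0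
    have hθ1 : θ < 1 := Real.rpow_lt_one hVW0.le ((div_lt_one hW0).2 hlt) (by positivity)
    have hvol : volume (θ⁻¹ • Ω) ≤ ENNReal.ofReal W := by
      rw [Measure.addHaar_smul_of_nonneg _ (by positivity), finrank_euclideanSpace_fin, hVo, ← ENNReal.ofReal_mul (by positivity)]
      apply le_of_eq
      congr 1
      rw [inv_pow, hθN]; field_simp
    have h1 := (xfin hN hp hpq hq hΩo hΩb hΩc (hΩo.smul₀ (inv_ne_zero hθ0.ne')) (hΩb.smul₀ _) hΩne.smul_set hvol
      hx0 hx1 hd.symm (hcl _ hx0) (hcl _ hx1)).1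
    exact h1.trans_lt (xscale hN hp hpq hq hΩo hΩb hΩne hθ0 hθ1)
  · -- equality case
    have hMb : closedBall 0 d ⊆ M := by
      rw [← closure_ball _ hd0.ne']
      refine closure_minimal ?_ hMc.isClosed
      by_contra hcon
      obtain ⟨x, hxb, hxM⟩ := Set.not_subset.1 hcon
      have hUo : IsOpen (ball 0 d ∩ Mᶜ) := isOpen_ball.inter hMc.isClosed.isOpen_compl
      have hUp := hUo.measure_pos volume ⟨x, hxb, hxM⟩
      have hun : volume M + volume (ball 0 d ∩ Mᶜ) ≤ volume (closedBall (0 : EuclideanSpace ℝ (Fin N)) d) := by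
        rw [← measure_union (Set.disjoint_left.2 fun z hz hz' => hz'.2 hz) hUo.measurableSet]
        exact measure_mono (union_subset hMs (inter_subset_left.trans ball_subset_closedBall))
      rw [xvol_cball hN0 _ hd0', ← eW, ← heq] at hun
      have h3 := (add_le_add_left hBM _).trans hun
      have h4 : ENNReal.ofReal (2 ^ N * V) < ENNReal.ofReal (2 ^ N * V) + volume (ball 0 d ∩ Mᶜ) :=
        ENNReal.lt_add_right ENNReal.ofReal_ne_top hUp.ne'
      exact absurd h3 (not_le.2 h4)
    obtain ⟨z, hz⟩ := hΩne
    have hcne : (Ωᶜ).Nonempty := by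
      rw [Set.nonempty_compl]
      intro h
      rw [h] at hΩb
      exact NormedSpace.unbounded_univ ℝ (EuclideanSpace ℝ (Fin N)) hΩb
    obtain ⟨y, hy, hyd⟩ := hΩo.isClosed_compl.exists_infDist_eq_dist hcne z
    set s := dist z y with hs
    have hs0 : 0 < s := dist_pos.2 fun h => hy (h ▸ hz)
    have hball : ball z s ⊆ Ω := by
      intro x hx
      by_contra hxn
      have := infDist_le_dist_of_mem (x := z) (show x ∈ Ωᶜ from hxn)
      rw [hyd, dist_comm] at this
      exact absurd hx (not_lt.2 this)
    have hbc : closedBall z s ⊆ C := by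
      rw [← closure_ball _ hs0.ne']; exact closure_mono hball
    have hyC : y ∈ C := hbc (by rw [mem_closedBall, dist_comm])
    obtain ⟨ν, hν, hνy⟩ := xnormal hΩo hΩc ⟨z, hz⟩ hy
    have hνν : inner ℝ ν ν = (1:ℝ) := by rw [real_inner_self_eq_norm_sq, hν]; norm_num
    have hyz : y - z = s • ν := by
      refine xeq_of_inner hs0.le hν (by rw [← dist_eq_norm, dist_comm]) ?_
      have := hνy (z + s • ν) (hbc (by
        rw [mem_closedBall, dist_eq_norm, add_sub_cancel_left, norm_smul, hν, mul_one, Real.norm_of_nonneg hs0.le]))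
      rw [inner_add_right, inner_smul_right, hνν] at this
      rw [inner_sub_right]; linarith
    obtain ⟨a', ha', b', hb', hab⟩ := hMb (show d • ν ∈ closedBall 0 d by
      rw [mem_closedBall_zero_iff, norm_smul, hν, mul_one, Real.norm_of_nonneg hd0'])
    have hb'' : -b' ∈ C := hb'
    have hyb : y - -b' = d • ν := by
      refine xeq_of_inner hd0' hν (hdm y hyC _ hb'') ?_
      have h1 := hνy a' ha'
      have h2 : inner ℝ ν (a' + b') = d := by
        simp only at hab
        rw [hab, inner_smul_right, hνν, mul_one]
      rw [inner_add_right] at h2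
      rw [sub_neg_eq_add, inner_add_right]; linarith
    refine (xfin hN hp hpq hq hΩo hΩb hΩc hΩo hΩb ⟨z, hz⟩ (by rw [hVo]; exact ENNReal.ofReal_le_ofReal hVW)
      hyC hb'' (d := d) (by rw [hyb, norm_smul, hν, mul_one, Real.norm_of_nonneg hd0']) (hcl _ hyC) (hcl _ hb'')).2 ?_
    intro r' r1 hr' hrr hr
    refine xnoncone hN (hΩo.preimage (by fun_prop)) ?_ (xstarK hΩo hΩc hyC) hν hs0 hd0 ?_ ?_ hr' hrr hr
    · exact hΩc.translate_preimage_left y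
    · intro x hx
      apply hball
      rw [mem_ball, dist_eq_norm] at hx ⊢
      have : x + y - z = x - -(s • ν) := by rw [← hyz]; abel
      rw [this]; exact hx
    · intro x hx
      rw [mem_closedBall, dist_eq_norm]
      have h1 := hcl _ hb'' _ hx
      have : x + y - -b' = x - -(d • ν) := by rw [← hyb]; abel
      rw [← this]; exact h1

/-- Proposition 5.1, inequality (5.1). Let `1 < p ≤ q < p*`. For every
open bounded convex set `Ω ⊂ ℝ^N`, `μ_{p,q}(Ω) < λ_{p,q}(Ω)`. -/
theorem muPQ_lt_lambdaPQ {N : ℕ} (hN : 2 ≤ N) (p q : ℝ) (hp : 1 < p) (hpq : p ≤ q)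
    (hq : ltCritical N p q)
    (Ω : Set (EuclideanSpace ℝ (Fin N))) (hΩo : IsOpen Ω)
    (hΩb : Bornology.IsBounded Ω) (hΩc : Convex ℝ Ω) (hΩne : Ω.Nonempty) :
    muPQ p q Ω < lambdaPQ p q Ω := by
  exact xmain hN p q hp hpq hq Ω hΩo hΩb hΩc hΩne
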